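/- arXiv:2509.03197 — 2 statements merged into one kernel-verified Lean document; each statement's English description precedes it below -/
import Mathlib

section
/- For all σ, t ∈ ℝ and every ε > 0 there is a constant C > 0 such that for all X ≥ 2: Σ_{1 ≤ d ≤ X, d odd squarefree} |L(σ+it, χ_{8d})| ≤ C·X^{max(1, 3/2−σ)+ε}. -/
open Complex

lemma s4_exists_nonres (p : ℕ) (hp : p.Prime) (h2 : p ≠ 2) : ∃ a : ℕ, jacobiSym a p = -1 := by
  have : Fact p.Prime := ⟨hp⟩
  obtain ⟨a, ha⟩ := FiniteField.exists_nonsquare (F := ZMod p) (by rwa [ZMod.ringChar_zmod_n])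
  refine ⟨a.val, ?_⟩
  have := ZMod.nonsquare_iff_jacobiSym_eq_neg_one (a := (a.val : ℤ)) (p := p)
  exact this.mpr (by simpa using ha)

lemma s4_jac_modEq {a b n : ℕ} (h : a ≡ b [MOD n]) : jacobiSym a n = jacobiSym b n := by
  apply jacobiSym.mod_left'
  exact_mod_cast h

lemma s4_exists_neg_one (k : ℕ) (hk : Odd k) (hsq : ¬ IsSquare k) : ∃ a : ℕ, jacobiSym a k = -1 := by
  have hk0 : k ≠ 0 := by rintro rfl; simp at hk
  have : ∃ p, p.Prime ∧ Odd (k.factorization p) := by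
    by_contra! h
    apply hsq
    have h' : ∀ p, Even (k.factorization p) := by
      intro p
      by_cases hp : p.Prime
      · exact Nat.not_odd_iff_even.mp (h p hp)
      · simp [Nat.factorization_eq_zero_of_not_prime _ hp]
    rw [← Nat.prod_factorization_pow_eq_self hk0, Finsupp.prod]
    refine Finset.isSquare_prod _ ?_
    intro p hp
    exact (h' p).isSquare_pow p
  obtain ⟨p, hp, hodd⟩ := this
  have hpk : p ∣ k := by
    by_contra h
    rw [Nat.factorization_eq_zero_of_not_dvd h] at hodd
    simp at hodd
  have h2 : p ≠ 2 := by
    rintro rfl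
    rw [← Nat.not_even_iff_odd] at hk
    exact hk (even_iff_two_dvd.mpr hpk)
  obtain ⟨a, ha⟩ := s4_exists_nonres p hp h2
  have hco : Nat.Coprime p (ordCompl[p] k) := Nat.coprime_ordCompl hp hk0
  obtain ⟨x, hx1, hx2⟩ := Nat.chineseRemainder hco a 1
  refine ⟨x, ?_⟩
  have hm0 : ordCompl[p] k ≠ 0 := (Nat.ordCompl_pos p hk0).ne'
  rw [← Nat.ordProj_mul_ordCompl_eq_self k p, jacobiSym.mul_right' _ (pow_ne_zero _ hp.ne_zero) hm0,
    jacobiSym.pow_right, s4_jac_modEq hx1, s4_jac_modEq hx2, ha, hodd.neg_one_pow]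
  simp

lemma s4_sum_jac (k : ℕ) [NeZero k] (hk : Odd k) (hsq : ¬ IsSquare k) :
    ∑ r : Fin k, (jacobiSym (r : ℕ) k) = 0 := by
  obtain ⟨a, ha⟩ := s4_exists_neg_one k hk hsq
  have hco : Nat.Coprime a k := by
    by_contra h
    have := (jacobiSym.eq_zero_iff_not_coprime (a := (a : ℤ)) (b := k)).mpr (by simpa using h)
    omega
  have e1 : ∑ r : Fin k, (jacobiSym (r : ℕ) k) = ∑ x : ZMod k, jacobiSym (x.val : ℕ) k := by
    obtain ⟨m, rfl⟩ := Nat.exists_eq_succ_of_ne_zero (NeZero.ne k)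
    rfl
  rw [e1]
  have e2 : ∑ x : ZMod k, jacobiSym (x.val : ℕ) k
      = ∑ x : ZMod k, jacobiSym ((((ZMod.unitOfCoprime a hco : (ZMod k)ˣ) : ZMod k) * x).val : ℕ) k :=
    (Equiv.sum_comp (Units.mulLeft (ZMod.unitOfCoprime a hco)) (fun x : ZMod k => jacobiSym (x.val : ℕ) k)).symm
  have e3 : ∀ x : ZMod k, jacobiSym ((((ZMod.unitOfCoprime a hco : (ZMod k)ˣ) : ZMod k) * x).val : ℕ) k
      = - jacobiSym (x.val : ℕ) k := by
    intro x
    have : (((ZMod.unitOfCoprime a hco : (ZMod k)ˣ) : ZMod k) * x).val ≡ a * x.val [MOD k] := by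
      rw [← ZMod.natCast_eq_natCast_iff]
      simp
    rw [s4_jac_modEq this]
    push_cast
    rw [jacobiSym.mul_left, ha]; ring
  rw [Finset.sum_congr rfl (fun x _ => e3 x), Finset.sum_neg_distrib] at e2
  omega

lemma s4_jac_eight (n : ℕ) (hn : Odd n) (a : ℤ) :
    jacobiSym (8 * a) n = ZMod.χ₈ n * jacobiSym a n := by
  rw [show (8 * a : ℤ) = 4 * (2 * a) by ring, jacobiSym.mul_left, jacobiSym.mul_left,
    jacobiSym.at_four hn, jacobiSym.at_two hn, one_mul]

section
variable {d : ℕ} (hd : Odd d) (hsq : Squarefree d) (ψ : DirichletCharacter ℂ (8 * d))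
  (h1 : ∀ n : ℕ, Odd n → ψ (n : ZMod (8 * d)) = ((jacobiSym (8 * d) n : ℤ) : ℂ))
  (h2 : ∀ n : ℕ, Even n → ψ (n : ZMod (8 * d)) = 0)
include hd h1 

lemma s4_even : ψ.Even := by
  have hd0 : 0 < d := hd.pos
  have hodd : Odd (8 * d - 1) := ⟨4 * d - 1, by omega⟩
  have := h1 (8 * d - 1) hodd
  have e : ((8 * d - 1 : ℕ) : ZMod (8 * d)) = -1 := by
    rw [Nat.cast_sub (by omega)]
    simp
  rw [e] at this
  rw [DirichletCharacter.Even, this]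
  have e2 : jacobiSym (8 * d) (8 * d - 1) = jacobiSym 1 (8 * d - 1) := by
    apply jacobiSym.mod_left'
    have : ((8 * d - 1 : ℕ) : ℤ) = 8 * d - 1 := by omega
    rw [this]
    apply Int.ModEq.symm
    rw [Int.modEq_iff_dvd]
  rw [e2]; simp

include h2 in
lemma s4_real (x : ZMod (8 * d)) : ψ x = 0 ∨ ψ x = 1 ∨ ψ x = -1 := by
  have : NeZero (8 * d) := ⟨by have := hd.pos; omega⟩
  have e : x = ((x.val : ℕ) : ZMod (8 * d)) := by simp
  rw [e]
  rcases Nat.even_or_odd x.val with h | h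
  · exact Or.inl (h2 _ h)
  · rw [h1 _ h]
    rcases jacobiSym.trichotomy (8 * d) x.val with h | h | h <;> rw [h] <;> simp

include hsq in
lemma s4_exists_neg (p : ℕ) (hp : p.Prime) (hpd : p ∣ 8 * d) :
    ∃ n : ℕ, Nat.Coprime n (8 * d) ∧ (8 * d / p ∣ n - 1) ∧ 1 ≤ n ∧ ψ n = -1 := by
  by_cases hp2 : p = 2
  · subst hp2
    have hco : Nat.Coprime d 8 := by
      have : Nat.Coprime d (2 ^ 3) := Nat.Coprime.pow_right 3 (Nat.coprime_two_right.mpr hd)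
      simpa using this
    obtain ⟨n, hn1, hn2⟩ := Nat.chineseRemainder hco 1 5
    have hn8 : n % 8 = 5 := hn2
    have hodd : Odd n := Nat.odd_iff.mpr (by omega)
    have hn0 : 1 ≤ n := by omega
    refine ⟨n, ?_, ?_, hn0, ?_⟩
    · apply Nat.Coprime.mul_right
      · have : Nat.Coprime n (2 ^ 3) := Nat.Coprime.pow_right 3 (Nat.coprime_two_right.mpr hodd)
        simpa using this
      · have := hn1.gcd_eq; simpa [Nat.Coprime] using this
    · have hdv : d ∣ n - 1 := (Nat.modEq_iff_dvd' hn0).mp hn1.symm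
      have h4 : 4 ∣ n - 1 := by omega
      have := Nat.Coprime.mul_dvd_of_dvd_of_dvd (m := 4) (n := d) (a := n - 1) (by
        have : Nat.Coprime (2 ^ 2) d := Nat.Coprime.pow_left 2 (Nat.coprime_two_left.mpr hd)
        simpa using this) h4 hdv
      rwa [show 8 * d / 2 = 4 * d by omega]
    · rw [h1 n hodd, s4_jac_eight n hodd, jacobiSym.quadratic_reciprocity_one_mod_four' hd (by omega),
        s4_jac_modEq hn1, ZMod.χ₈_nat_eq_if_mod_eight]
      simp [hn8, show n % 2 = 1 by omega]
  · have hpd' : p ∣ d := by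
      rcases (Nat.Prime.dvd_mul hp).mp hpd with h | h
      · exact absurd ((Nat.prime_dvd_prime_iff_eq hp Nat.prime_two).mp
          (hp.dvd_of_dvd_pow (show p ∣ 2 ^ 3 by simpa using h))) hp2
      · exact h
    obtain ⟨m, rfl⟩ := hpd'
    obtain ⟨a, ha⟩ := s4_exists_nonres p hp hp2
    have hpm : Nat.Coprime p m := Nat.coprime_of_squarefree_mul hsq
    have hp8 : Nat.Coprime p 8 := by
      have : Nat.Coprime p (2 ^ 3) := Nat.Coprime.pow_right 3 ((Nat.coprime_primes hp Nat.prime_two).mpr hp2)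
      simpa using this
    obtain ⟨n, hn1, hn2⟩ := Nat.chineseRemainder (Nat.Coprime.mul_right hp8 hpm) a 1
    have hn8 : n ≡ 1 [MOD 8] := hn2.of_mul_right m
    have hnm : n ≡ 1 [MOD m] := hn2.of_mul_left 8
    have hn8' : n % 8 = 1 := hn8
    have hodd : Odd n := Nat.odd_iff.mpr (by omega)
    have hn0 : 1 ≤ n := by omega
    have hm0 : m ≠ 0 := by rintro rfl; simp at hsq
    have hJ : jacobiSym n (p * m) = -1 := by
      rw [jacobiSym.mul_right' _ hp.ne_zero hm0, s4_jac_modEq hn1, s4_jac_modEq hnm, ha]; simp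
    refine ⟨n, ?_, ?_, hn0, ?_⟩
    · apply Nat.Coprime.mul_right
      · have : Nat.Coprime n (2 ^ 3) := Nat.Coprime.pow_right 3 (Nat.coprime_two_right.mpr hodd)
        simpa using this
      · by_contra h
        have : NeZero (p * m) := ⟨mul_ne_zero hp.ne_zero hm0⟩
        have := (jacobiSym.eq_zero_iff_not_coprime (a := (n : ℤ)) (b := p * m)).mpr (by rwa [Int.gcd_natCast_natCast])
        omega
    · have hdv := (Nat.modEq_iff_dvd' hn0).mp hn2.symm
      rwa [show 8 * (p * m) = p * (8 * m) by ring, Nat.mul_div_cancel_left _ hp.pos]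
    · rw [h1 n hodd, s4_jac_eight n hodd, jacobiSym.quadratic_reciprocity_one_mod_four' hd (by omega),
        hJ, ZMod.χ₈_nat_eq_if_mod_eight]
      simp [hn8', show n % 2 = 1 by omega]

include hsq in
lemma s4_primitive : ψ.IsPrimitive := by
  by_contra hne
  have : NeZero (8 * d) := ⟨by have := hd.pos; omega⟩
  have hft := ψ.factorsThrough_conductor
  obtain ⟨e, he⟩ := hft.dvd
  have he1 : e ≠ 1 := by
    rintro rfl
    apply hne
    rw [DirichletCharacter.isPrimitive_def]; omega
  obtain ⟨p, hp, hpe⟩ := Nat.exists_prime_and_dvd he1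
  obtain ⟨n, hn, hdvd, hn1, hval⟩ := s4_exists_neg hd hsq ψ h1 p hp (he ▸ hpe.mul_left _)
  have hc : ψ.conductor ∣ 8 * d / p := by
    obtain ⟨f, rfl⟩ := hpe
    have he' := congrArg (· / p) he
    rw [he', show ψ.conductor * (p * f) = p * (ψ.conductor * f) by ring, Nat.mul_div_cancel_left _ hp.pos]
    exact dvd_mul_right _ _
  have hval' : ψ n = 1 := by
    have := hft.eq_changeLevel
    have h3 := DirichletCharacter.changeLevel_eq_cast_of_dvd' hft.χ₀ hft.dvd (a := (n : ℤ))
      (by exact_mod_cast Nat.isCoprime_iff_coprime.mpr hn)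
    rw [← this] at h3
    have h4 : ((n : ℕ) : ZMod ψ.conductor) = ((1 : ℕ) : ZMod ψ.conductor) := by
      rw [ZMod.natCast_eq_natCast_iff]
      exact ((Nat.modEq_iff_dvd' hn1).mpr (hc.trans hdvd)).symm
    simp only [Int.cast_natCast] at h3
    rw [h3, h4]; simp
  rw [hval] at hval'
  norm_num at hval'

end
lemma s4_exp_bound (B : ℝ) (hB : 0 ≤ B) : ∃ C : ℝ, 0 < C ∧ ∀ u : ℝ, 0 < u → Real.exp (-u) ≤ C * u ^ (-B) := by
  refine ⟨1 + (⌈B⌉₊).factorial, by positivity, fun u hu => ?_⟩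
  have h1 : u ^ B ≤ 1 + u ^ (⌈B⌉₊) := by
    rcases le_total u 1 with h | h
    · have : u ^ B ≤ 1 := Real.rpow_le_one hu.le h hB
      have : 0 ≤ u ^ (⌈B⌉₊) := by positivity
      linarith
    · have : u ^ B ≤ u ^ ((⌈B⌉₊ : ℕ) : ℝ) := Real.rpow_le_rpow_of_exponent_le h (Nat.le_ceil B)
      rw [Real.rpow_natCast] at this
      linarith
  have h2 := Real.pow_div_factorial_le_exp u hu.le (⌈B⌉₊)
  have h3 : (1:ℝ) ≤ Real.exp u := Real.one_le_exp hu.le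
  rw [Real.exp_neg, Real.rpow_neg hu.le, ← div_eq_mul_inv, le_div_iff₀ (by positivity), inv_mul_le_iff₀ (Real.exp_pos u)]
  rw [div_le_iff₀ (by positivity)] at h2
  linarith

lemma s4_cosKernel_bound (A : ℕ) (hA : 1 ≤ A) : ∃ C : ℝ, 0 < C ∧ ∀ a x : ℝ, 0 < x →
    |HurwitzZeta.cosKernel a x - 1| ≤ C * (x ^ A)⁻¹ := by
  obtain ⟨C, hC, h⟩ := s4_exp_bound A (by positivity)
  have hs0 : Summable (fun n : ℕ => 1 / ((n : ℝ)) ^ 2) := Real.summable_one_div_nat_pow.mpr one_lt_two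
  have hs : Summable (fun n : ℕ => 1 / ((n : ℝ) + 1) ^ 2) := by
    have := (summable_nat_add_iff 1).mpr hs0
    simpa using this
  set S := ∑' n : ℕ, 1 / ((n : ℝ) + 1) ^ 2 with hS
  have hS0 : 0 ≤ S := tsum_nonneg fun n => by positivity
  refine ⟨2 * C * (S + 1), by positivity, fun a x hx => ?_⟩
  have hk := HurwitzZeta.hasSum_nat_cosKernel₀ a hx
  have hb : ∀ n : ℕ, ‖2 * Real.cos (2 * Real.pi * a * (n + 1)) * Real.exp (-Real.pi * (n + 1) ^ 2 * x)‖
      ≤ (2 * C * (x ^ A)⁻¹) * (1 / ((n : ℝ) + 1) ^ 2) := by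
    intro n
    have hu : 0 < ((n : ℝ) + 1) ^ 2 * x := by positivity
    have h1 : Real.exp (-Real.pi * (n + 1) ^ 2 * x) ≤ Real.exp (-(((n : ℝ) + 1) ^ 2 * x)) := by
      apply Real.exp_le_exp.mpr
      have := Real.pi_gt_three
      nlinarith
    have h2 := h _ hu
    rw [Real.rpow_neg hu.le, Real.rpow_natCast, mul_pow, mul_inv] at h2
    have h3 : ((((n : ℝ) + 1) ^ 2) ^ A)⁻¹ ≤ 1 / ((n : ℝ) + 1) ^ 2 := by
      rw [one_div]
      apply inv_anti₀ (by positivity)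
      exact le_self_pow₀ (by nlinarith [(Nat.cast_nonneg n : (0:ℝ) ≤ n)]) (by omega)
    rw [norm_mul, norm_mul, Real.norm_eq_abs, Real.norm_eq_abs, Real.norm_eq_abs, Real.abs_exp, abs_two]
    have h4 := Real.abs_cos_le_one (2 * Real.pi * a * (n + 1))
    calc 2 * |Real.cos (2 * Real.pi * a * (n + 1))| * Real.exp (-Real.pi * (n + 1) ^ 2 * x)
        ≤ 2 * 1 * (C * (((((n : ℝ) + 1) ^ 2) ^ A)⁻¹ * (x ^ A)⁻¹)) := by
          gcongr; exact h1.trans h2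
      _ ≤ 2 * 1 * (C * (1 / ((n : ℝ) + 1) ^ 2 * (x ^ A)⁻¹)) := by gcongr
      _ = _ := by ring
  have := tsum_of_norm_bounded (hs.hasSum.mul_left (2 * C * (x ^ A)⁻¹)) hb
  rw [hk.tsum_eq, Real.norm_eq_abs] at this
  refine this.trans ?_
  have hx' : 0 ≤ (x ^ A)⁻¹ := by positivity
  nlinarith [mul_nonneg hC.le hx']

lemma s4_gauss_summable (Z : ℝ) (hZ : 0 < Z) : HasSum (fun d : ℤ => Real.exp (-Real.pi * (d / Z) ^ 2))
    (Z * HurwitzZeta.cosKernel 0 (Z ^ 2)) := by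
  have h := HurwitzZeta.hasSum_int_evenKernel 0 (t := 1 / Z ^ 2) (by positivity)
  have e := HurwitzZeta.evenKernel_functional_equation 0 (1 / Z ^ 2)
  simp only [AddCircle.coe_zero] at h
  rw [e, one_div_one_div, ← Real.sqrt_eq_rpow, Real.sqrt_div zero_le_one, Real.sqrt_sq hZ.le, Real.sqrt_one, one_div_one_div] at h
  refine h.congr_fun fun d => ?_
  congr 1
  field_simp
  ring

lemma s4_poisson (A : ℕ) (hA : 1 ≤ A) : ∃ C : ℝ, 0 < C ∧ ∀ (Z : ℝ) (k : ℕ), 0 < Z → Odd k → ¬ IsSquare k →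
    |∑' d : ℤ, Real.exp (-Real.pi * (d / Z) ^ 2) * (jacobiSym d k : ℝ)| ≤ C * Z * ((k / Z) ^ (2 * A)) := by
  obtain ⟨C, hC, h⟩ := s4_cosKernel_bound A hA
  refine ⟨C, hC, fun Z k hZ hk hsq => ?_⟩
  have hk0 : 0 < k := hk.pos
  have : NeZero k := ⟨hk0.ne'⟩
  have hkR : (0 : ℝ) < k := by exact_mod_cast hk0
  have hsum : Summable (fun d : ℤ => Real.exp (-Real.pi * (d / Z) ^ 2) * (jacobiSym d k : ℝ)) := by
    refine Summable.of_norm_bounded (s4_gauss_summable Z hZ).summable fun d => ?_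
    rw [norm_mul, Real.norm_eq_abs, Real.abs_exp]
    have : ‖(jacobiSym d k : ℝ)‖ ≤ 1 := by
      rcases jacobiSym.trichotomy d k with h | h | h <;> rw [h] <;> simp
    exact mul_le_of_le_one_right (Real.exp_pos _).le this
  set F := (fun d : ℤ => Real.exp (-Real.pi * (d / Z) ^ 2) * (jacobiSym d k : ℝ)) with hF
  have hin : ∀ r : Fin k, HasSum (fun j : ℤ => F (j * k + (r : ℕ)))
      (Z / k * HurwitzZeta.cosKernel ((r : ℝ) / k : ℝ) (Z ^ 2 / k ^ 2) * (jacobiSym (r : ℕ) k : ℝ)) := by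
    intro r
    have h := HurwitzZeta.hasSum_int_evenKernel ((r : ℝ) / k) (t := k ^ 2 / Z ^ 2) (by positivity)
    rw [HurwitzZeta.evenKernel_functional_equation, one_div_div, ← Real.sqrt_eq_rpow,
      Real.sqrt_div (by positivity), Real.sqrt_sq hZ.le, Real.sqrt_sq hkR.le, one_div_div] at h
    refine (h.mul_right _).congr_fun fun j => ?_
    simp only [hF]
    congr 1
    · congr 1
      push_cast
      field_simp
    · congr 1
      apply jacobiSym.mod_left'
      simp
  have h1 : ∑' d : ℤ, F d = ∑ r : Fin k, (Z / k * HurwitzZeta.cosKernel ((r : ℝ) / k : ℝ) (Z ^ 2 / k ^ 2) * (jacobiSym (r : ℕ) k : ℝ)) := by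
    have e := (((Equiv.prodComm _ _).trans (Int.divModEquiv k).symm)).hasSum_iff.mpr hsum.hasSum
    have := e.prod_fiberwise (g := fun r : Fin k => (Z / k * HurwitzZeta.cosKernel ((r : ℝ) / k : ℝ) (Z ^ 2 / k ^ 2) * (jacobiSym (r : ℕ) k : ℝ))) (fun r => by
      simpa using hin r)
    rw [← this.tsum_eq, tsum_fintype]
  rw [h1]
  have h2 : ∑ r : Fin k, (Z / k * HurwitzZeta.cosKernel ((r : ℝ) / k : ℝ) (Z ^ 2 / k ^ 2) * (jacobiSym (r : ℕ) k : ℝ))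
     = ∑ r : Fin k, (Z / k * (HurwitzZeta.cosKernel ((r : ℝ) / k : ℝ) (Z ^ 2 / k ^ 2) - 1) * (jacobiSym (r : ℕ) k : ℝ)) := by
    have h0 : (∑ r : Fin k, (jacobiSym (r : ℕ) k : ℝ)) = 0 := by exact_mod_cast s4_sum_jac k hk hsq
    rw [← sub_eq_zero, ← Finset.sum_sub_distrib]
    have : ∀ r : Fin k, Z / k * HurwitzZeta.cosKernel ((r : ℝ) / k : ℝ) (Z ^ 2 / k ^ 2) * (jacobiSym (r : ℕ) k : ℝ) - Z / k * (HurwitzZeta.cosKernel ((r : ℝ) / k : ℝ) (Z ^ 2 / k ^ 2) - 1) * (jacobiSym (r : ℕ) k : ℝ) = Z / k * (jacobiSym (r : ℕ) k : ℝ) := fun r => by ring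
    rw [Finset.sum_congr rfl (fun r _ => this r), ← Finset.mul_sum, h0, mul_zero]
  rw [h2]
  have h3 : ∀ r : Fin k, |Z / k * (HurwitzZeta.cosKernel ((r : ℝ) / k : ℝ) (Z ^ 2 / k ^ 2) - 1) * (jacobiSym (r : ℕ) k : ℝ)|
      ≤ Z / k * (C * ((k / Z) ^ (2 * A))) := by
    intro r
    have hj : |(jacobiSym (r : ℕ) k : ℝ)| ≤ 1 := by
      rcases jacobiSym.trichotomy (r : ℕ) k with h | h | h <;> rw [h] <;> simp
    have hh := h ((r : ℝ) / k) (Z ^ 2 / k ^ 2) (by positivity)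
    rw [show (((Z ^ 2 / (k : ℝ) ^ 2) ^ A)⁻¹ : ℝ) = (k / Z) ^ (2 * A) by
      rw [pow_mul, ← inv_pow, div_pow, inv_div]] at hh
    rw [abs_mul, abs_mul, abs_of_pos (show 0 < Z / k by positivity)]
    calc _ ≤ Z / k * (C * ((k / Z) ^ (2 * A))) * 1 := by gcongr
      _ = _ := by ring
  calc _ ≤ ∑ r : Fin k, Z / k * (C * ((k / Z) ^ (2 * A))) := (Finset.abs_sum_le_sum_abs _ _).trans (Finset.sum_le_sum fun r _ => h3 r)
    _ = _ := by
      rw [Finset.sum_const, Finset.card_univ, Fintype.card_fin, nsmul_eq_mul]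
      field_simp
lemma s4_abs_jac (d : ℤ) (k : ℕ) : |(jacobiSym d k : ℝ)| ≤ 1 := by
  rcases jacobiSym.trichotomy d k with h | h | h <;> rw [h] <;> simp

lemma s4_summable_jac (Z : ℝ) (hZ : 0 < Z) (k : ℕ) :
    Summable (fun d : ℤ => Real.exp (-Real.pi * (d / Z) ^ 2) * (jacobiSym d k : ℝ)) := by
  refine Summable.of_norm_bounded (s4_gauss_summable Z hZ).summable fun d => ?_
  rw [norm_mul, Real.norm_eq_abs, Real.abs_exp, Real.norm_eq_abs]
  exact mul_le_of_le_one_right (Real.exp_pos _).le (s4_abs_jac d k)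

lemma s4_poisson' (A : ℕ) (hA : 1 ≤ A) : ∃ C : ℝ, 0 < C ∧ ∀ (Z : ℝ) (k : ℕ), 1 ≤ Z → Odd k →
    |∑' d : ℤ, Real.exp (-Real.pi * (d / Z) ^ 2) * (jacobiSym d k : ℝ)|
      ≤ C * Z * ((if IsSquare k then 1 else 0) + (k / Z) ^ (2 * A)) := by
  obtain ⟨C, hC, h⟩ := s4_poisson A hA
  obtain ⟨C', hC', h'⟩ := s4_cosKernel_bound 1 le_rfl
  refine ⟨C + (C' + 1), by positivity, fun Z k hZ hk => ?_⟩
  have hZ0 : 0 < Z := by linarith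
  have hp : 0 ≤ (k / Z : ℝ) ^ (2 * A) := by positivity
  split_ifs with hs
  · have hg := s4_gauss_summable Z hZ0
    have h1 : |∑' d : ℤ, Real.exp (-Real.pi * (d / Z) ^ 2) * (jacobiSym d k : ℝ)| ≤ Z * HurwitzZeta.cosKernel 0 (Z ^ 2) := by
      rw [← Real.norm_eq_abs]
      refine tsum_of_norm_bounded hg fun d => ?_
      rw [norm_mul, Real.norm_eq_abs, Real.abs_exp, Real.norm_eq_abs]
      exact mul_le_of_le_one_right (Real.exp_pos _).le (s4_abs_jac d k)
    have h2 : HurwitzZeta.cosKernel 0 (Z ^ 2) ≤ C' + 1 := by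
      have := h' 0 (Z ^ 2) (by positivity)
      have h3 : ((Z ^ 2) ^ 1)⁻¹ ≤ 1 := inv_le_one_of_one_le₀ (by nlinarith)
      have h4 := le_of_abs_le this
      simp only [AddCircle.coe_zero] at h4
      nlinarith
    calc _ ≤ Z * (C' + 1) := h1.trans (by gcongr)
      _ = (0 + (C' + 1)) * Z * (1 + 0) := by ring
      _ ≤ _ := by gcongr
  · have h1 := h Z k hZ0 hk hs
    refine h1.trans ?_
    calc C * Z * (k / Z : ℝ) ^ (2 * A) = (C + 0) * Z * (0 + (k / Z : ℝ) ^ (2 * A)) := by ring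
      _ ≤ _ := by gcongr; positivity

lemma s4_sum_rpow (p : ℝ) (hp : 1 < p) (N : ℕ) :
    ∑ n ∈ Finset.range N, (n : ℝ) ^ (-p) ≤ ∑' n : ℕ, (n : ℝ) ^ (-p) :=
  (Real.summable_nat_rpow.mpr (by linarith)).sum_le_tsum _ (fun n _ => by positivity)

lemma s4_sum_sq (B : ℝ) (hB : 1 / 2 < B) : ∃ C : ℝ, 0 < C ∧ ∀ N : ℕ,
    ∑ m ∈ Finset.range N, ∑ n ∈ Finset.range N,
      (if IsSquare (m * n) ∧ 0 < m ∧ 0 < n then ((m : ℝ) * n) ^ (-B) else 0) ≤ C := by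
  set S := ∑' n : ℕ, (n : ℝ) ^ (-(2 * B)) with hS
  have hS0 : 0 ≤ S := tsum_nonneg fun n => by positivity
  refine ⟨S * (S * S) + 1, by positivity, fun N => ?_⟩
  rw [← Finset.sum_product', ← Finset.sum_filter]
  set T := Finset.range N
  let f : ℕ × ℕ × ℕ → ℕ × ℕ := fun x => (x.1 * x.2.1 ^ 2, x.1 * x.2.2 ^ 2)
  have hsub : (T ×ˢ T).filter (fun x => IsSquare (x.1 * x.2) ∧ 0 < x.1 ∧ 0 < x.2) ⊆ (T ×ˢ T ×ˢ T).image f := by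
    intro ⟨m, n⟩ hx
    simp only [Finset.mem_filter, Finset.mem_product, T, Finset.mem_range] at hx
    obtain ⟨⟨hm, hn⟩, hsq, hm0, hn0⟩ := hx
    obtain ⟨g, m', n', hg, hco, rfl, rfl⟩ := Nat.exists_coprime' (m := m) (n := n) (Nat.gcd_pos_of_pos_left _ hm0)
    have hm'0 : 0 < m' := Nat.pos_of_mul_pos_right hm0
    have hn'0 : 0 < n' := Nat.pos_of_mul_pos_right hn0
    have hsq' : IsSquare (m' * n') := by
      obtain ⟨r, hr⟩ := hsq
      have hd : g ∣ r := by
        rw [← Nat.pow_dvd_pow_iff two_ne_zero]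
        exact ⟨m' * n', by rw [sq r, ← hr]; ring⟩
      obtain ⟨s, rfl⟩ := hd
      refine ⟨s, ?_⟩
      have : g ^ 2 * (m' * n') = g ^ 2 * (s * s) := by linarith
      exact Nat.eq_of_mul_eq_mul_left (by positivity) this
    obtain ⟨r, hr⟩ := hsq'
    have hu : IsUnit (gcd m' n') := by
      rw [Nat.isUnit_iff]; exact hco
    obtain ⟨a, ha⟩ := exists_eq_pow_of_mul_eq_pow (k := 2) (c := r) hu (by rw [hr, sq])
    have hu' : IsUnit (gcd n' m') := by
      rw [Nat.isUnit_iff]; exact hco.symm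
    obtain ⟨b, hb⟩ := exists_eq_pow_of_mul_eq_pow (k := 2) (c := r) hu' (by rw [mul_comm, hr, sq])
    subst ha hb
    have ha1 : a ≤ a ^ 2 := Nat.le_self_pow two_ne_zero a
    have hb1 : b ≤ b ^ 2 := Nat.le_self_pow two_ne_zero b
    simp only [Finset.mem_image, Finset.mem_product, T, Finset.mem_range]
    refine ⟨(g, a, b), ⟨?_, ?_, ?_⟩, ?_⟩
    · exact lt_of_le_of_lt (Nat.le_mul_of_pos_left g hm'0) hm
    · exact lt_of_le_of_lt (ha1.trans (Nat.le_mul_of_pos_right _ hg)) hm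
    · exact lt_of_le_of_lt (hb1.trans (Nat.le_mul_of_pos_right _ hg)) hn
    · simp only [f]; rw [mul_comm, mul_comm g]
  have hle : ∑ x ∈ (T ×ˢ T ×ˢ T).image f, ((x.1 : ℝ) * x.2) ^ (-B) ≤
      ∑ x ∈ (T ×ˢ T ×ˢ T), (((f x).1 : ℝ) * (f x).2) ^ (-B) :=
    Finset.sum_image_le_of_nonneg (f := fun x : ℕ × ℕ => ((x.1 : ℝ) * x.2) ^ (-B)) (fun _ _ => by positivity)
  have heq : ∀ x : ℕ × ℕ × ℕ, (((f x).1 : ℝ) * (f x).2) ^ (-B) =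
      (x.1 : ℝ) ^ (-(2 * B)) * ((x.2.1 : ℝ) ^ (-(2 * B)) * (x.2.2 : ℝ) ^ (-(2 * B))) := by
    intro ⟨g, a, b⟩
    simp only [f]
    push_cast
    rw [show ((g : ℝ) * a ^ 2 * (g * b ^ 2)) = (g * (a * b)) ^ (2 : ℝ) by rw [Real.rpow_two]; ring,
      ← Real.rpow_mul (by positivity), Real.mul_rpow (by positivity) (by positivity), Real.mul_rpow (by positivity) (by positivity)]
    ring_nf
  calc _ ≤ ∑ x ∈ (T ×ˢ T ×ˢ T).image f, ((x.1 : ℝ) * x.2) ^ (-B) :=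
        Finset.sum_le_sum_of_subset_of_nonneg hsub (fun _ _ _ => by positivity)
    _ ≤ _ := hle
    _ = (∑ g ∈ T, (g : ℝ) ^ (-(2 * B))) * ((∑ g ∈ T, (g : ℝ) ^ (-(2 * B))) * (∑ g ∈ T, (g : ℝ) ^ (-(2 * B)))) := by
        rw [Finset.sum_congr rfl (fun x _ => heq x), Finset.sum_product, Finset.sum_mul_sum, Finset.sum_mul_sum]
        refine Finset.sum_congr rfl fun g _ => ?_
        rw [Finset.sum_product]
        simp only [Finset.mul_sum]
    _ ≤ S * (S * S) := by
        have := s4_sum_rpow (2 * B) (by linarith) N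
        have h0 : 0 ≤ ∑ g ∈ T, (g : ℝ) ^ (-(2 * B)) := Finset.sum_nonneg fun _ _ => by positivity
        gcongr
    _ ≤ _ := by linarith

lemma s4_moment_fin (A : ℕ) (hA : 1 ≤ A) (B₁ B₂ : ℝ) (hB₁ : 1 / 2 < B₁) (hB₂ : 2 * A + 1 < B₂) :
    ∃ C : ℝ, 0 < C ∧ ∀ (Z y : ℝ) (N : ℕ) (c : ℕ → ℝ), 1 ≤ Z → 0 < y → (∀ n, Even n → c n = 0) →
      (∀ n, |c n| ≤ Real.exp (-Real.pi * n ^ 2 * y)) →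
      Summable (fun d : ℤ => Real.exp (-Real.pi * (d / Z) ^ 2) * (∑ n ∈ Finset.range N, c n * jacobiSym d n) ^ 2) ∧
      ∑' d : ℤ, Real.exp (-Real.pi * (d / Z) ^ 2) * (∑ n ∈ Finset.range N, c n * jacobiSym d n) ^ 2
        ≤ C * Z * (y ^ (-B₁) + (Z ^ (2 * A))⁻¹ * y ^ (-B₂)) := by
  obtain ⟨C, hC, h⟩ := s4_poisson' A hA
  obtain ⟨C₁, hC₁, h₁⟩ := s4_exp_bound B₁ (by linarith)
  obtain ⟨C₂, hC₂, h₂⟩ := s4_exp_bound B₂ (by have : (0:ℝ) ≤ A := by positivity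
                                              linarith)
  obtain ⟨C₃, hC₃, h₃⟩ := s4_sum_sq B₁ hB₁
  set p := B₂ - 2 * A with hp
  set S := ∑' n : ℕ, (n : ℝ) ^ (-p) with hS
  have hS0 : 0 ≤ S := tsum_nonneg fun n => by positivity
  refine ⟨C * (C₁ * C₃) + C * (C₂ * (S * S)), by positivity, fun Z y N c hZ hy hc0 hc => ?_⟩
  have hZ0 : 0 < Z := by linarith
  set T := Finset.range N
  have hexp : ∀ d : ℤ, Real.exp (-Real.pi * (d / Z) ^ 2) * (∑ n ∈ T, c n * jacobiSym d n) ^ 2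
      = ∑ m ∈ T, ∑ n ∈ T, (c m * c n) * (Real.exp (-Real.pi * (d / Z) ^ 2) * jacobiSym d (m * n)) := by
    intro d
    rw [sq (∑ n ∈ T, c n * (jacobiSym d n : ℝ)), Finset.sum_mul_sum, Finset.mul_sum]
    refine Finset.sum_congr rfl fun m _ => ?_
    rw [Finset.mul_sum]
    refine Finset.sum_congr rfl fun n _ => ?_
    rcases Nat.even_or_odd m with hm | hm
    · simp [hc0 m hm]
    rcases Nat.even_or_odd n with hn | hn
    · simp [hc0 n hn]
    rw [jacobiSym.mul_right' d hm.pos.ne' hn.pos.ne']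
    push_cast
    ring
  have hHS : HasSum (fun d : ℤ => Real.exp (-Real.pi * (d / Z) ^ 2) * (∑ n ∈ T, c n * jacobiSym d n) ^ 2)
      (∑ m ∈ T, ∑ n ∈ T, (c m * c n) * ∑' d : ℤ, (Real.exp (-Real.pi * (d / Z) ^ 2) * (jacobiSym d (m * n) : ℝ))) := by
    simp_rw [hexp]
    exact hasSum_sum fun m _ => hasSum_sum fun n _ => ((s4_summable_jac Z hZ0 (m * n)).hasSum.mul_left _)
  refine ⟨hHS.summable, ?_⟩
  rw [hHS.tsum_eq]
  have key : ∀ m n : ℕ, (c m * c n) * ∑' d : ℤ, (Real.exp (-Real.pi * (d / Z) ^ 2) * (jacobiSym d (m * n) : ℝ))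
      ≤ (C * Z * C₁ * y ^ (-B₁)) * (if IsSquare (m * n) ∧ 0 < m ∧ 0 < n then ((m : ℝ) * n) ^ (-B₁) else 0)
        + (C * Z * (Z ^ (2 * A))⁻¹ * C₂ * y ^ (-B₂)) * ((m : ℝ) ^ (-p) * (n : ℝ) ^ (-p)) := by
    intro m n
    have hR : 0 ≤ (C * Z * C₁ * y ^ (-B₁)) * (if IsSquare (m * n) ∧ 0 < m ∧ 0 < n then ((m : ℝ) * n) ^ (-B₁) else 0)
        + (C * Z * (Z ^ (2 * A))⁻¹ * C₂ * y ^ (-B₂)) * ((m : ℝ) ^ (-p) * (n : ℝ) ^ (-p)) := by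
      have : (0:ℝ) ≤ (if IsSquare (m * n) ∧ 0 < m ∧ 0 < n then ((m : ℝ) * n) ^ (-B₁) else 0) := by
        split_ifs <;> positivity
      positivity
    rcases Nat.even_or_odd m with hm | hm
    · rw [hc0 m hm]; simpa using hR
    rcases Nat.even_or_odd n with hn | hn
    · rw [hc0 n hn]; simpa using hR
    have hm0 : (0:ℝ) < m := by exact_mod_cast hm.pos
    have hn0 : (0:ℝ) < n := by exact_mod_cast hn.pos
    have hmn0 : (0:ℝ) < m * n := by positivity
    have hP := h Z (m * n) hZ (hm.mul hn)
    have hw : |c m * c n| ≤ Real.exp (-(m * n * y)) := by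
      rw [abs_mul]
      calc _ ≤ Real.exp (-Real.pi * m ^ 2 * y) * Real.exp (-Real.pi * n ^ 2 * y) := by
            gcongr
            · exact hc m
            · exact hc n
        _ = Real.exp (-Real.pi * (m ^ 2 + n ^ 2) * y) := by rw [← Real.exp_add]; ring_nf
        _ ≤ _ := by
          apply Real.exp_le_exp.mpr
          have h3 := Real.pi_gt_three
          have h4 : (m:ℝ) * n ≤ m ^ 2 + n ^ 2 := by nlinarith [sq_nonneg ((m:ℝ) - n)]
          have h5 : (m:ℝ) * n * y ≤ (m ^ 2 + n ^ 2) * y := by gcongr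
          have h6 : 0 ≤ ((m:ℝ) ^ 2 + n ^ 2) * y := by positivity
          nlinarith
    have hw1 := hw.trans (h₁ _ (by positivity))
    have hw2 := hw.trans (h₂ _ (by positivity))
    rw [Real.mul_rpow hmn0.le hy.le] at hw1 hw2
    refine (le_abs_self _).trans ?_
    rw [abs_mul]
    refine (mul_le_mul_of_nonneg_left hP (abs_nonneg _)).trans ?_
    rw [mul_add, mul_add]
    apply add_le_add
    · split_ifs with h1 h2 h2
      · calc _ ≤ (C₁ * (((m:ℝ) * n) ^ (-B₁) * y ^ (-B₁))) * (C * Z * 1) := by gcongr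
          _ = _ := by ring
      · exact absurd ⟨h1, hm.pos, hn.pos⟩ h2
      · exact absurd h2.1 h1
      · simp
    · calc _ ≤ (C₂ * (((m:ℝ) * n) ^ (-B₂) * y ^ (-B₂))) * (C * Z * (((m * n : ℕ) : ℝ) / Z) ^ (2 * A)) := by gcongr
        _ = _ := by
          have e : ((m:ℝ) ^ (-p) * (n : ℝ) ^ (-p)) = ((m:ℝ) * n) ^ (-B₂) * ((m:ℝ) * n) ^ (2 * A) := by
            rw [← Real.mul_rpow hm0.le hn0.le, ← Real.rpow_natCast, ← Real.rpow_add hmn0]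
            congr 1
            push_cast
            rw [hp]; ring
          rw [e, div_pow]
          push_cast
          field_simp
  calc _ ≤ ∑ m ∈ T, ∑ n ∈ T, ((C * Z * C₁ * y ^ (-B₁)) * (if IsSquare (m * n) ∧ 0 < m ∧ 0 < n then ((m : ℝ) * n) ^ (-B₁) else 0)
        + (C * Z * (Z ^ (2 * A))⁻¹ * C₂ * y ^ (-B₂)) * ((m : ℝ) ^ (-p) * (n : ℝ) ^ (-p))) :=
        Finset.sum_le_sum fun m _ => Finset.sum_le_sum fun n _ => key m n
    _ = (C * Z * C₁ * y ^ (-B₁)) * (∑ m ∈ T, ∑ n ∈ T, (if IsSquare (m * n) ∧ 0 < m ∧ 0 < n then ((m : ℝ) * n) ^ (-B₁) else 0))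
        + (C * Z * (Z ^ (2 * A))⁻¹ * C₂ * y ^ (-B₂)) * ((∑ m ∈ T, (m : ℝ) ^ (-p)) * (∑ n ∈ T, (n : ℝ) ^ (-p))) := by
        rw [Finset.sum_mul_sum]
        simp only [Finset.sum_add_distrib, Finset.mul_sum]
    _ ≤ (C * Z * C₁ * y ^ (-B₁)) * C₃ + (C * Z * (Z ^ (2 * A))⁻¹ * C₂ * y ^ (-B₂)) * (S * S) := by
        have := s4_sum_rpow p (by linarith) N
        have h0 : 0 ≤ ∑ g ∈ T, (g : ℝ) ^ (-p) := Finset.sum_nonneg fun _ _ => by positivity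
        gcongr
        exact h₃ N
    _ ≤ _ := by
        have e1 : 0 ≤ C * (C₁ * C₃) * Z * ((Z ^ (2 * A))⁻¹ * y ^ (-B₂)) := by positivity
        have e2 : 0 ≤ C * (C₂ * (S * S)) * Z * y ^ (-B₁) := by positivity
        linarith

noncomputable def s4c (y : ℝ) (n : ℕ) : ℝ := (ZMod.χ₈ n : ℝ) * Real.exp (-Real.pi * n ^ 2 * y)

noncomputable def s4th (d : ℤ) (y : ℝ) : ℝ := ∑' n : ℕ, s4c y n * (jacobiSym d n : ℝ)

lemma s4c_even (y : ℝ) (n : ℕ) (hn : Even n) : s4c y n = 0 := by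
  have : ZMod.χ₈ n = 0 := by
    rw [ZMod.χ₈_nat_eq_if_mod_eight, if_pos (Nat.even_iff.mp hn)]
  simp [s4c, this]

lemma s4c_abs (y : ℝ) (n : ℕ) : |s4c y n| ≤ Real.exp (-Real.pi * n ^ 2 * y) := by
  have : |(ZMod.χ₈ n : ℝ)| ≤ 1 := by
    rw [ZMod.χ₈_nat_eq_if_mod_eight]
    split_ifs <;> simp
  rw [s4c, abs_mul, Real.abs_exp]
  exact mul_le_of_le_one_left (Real.exp_pos _).le this

lemma s4_summable_gauss_nat (y : ℝ) (hy : 0 < y) : Summable (fun n : ℕ => Real.exp (-Real.pi * n ^ 2 * y)) := by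
  have h := HurwitzZeta.hasSum_int_evenKernel 0 hy
  have := h.summable.comp_injective (Nat.cast_injective (R := ℤ))
  simpa [Function.comp_def] using this

lemma s4th_summable (d : ℤ) (y : ℝ) (hy : 0 < y) : Summable (fun n : ℕ => s4c y n * (jacobiSym d n : ℝ)) := by
  refine Summable.of_norm_bounded (s4_summable_gauss_nat y hy) fun n => ?_
  rw [norm_mul, Real.norm_eq_abs, Real.norm_eq_abs]
  exact (mul_le_of_le_one_right (abs_nonneg _) (s4_abs_jac d n)).trans (s4c_abs y n)

lemma s4_moment (A : ℕ) (hA : 1 ≤ A) (B₁ B₂ : ℝ) (hB₁ : 1 / 2 < B₁) (hB₂ : 2 * A + 1 < B₂) :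
    ∃ C : ℝ, 0 < C ∧ ∀ (X Z y : ℝ), 1 ≤ X → X ≤ Z → 0 < y →
      ∑ d ∈ Finset.Icc 1 ⌊X⌋₊, |s4th d y|
        ≤ C * (X * Z) ^ (1 / 2 : ℝ) * (y ^ (-B₁) + (Z ^ (2 * A))⁻¹ * y ^ (-B₂)) ^ (1 / 2 : ℝ) := by
  obtain ⟨C, hC, h⟩ := s4_moment_fin A hA B₁ B₂ hB₁ hB₂
  refine ⟨(Real.exp Real.pi * C) ^ (1 / 2 : ℝ), by positivity, fun X Z y hX hXZ hy => ?_⟩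
  have hZ : 1 ≤ Z := hX.trans hXZ
  have hZ0 : 0 < Z := by linarith
  set R := y ^ (-B₁) + (Z ^ (2 * A))⁻¹ * y ^ (-B₂) with hR
  have hR0 : 0 ≤ R := by positivity
  set D := Finset.Icc 1 ⌊X⌋₊
  have h1 : ∀ N : ℕ, ∑ d ∈ D, (∑ n ∈ Finset.range N, s4c y n * jacobiSym d n) ^ 2 ≤ Real.exp Real.pi * (C * Z * R) := by
    intro N
    obtain ⟨hs, hb⟩ := h Z y N (s4c y) hZ hy (s4c_even y) (s4c_abs y)
    have h2 : ∑ d ∈ D, Real.exp (-Real.pi * (((d : ℕ) : ℤ) / Z) ^ 2) * (∑ n ∈ Finset.range N, s4c y n * jacobiSym (d : ℕ) n) ^ 2 ≤ C * Z * R := by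
      refine le_trans ?_ hb
      have := hs.sum_le_tsum (D.map ⟨fun n : ℕ => (n : ℤ), Nat.cast_injective⟩) (fun d _ => by positivity)
      rw [Finset.sum_map] at this
      exact this
    have h3 : ∀ d ∈ D, (∑ n ∈ Finset.range N, s4c y n * jacobiSym (d : ℕ) n) ^ 2 ≤
        Real.exp Real.pi * (Real.exp (-Real.pi * (((d : ℕ) : ℤ) / Z) ^ 2) * (∑ n ∈ Finset.range N, s4c y n * jacobiSym (d : ℕ) n) ^ 2) := by
      intro d hd
      rw [← mul_assoc, ← Real.exp_add]
      have hd' : (d : ℝ) ≤ X := by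
        have := (Finset.mem_Icc.mp hd).2
        exact (Nat.le_floor_iff (by linarith)).mp this
      have hdZ : (d : ℝ) / Z ≤ 1 := by rw [div_le_one hZ0]; linarith
      have : (1:ℝ) ≤ Real.exp (Real.pi + -Real.pi * (((d : ℕ) : ℤ) / Z) ^ 2) := by
        apply Real.one_le_exp
        have h0 : 0 ≤ (d : ℝ) / Z := by positivity
        have : ((d : ℝ) / Z) ^ 2 ≤ 1 := by nlinarith
        push_cast
        nlinarith [Real.pi_pos]
      exact le_mul_of_one_le_left (sq_nonneg _) this
    calc _ ≤ _ := Finset.sum_le_sum h3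
      _ = _ := (Finset.mul_sum _ _ _).symm
      _ ≤ _ := by gcongr
  have h2 : ∑ d ∈ D, (s4th d y) ^ 2 ≤ Real.exp Real.pi * (C * Z * R) := by
    refine le_of_tendsto' (x := Filter.atTop) ?_ h1
    refine tendsto_finsetSum _ fun d _ => ?_
    exact ((s4th_summable d y hy).hasSum.tendsto_sum_nat).pow 2
  have h3 : (∑ d ∈ D, |s4th d y|) ^ 2 ≤ X * (Real.exp Real.pi * (C * Z * R)) := by
    have := sq_sum_le_card_mul_sum_sq (s := D) (f := fun d : ℕ => |s4th d y|)
    simp only [sq_abs] at this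
    refine this.trans ?_
    have hc : ((D.card : ℕ) : ℝ) ≤ X := by
      simp only [D, Nat.card_Icc, Nat.add_sub_cancel]
      exact Nat.floor_le (by linarith)
    have h0 : 0 ≤ ∑ d ∈ D, (s4th d y) ^ 2 := Finset.sum_nonneg fun _ _ => sq_nonneg _
    gcongr
  have h4 := Real.le_sqrt_of_sq_le h3
  refine h4.trans (le_of_eq ?_)
  rw [Real.sqrt_eq_rpow, ← Real.mul_rpow (by positivity) (by positivity), ← Real.mul_rpow (by positivity) (by positivity)]
  congr 1
  ring

lemma s4_moment_small (η : ℝ) (hη : 0 < η) : ∃ C : ℝ, 0 < C ∧ ∀ X y : ℝ, 1 ≤ X → 1 / (8 * X) ≤ y →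
    ∑ d ∈ Finset.Icc 1 ⌊X⌋₊, |s4th d y| ≤ C * X ^ (1 + η) * y ^ (-(1 / 4) - η) := by
  set A := ⌈1 / (8 * η)⌉₊ + 1 with hAdef
  have hA : 1 ≤ A := by omega
  have hAη : 1 / 2 ≤ 2 * A * (2 * η) := by
    have : 1 / (8 * η) ≤ A := (Nat.le_ceil _).trans (by rw [hAdef]; push_cast; linarith)
    rw [div_le_iff₀ (by positivity)] at this
    linarith
  obtain ⟨C, hC, h⟩ := s4_moment A hA (1 / 2 + 2 * η) (2 * A + 1 + 2 * η) (by linarith) (by linarith)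
  refine ⟨C * (1 + 8 ^ (2 * A + 1 / 2 : ℝ)) ^ (1 / 2 : ℝ), by positivity, fun X y hX hy => ?_⟩
  have hX0 : 0 < X := by linarith
  have hy0 : 0 < y := lt_of_lt_of_le (by positivity) hy
  have h1 := h X (X ^ (1 + 2 * η)) y hX (by
    calc X = X ^ (1 : ℝ) := (Real.rpow_one X).symm
      _ ≤ _ := Real.rpow_le_rpow_of_exponent_le hX (by linarith)) hy0
  refine h1.trans ?_
  have e1 : (X * X ^ (1 + 2 * η)) ^ (1 / 2 : ℝ) = X ^ (1 + η) := by
    nth_rewrite 1 [← Real.rpow_one X]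
    rw [← Real.rpow_add hX0, ← Real.rpow_mul hX0.le]
    congr 1; ring
  have e2 : ((X ^ (1 + 2 * η)) ^ (2 * A))⁻¹ * y ^ (-(2 * A + 1 + 2 * η)) ≤ 8 ^ (2 * A + 1 / 2 : ℝ) * y ^ (-(1 / 2 + 2 * η)) := by
    have a1 : y ^ (-(2 * A + 1 + 2 * η)) = y ^ (-(2 * A + 1 / 2 : ℝ)) * y ^ (-(1 / 2 + 2 * η)) := by
      rw [← Real.rpow_add hy0]; congr 1; ring
    have a2 : y ^ (-(2 * A + 1 / 2 : ℝ)) ≤ (8 * X) ^ (2 * A + 1 / 2 : ℝ) := by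
      rw [Real.rpow_neg hy0.le, ← Real.inv_rpow hy0.le]
      apply Real.rpow_le_rpow (by positivity) _ (by positivity)
      rw [inv_le_comm₀ hy0 (by positivity)]
      simpa using hy
    have a3 : ((X ^ (1 + 2 * η)) ^ (2 * A))⁻¹ = X ^ (-((1 + 2 * η) * (2 * A))) := by
      rw [← Real.rpow_natCast, ← Real.rpow_mul hX0.le, ← Real.rpow_neg hX0.le]
      push_cast; rfl
    rw [a1, a3, ← mul_assoc]
    gcongr
    calc _ ≤ X ^ (-((1 + 2 * η) * (2 * A))) * (8 * X) ^ (2 * A + 1 / 2 : ℝ) := by gcongr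
      _ = 8 ^ (2 * A + 1 / 2 : ℝ) * X ^ (-((1 + 2 * η) * (2 * A)) + (2 * A + 1 / 2)) := by
        rw [Real.mul_rpow (by norm_num) hX0.le, Real.rpow_add hX0 (-((1 + 2 * η) * (2 * A))) (2 * A + 1 / 2)]; ring
      _ ≤ 8 ^ (2 * A + 1 / 2 : ℝ) * 1 := by
        gcongr
        apply Real.rpow_le_one_of_one_le_of_nonpos hX
        linarith
      _ = _ := mul_one _
  rw [e1]
  calc _ ≤ C * X ^ (1 + η) * ((1 + 8 ^ (2 * A + 1 / 2 : ℝ)) * y ^ (-(1 / 2 + 2 * η))) ^ (1 / 2 : ℝ) := by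
        gcongr
        rw [add_mul, one_mul]
        gcongr
    _ = _ := by
        rw [Real.mul_rpow (by positivity) (by positivity), ← Real.rpow_mul hy0.le]
        rw [show -(1 / 2 + 2 * η) * (1 / 2) = -(1 / 4) - η by ring]
        ring

lemma s4_moment_large (η : ℝ) (hη : 0 < η) (B : ℝ) : ∃ C : ℝ, 0 < C ∧ ∀ X y : ℝ, 1 ≤ X → 1 ≤ y →
    ∑ d ∈ Finset.Icc 1 ⌊X⌋₊, |s4th d y| ≤ C * X ^ (1 + η) * y ^ (-B) := by
  have hm : (4 : ℝ) ≤ max (2 * B) 4 := le_max_right _ _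
  obtain ⟨C, hC, h⟩ := s4_moment 1 le_rfl (max (2 * B) 4) (max (2 * B) 4) (by linarith) (by push_cast; linarith)
  refine ⟨C * 2 ^ (1 / 2 : ℝ), by positivity, fun X y hX hy => ?_⟩
  have hX0 : 0 < X := by linarith
  have hy0 : 0 < y := by linarith
  have h1 := h X (X ^ (1 + 2 * η)) y hX (by
    calc X = X ^ (1 : ℝ) := (Real.rpow_one X).symm
      _ ≤ _ := Real.rpow_le_rpow_of_exponent_le hX (by linarith)) hy0
  refine h1.trans ?_
  have e1 : (X * X ^ (1 + 2 * η)) ^ (1 / 2 : ℝ) = X ^ (1 + η) := by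
    nth_rewrite 1 [← Real.rpow_one X]
    rw [← Real.rpow_add hX0, ← Real.rpow_mul hX0.le]
    congr 1; ring
  have e3 : y ^ (-max (2 * B) 4) ≤ y ^ (-(2 * B)) :=
    Real.rpow_le_rpow_of_exponent_le hy (neg_le_neg (le_max_left _ _))
  have e2 : ((X ^ (1 + 2 * η)) ^ (2 * 1))⁻¹ ≤ 1 := by
    apply inv_le_one_of_one_le₀
    apply one_le_pow₀
    exact Real.one_le_rpow hX (by linarith)
  rw [e1]
  calc _ ≤ C * X ^ (1 + η) * (2 * y ^ (-(2 * B))) ^ (1 / 2 : ℝ) := by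
        gcongr
        calc _ ≤ y ^ (-(2 * B)) + 1 * y ^ (-(2 * B)) := by gcongr
          _ = _ := by ring
    _ = _ := by
        rw [Real.mul_rpow (by positivity) (by positivity), ← Real.rpow_mul hy0.le]
        rw [show -(2 * B) * (1 / 2) = -B by ring]
        ring

section s4B
open ZMod HurwitzZeta

/-- Residue class decomposition of the integers. -/
def s4_equiv (q : ℕ) [NeZero q] : ℤ ≃ ZMod q × ℤ where
  toFun n := ((n : ZMod q), n / q)
  invFun p := p.2 * q + p.1.val
  left_inv n := by
    simp only [ZMod.val_intCast]
    exact Int.ediv_mul_add_emod _ _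
  right_inv p := by
    obtain ⟨a, m⟩ := p
    have hq : (q : ℤ) ≠ 0 := Int.natCast_eq_zero.not.2 (NeZero.ne q)
    refine Prod.ext ?_ ?_
    · simp
    · simp only
      rw [Int.add_comm, Int.add_mul_ediv_right _ _ hq, Int.ediv_eq_zero_of_lt (by positivity), zero_add]
      exact_mod_cast ZMod.val_lt a

variable {q : ℕ} [NeZero q] (ψ : DirichletCharacter ℂ q)

lemma s4_summable_int (y : ℝ) (hy : 0 < y) : Summable (fun n : ℤ => ψ n * (Real.exp (-Real.pi * n ^ 2 * y) : ℂ)) := by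
  have h := (hasSum_int_evenKernel 0 hy).summable
  refine Summable.of_norm_bounded h fun n => ?_
  rw [norm_mul, norm_real, Real.norm_eq_abs, Real.abs_exp]
  simp only [add_zero]
  exact mul_le_of_le_one_left (Real.exp_pos _).le (ψ.norm_le_one _)

noncomputable def s4T (y : ℝ) : ℂ := ∑' n : ℤ, ψ n * (Real.exp (-Real.pi * n ^ 2 * y) : ℂ)

lemma s4T_even (y : ℝ) (hy : 0 < y) :
    s4T ψ y = ∑ a : ZMod q, ψ a * (evenKernel ((a.val / q : ℝ) : UnitAddCircle) (q ^ 2 * y) : ℂ) := by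
  have hq : (q : ℝ) ≠ 0 := Nat.cast_ne_zero.mpr (NeZero.ne q)
  have h := (s4_summable_int ψ y hy).hasSum
  rw [← (s4_equiv q).symm.hasSum_iff] at h
  have h2 := h.prod_fiberwise (g := fun a : ZMod q => ψ a * (evenKernel ((a.val / q : ℝ) : UnitAddCircle) (q ^ 2 * y) : ℂ)) ?_
  · exact h2.unique (hasSum_fintype _)
  · intro a
    have h3 := hasSum_int_evenKernel (a.val / q : ℝ) (t := q ^ 2 * y) (by positivity)
    have h4 := (hasSum_ofReal.mpr h3).mul_left (ψ a)
    refine h4.congr_fun fun m => ?_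
    have e1 : ((s4_equiv q).symm (a, m)) = m * q + a.val := rfl
    simp only [Function.comp_apply, e1]
    congr 1
    · simp
    · congr 2
      push_cast
      field_simp

lemma s4_gauss (hψ : ψ.IsPrimitive) (hr : ψ⁻¹ = ψ) (n : ℤ) :
    ∑ a : ZMod q, ψ a * cexp (2 * Real.pi * I * ((a.val / q : ℝ) : ℂ) * n) = gaussSum ψ stdAddChar * ψ n := by
  have := gaussSum_mulShift_of_isPrimitive (stdAddChar (N := q)) hψ (n : ZMod q)
  rw [hr] at this
  rw [mul_comm (gaussSum ψ stdAddChar), ← this, gaussSum]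
  refine Finset.sum_congr rfl fun a _ => ?_
  congr 1
  rw [AddChar.mulShift_apply]
  have e : (n : ZMod q) * a = ((n * a.val : ℤ) : ZMod q) := by simp
  rw [e, stdAddChar_coe]
  congr 1
  push_cast
  ring

lemma s4T_FE (hψ : ψ.IsPrimitive) (hr : ψ⁻¹ = ψ) (y : ℝ) (hy : 0 < y) :
    s4T ψ y = gaussSum ψ stdAddChar * ((1 / (q ^ 2 * y) ^ (1 / 2 : ℝ) : ℝ) : ℂ) * s4T ψ (1 / (q ^ 2 * y)) := by
  have hq : (0 : ℝ) < q := Nat.cast_pos.mpr (NeZero.pos q)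
  have hz : 0 < 1 / (q ^ 2 * y) := by positivity
  rw [s4T_even ψ y hy]
  simp_rw [evenKernel_functional_equation]
  have h1 : HasSum (fun n : ℤ => ∑ a : ZMod q, ψ a * (cexp (2 * Real.pi * I * ((a.val / q : ℝ) : ℂ) * n) * Real.exp (-Real.pi * n ^ 2 * (1 / (q ^ 2 * y)))))
      (∑ a : ZMod q, ψ a * (cosKernel ((a.val / q : ℝ) : UnitAddCircle) (1 / (q ^ 2 * y)) : ℂ)) :=
    hasSum_sum fun a _ => (hasSum_int_cosKernel (a.val / q : ℝ) hz).mul_left (ψ a)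
  have h2 := (s4_summable_int ψ _ hz).hasSum.mul_left (gaussSum ψ stdAddChar)
  have h3 : ∑ a : ZMod q, ψ a * (cosKernel ((a.val / q : ℝ) : UnitAddCircle) (1 / (q ^ 2 * y)) : ℂ) = gaussSum ψ stdAddChar * s4T ψ (1 / (q ^ 2 * y)) := by
    refine h1.unique (h2.congr_fun fun n => ?_)
    rw [← mul_assoc, ← s4_gauss ψ hψ hr, Finset.sum_mul]
    refine Finset.sum_congr rfl fun a _ => ?_
    ring
  rw [mul_right_comm, ← h3, Finset.sum_mul]
  refine Finset.sum_congr rfl fun a _ => ?_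
  push_cast
  ring

lemma s4_tau (hψ : ψ.IsPrimitive) (hr : ψ⁻¹ = ψ) (he : ψ.Even) : ‖gaussSum ψ stdAddChar‖ ^ 2 = q := by
  have h1 : ZMod.dft ψ = gaussSum ψ stdAddChar • (ψ : ZMod q → ℂ) := by
    ext k
    rw [hψ.fourierTransform_eq_inv_mul_gaussSum, hr]
    simp [he.eval_neg, mul_comm]
  have h2 := congrFun (ZMod.dft_dft (ψ : ZMod q → ℂ)) 1
  rw [h1, _root_.map_smul, h1] at h2
  simp only [Pi.smul_apply, smul_eq_mul, he.eval_neg, map_one, mul_one, nsmul_eq_mul] at h2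
  rw [sq, ← norm_mul, h2]
  simp

lemma s4T_cont : ContinuousOn (s4T ψ) (Set.Ioi 0) := by
  have hq : (0 : ℝ) < q := Nat.cast_pos.mpr (NeZero.pos q)
  have : ContinuousOn (fun y : ℝ => ∑ a : ZMod q, ψ a * (evenKernel ((a.val / q : ℝ) : UnitAddCircle) (q ^ 2 * y) : ℂ)) (Set.Ioi 0) := by
    refine continuousOn_finsetSum _ fun a _ => continuousOn_const.mul ?_
    refine continuous_ofReal.comp_continuousOn ?_
    refine (continuousOn_evenKernel _).comp (by fun_prop) fun y hy => ?_
    have : 0 < y := hy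
    show 0 < (q : ℝ) ^ 2 * y
    positivity
  exact this.congr fun y hy => s4T_even ψ y hy

lemma s4T_top (hq1 : 1 < q) (r : ℝ) : (s4T ψ) =O[Filter.atTop] (fun x : ℝ => x ^ r) := by
  have hq : (0 : ℝ) < q := Nat.cast_pos.mpr (NeZero.pos q)
  have h : (fun y : ℝ => ∑ a : ZMod q, ψ a * (evenKernel ((a.val / q : ℝ) : UnitAddCircle) (q ^ 2 * y) : ℂ)) =O[Filter.atTop] (fun x : ℝ => x ^ r) := by
    refine Asymptotics.IsBigO.fun_sum fun a _ => ?_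
    by_cases ha : a = 0
    · have : Fact (1 < q) := ⟨hq1⟩
      have : ψ a = 0 := by rw [ha]; exact MulChar.map_zero ψ
      simp only [this, zero_mul]
      exact Asymptotics.isBigO_zero _ _
    · obtain ⟨p, hp, hO⟩ := isBigO_atTop_evenKernel_sub ((a.val / q : ℝ) : UnitAddCircle)
      have hne : ((a.val / q : ℝ) : UnitAddCircle) ≠ 0 := by
        rw [← ZMod.toAddCircle_apply]
        simpa using ha
      simp only [hne, if_false, sub_zero] at hO
      have h2 := hO.trans (isLittleO_exp_neg_mul_rpow_atTop hp r).isBigO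
      have h3 : Filter.Tendsto (fun y : ℝ => (q : ℝ) ^ 2 * y) Filter.atTop Filter.atTop :=
        Filter.tendsto_id.const_mul_atTop (by positivity)
      have h4 := h2.comp_tendsto h3
      refine Asymptotics.IsBigO.const_mul_left ?_ _
      rw [← Asymptotics.isBigO_norm_left]
      simp only [norm_real]
      rw [Asymptotics.isBigO_norm_left]
      refine h4.trans ?_
      refine Asymptotics.IsBigO.of_bound (((q : ℝ) ^ 2) ^ r) ?_
      filter_upwards [Filter.eventually_gt_atTop 0] with y hy
      simp only [Function.comp_apply]
      rw [Real.mul_rpow (by positivity) hy.le, norm_mul, Real.norm_of_nonneg (by positivity : 0 ≤ ((q : ℝ) ^ 2) ^ r)]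
  refine h.congr' ?_ Filter.EventuallyEq.rfl
  filter_upwards [Filter.eventually_gt_atTop 0] with y hy
  exact (s4T_even ψ y hy).symm

end s4B

section s4B2
open ZMod MeasureTheory
variable {q : ℕ} [NeZero q] (ψ : DirichletCharacter ℂ q)

lemma s4f_FE (hψ : ψ.IsPrimitive) (hr : ψ⁻¹ = ψ) (x : ℝ) (hx : 0 < x) :
    s4T ψ (1 / x / q) = (gaussSum ψ stdAddChar * ((q : ℝ) ^ (-(1 / 2) : ℝ) : ℝ)) * ((x ^ (1 / 2 : ℝ) : ℝ) : ℂ) * s4T ψ (x / q) := by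
  have hq : (0 : ℝ) < q := Nat.cast_pos.mpr (NeZero.pos q)
  rw [s4T_FE ψ hψ hr _ (by positivity)]
  rw [show (q : ℝ) ^ 2 * (1 / x / q) = q / x by field_simp, show 1 / ((q : ℝ) / x) = x / q by field_simp]
  rw [Real.div_rpow hq.le hx.le, one_div_div, Real.rpow_neg hq.le]
  push_cast
  ring

lemma s4_eps (hψ : ψ.IsPrimitive) (hr : ψ⁻¹ = ψ) (he : ψ.Even) :
    ‖gaussSum ψ stdAddChar * ((q : ℝ) ^ (-(1 / 2) : ℝ) : ℝ)‖ = 1 := by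
  have hq : (0 : ℝ) < q := Nat.cast_pos.mpr (NeZero.pos q)
  have h := s4_tau ψ hψ hr he
  have h2 : ‖gaussSum ψ stdAddChar‖ = (q : ℝ) ^ (1 / 2 : ℝ) := by
    rw [← h, ← Real.sqrt_eq_rpow, Real.sqrt_sq (norm_nonneg _)]
  rw [norm_mul, h2, norm_real, Real.norm_of_nonneg (by positivity), ← Real.rpow_add hq]
  simp

noncomputable def s4pair (hq1 : 1 < q) (hψ : ψ.IsPrimitive) (hr : ψ⁻¹ = ψ) (he : ψ.Even) : WeakFEPair ℂ where
  f := fun x => s4T ψ (x / q)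
  g := fun x => s4T ψ (x / q)
  k := 1 / 2
  ε := gaussSum ψ stdAddChar * ((q : ℝ) ^ (-(1 / 2) : ℝ) : ℝ)
  f₀ := 0
  g₀ := 0
  hf_int := by
    refine ContinuousOn.locallyIntegrableOn ?_ measurableSet_Ioi
    refine (s4T_cont ψ).comp (by fun_prop) fun x hx => ?_
    have hq : (0 : ℝ) < q := Nat.cast_pos.mpr (NeZero.pos q)
    exact div_pos hx hq
  hg_int := by
    refine ContinuousOn.locallyIntegrableOn ?_ measurableSet_Ioi
    refine (s4T_cont ψ).comp (by fun_prop) fun x hx => ?_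
    have hq : (0 : ℝ) < q := Nat.cast_pos.mpr (NeZero.pos q)
    exact div_pos hx hq
  hk := by norm_num
  hε := by
    have := s4_eps ψ hψ hr he
    rw [← norm_ne_zero_iff, this]
    exact one_ne_zero
  h_feq := fun x hx => by
    rw [s4f_FE ψ hψ hr x hx, smul_eq_mul]
  hf_top := fun r => by
    have hq : (0 : ℝ) < q := Nat.cast_pos.mpr (NeZero.pos q)
    have h := (s4T_top ψ hq1 r).comp_tendsto (Filter.tendsto_id.atTop_div_const hq)
    simp only [sub_zero]
    refine h.trans ?_
    refine Asymptotics.IsBigO.of_bound (((q : ℝ) ^ r)⁻¹) ?_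
    filter_upwards [Filter.eventually_gt_atTop 0] with y hy
    simp only [Function.comp_apply, id]
    rw [Real.div_rpow hy.le hq.le, norm_div, Real.norm_of_nonneg (by positivity : 0 ≤ (q : ℝ) ^ r), div_eq_inv_mul]
  hg_top := fun r => by
    have hq : (0 : ℝ) < q := Nat.cast_pos.mpr (NeZero.pos q)
    have h := (s4T_top ψ hq1 r).comp_tendsto (Filter.tendsto_id.atTop_div_const hq)
    simp only [sub_zero]
    refine h.trans ?_
    refine Asymptotics.IsBigO.of_bound (((q : ℝ) ^ r)⁻¹) ?_
    filter_upwards [Filter.eventually_gt_atTop 0] with y hy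
    simp only [Function.comp_apply, id]
    rw [Real.div_rpow hy.le hq.le, norm_div, Real.norm_of_nonneg (by positivity : 0 ≤ (q : ℝ) ^ r), div_eq_inv_mul]

lemma s4pair_strong (hq1 : 1 < q) (hψ : ψ.IsPrimitive) (hr : ψ⁻¹ = ψ) (he : ψ.Even) :
    IsStrongFEPair (s4pair ψ hq1 hψ hr he) := ⟨rfl, rfl⟩

lemma s4_mellin_right (hq1 : 1 < q) (he : ψ.Even) (s : ℂ) (hs : 1 < s.re) :
    mellin (s4T ψ) (s / 2) = 2 * Gammaℝ s * ψ.LFunction s := by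
  have : Fact (1 < q) := ⟨hq1⟩
  have h0 : ψ 0 = 0 := MulChar.map_zero ψ
  have hs0 : s ≠ 0 := by
    rintro rfl; simp at hs; linarith
  have hL : LSeriesSummable (fun n : ℕ => ψ n) s := ψ.LSeriesSummable_of_one_lt_re hs
  have hF : ∀ t ∈ Set.Ioi (0:ℝ), HasSum (fun n : ℤ => if (n : ℝ) = 0 then 0 else ψ n * (Real.exp (-Real.pi * (n : ℝ) ^ 2 * t) : ℂ)) (s4T ψ t) := by
    intro t ht
    refine (s4_summable_int ψ t ht).hasSum.congr_fun fun n => ?_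
    split_ifs with h
    · have : n = 0 := by exact_mod_cast h
      simp [this, h0]
    · rfl
  have hsum : Summable (fun n : ℤ => ‖ψ n‖ / |(n : ℝ)| ^ s.re) := by
    have h1 : Summable (fun n : ℤ => |(n : ℝ)| ^ (-s.re)) := Real.summable_abs_int_rpow hs
    refine Summable.of_nonneg_of_le (fun n => by positivity) (fun n => ?_) h1
    rw [Real.rpow_neg (abs_nonneg _), div_eq_mul_inv]
    exact mul_le_of_le_one_left (by positivity) (ψ.norm_le_one _)
  have h := hasSum_mellin_pi_mul_sq (s := s) (by linarith) hF hsum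
  have h2 := h.nat_add_neg
  simp only [Int.cast_zero, h0, mul_zero, zero_div, add_zero] at h2
  have h3 := hL.hasSum.mul_left (2 * Gammaℝ s)
  rw [DirichletCharacter.LFunction_eq_LSeries _ hs]
  refine h2.unique (h3.congr_fun fun n => ?_)
  rcases eq_or_ne n 0 with rfl | hn
  · simp [h0]
  · rw [LSeries.term_of_ne_zero hn]
    have e1 : ψ ((-(n : ℤ) : ℤ) : ZMod q) = ψ n := by
      push_cast
      exact DirichletCharacter.Even.eval_neg ψ _ he
    rw [e1]
    push_cast
    simp only [abs_neg, Nat.abs_cast, ofReal_natCast]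
    ring

lemma s4_L_eq (hq1 : 1 < q) (hψ : ψ.IsPrimitive) (hr : ψ⁻¹ = ψ) (he : ψ.Even) (s : ℂ) :
    ψ.LFunction s = (Gammaℝ s)⁻¹ * (((1 / q : ℝ) : ℂ) ^ (s / 2) * mellin (fun x : ℝ => s4T ψ (x / q)) (s / 2) / 2) := by
  have hq : (0 : ℝ) < q := Nat.cast_pos.mpr (NeZero.pos q)
  have hq' : ((1 / q : ℝ) : ℂ) ≠ 0 := by
    rw [ofReal_ne_zero]; positivity
  have hψ1 : ψ ≠ 1 := by
    rintro rfl
    have : DirichletCharacter.conductor (1 : DirichletCharacter ℂ q) = q := hψ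
    rw [DirichletCharacter.conductor_one] at this
    omega
  have hP := s4pair_strong ψ hq1 hψ hr he
  have hd1 : Differentiable ℂ ψ.LFunction := DirichletCharacter.differentiable_LFunction hψ1
  have hd2 : Differentiable ℂ (mellin (fun x : ℝ => s4T ψ (x / q))) := by
    have := hP.differentiable_Λ
    rwa [hP.Λ_eq] at this
  have hd3 : Differentiable ℂ (fun s : ℂ => (Gammaℝ s)⁻¹ * (((1 / q : ℝ) : ℂ) ^ (s / 2) * mellin (fun x : ℝ => s4T ψ (x / q)) (s / 2) / 2)) := by
    refine differentiable_Gammaℝ_inv.mul ?_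
    refine Differentiable.div_const (Differentiable.mul ?_ (hd2.comp (by fun_prop))) _
    exact Differentiable.const_cpow (by fun_prop) (Or.inl hq')
  have hA := (hd1.differentiableOn (s := Set.univ)).analyticOnNhd isOpen_univ
  have hB := (hd3.differentiableOn (s := Set.univ)).analyticOnNhd isOpen_univ
  refine hA.eqOn_of_preconnected_of_eventuallyEq hB isPreconnected_univ (Set.mem_univ (2 : ℂ)) ?_ (Set.mem_univ s)
  have hV : {z : ℂ | 1 < z.re} ∈ nhds (2 : ℂ) := (continuous_re.isOpen_preimage _ isOpen_Ioi).mem_nhds (by simp)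
  filter_upwards [hV] with z hz
  have hz : 1 < z.re := hz
  have h1 := s4_mellin_right ψ hq1 he z hz
  have h2 := mellin_comp_mul_left (s4T ψ) (z / 2) (a := 1 / q) (by positivity)
  have h3 : (fun x : ℝ => s4T ψ (x / q)) = fun t => s4T ψ (1 / q * t) := by
    ext t; congr 1; ring
  rw [h3, h2, h1, smul_eq_mul, cpow_neg]
  have h4 : ((1 / q : ℝ) : ℂ) ^ (z / 2) ≠ 0 := by
    rw [Ne, cpow_eq_zero_iff]; tauto
  have h5 : Gammaℝ z ≠ 0 := Gammaℝ_ne_zero_of_re_pos (by linarith)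
  field_simp

lemma s4_int_conv (hq1 : 1 < q) (hψ : ψ.IsPrimitive) (hr : ψ⁻¹ = ψ) (he : ψ.Even) (a : ℝ) :
    IntegrableOn (fun x : ℝ => ‖s4T ψ (x / q)‖ * x ^ (a - 1)) (Set.Ioi 0) := by
  have h := ((s4pair_strong ψ hq1 hψ hr he).hasMellin a).1
  have h2 := h.norm
  refine IntegrableOn.congr_fun h2 (fun x hx => ?_) measurableSet_Ioi
  simp only [norm_smul]
  rw [norm_cpow_eq_rpow_re_of_pos hx, mul_comm]
  simp [s4pair]

lemma s4_int_small (hψ : ψ.IsPrimitive) (hr : ψ⁻¹ = ψ) (he : ψ.Even) (a : ℝ) :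
    ∫ x in Set.Ioo (0:ℝ) 1, ‖s4T ψ (x / q)‖ * x ^ (a - 1) = ∫ x in Set.Ioi (1:ℝ), ‖s4T ψ (x / q)‖ * x ^ (1 / 2 - a - 1) := by
  have h := integral_comp_rpow_Ioi ((Set.Ioo (0:ℝ) 1).indicator fun x => ‖s4T ψ (x / q)‖ * x ^ (a - 1)) (p := -1) (by norm_num)
  rw [setIntegral_indicator measurableSet_Ioo, Set.inter_eq_right.mpr Set.Ioo_subset_Ioi_self] at h
  rw [← h]
  have h2 : ∫ x in Set.Ioi (1:ℝ), ‖s4T ψ (x / q)‖ * x ^ (1 / 2 - a - 1) = ∫ x in Set.Ioi (0:ℝ), (Set.Ioi (1:ℝ)).indicator (fun x => ‖s4T ψ (x / q)‖ * x ^ (1 / 2 - a - 1)) x := by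
    rw [setIntegral_indicator measurableSet_Ioi, Set.inter_eq_right.mpr (Set.Ioi_subset_Ioi zero_le_one)]
  rw [h2]
  refine setIntegral_congr_fun measurableSet_Ioi fun x hx => ?_
  have hx : 0 < x := hx
  simp only [smul_eq_mul, abs_neg, abs_one, one_mul]
  rw [Real.rpow_neg_one]
  by_cases h1 : 1 < x
  · rw [Set.indicator_of_mem (by exact ⟨by positivity, inv_lt_one_of_one_lt₀ h1⟩), Set.indicator_of_mem (by exact h1)]
    rw [← one_div, s4f_FE ψ hψ hr x hx, norm_mul, norm_mul, s4_eps ψ hψ hr he, one_mul, norm_real, Real.norm_of_nonneg (by positivity)]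
    rw [one_div x, Real.inv_rpow hx.le, ← Real.rpow_neg hx.le]
    have : x ^ (1 / 2 - a - 1) = x ^ (-1 - 1 : ℝ) * x ^ (1 / 2 : ℝ) * x ^ (-(a - 1)) := by
      rw [← Real.rpow_add hx, ← Real.rpow_add hx]; congr 1; ring
    rw [this]; ring
  · rw [Set.indicator_of_notMem, Set.indicator_of_notMem (by exact h1), mul_zero]
    rintro ⟨_, h3⟩
    exact h1 ((inv_lt_one₀ hx).mp h3)

lemma s4_L_bound (hq1 : 1 < q) (hψ : ψ.IsPrimitive) (hr : ψ⁻¹ = ψ) (he : ψ.Even) (s : ℂ) (σ' : ℝ)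
    (h1 : s.re ≤ σ') (h2 : 1 - s.re ≤ σ') :
    IntegrableOn (fun y : ℝ => ‖s4T ψ y‖ * y ^ (σ' / 2 - 1)) (Set.Ioi 0) ∧
    ‖ψ.LFunction s‖ ≤ ‖(Gammaℝ s)⁻¹‖ * (q : ℝ) ^ ((σ' - s.re) / 2) *
      ∫ y in Set.Ioi (1 / q : ℝ), ‖s4T ψ y‖ * y ^ (σ' / 2 - 1) := by
  have hq : (0 : ℝ) < q := Nat.cast_pos.mpr (NeZero.pos q)
  have hi := s4_int_conv ψ hq1 hψ hr he
  have hsub : Set.Ioi (1:ℝ) ⊆ Set.Ioi 0 := Set.Ioi_subset_Ioi zero_le_one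
  set J := ∫ x in Set.Ioi (1 : ℝ), ‖s4T ψ (x / q)‖ * x ^ (σ' / 2 - 1) with hJ
  have hle : ∀ a : ℝ, a ≤ σ' / 2 → ∫ x in Set.Ioi (1 : ℝ), ‖s4T ψ (x / q)‖ * x ^ (a - 1) ≤ J := by
    intro a ha
    refine setIntegral_mono_on ((hi a).mono_set hsub) ((hi _).mono_set hsub) measurableSet_Ioi fun x hx => ?_
    have hx : 1 < x := hx
    gcongr
    exact hx.le
  have hM : ‖mellin (fun x : ℝ => s4T ψ (x / q)) (s / 2)‖ ≤ 2 * J := by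
    have e1 : ‖mellin (fun x : ℝ => s4T ψ (x / q)) (s / 2)‖ ≤ ∫ x in Set.Ioi (0 : ℝ), ‖s4T ψ (x / q)‖ * x ^ (s.re / 2 - 1) := by
      rw [mellin]
      refine (norm_integral_le_integral_norm _).trans (le_of_eq ?_)
      refine setIntegral_congr_fun measurableSet_Ioi fun x hx => ?_
      simp only [norm_smul]
      rw [norm_cpow_eq_rpow_re_of_pos hx, mul_comm]
      simp
    have e2 : ∫ x in Set.Ioi (0 : ℝ), ‖s4T ψ (x / q)‖ * x ^ (s.re / 2 - 1) =
        (∫ x in Set.Ioo (0 : ℝ) 1, ‖s4T ψ (x / q)‖ * x ^ (s.re / 2 - 1)) + ∫ x in Set.Ioi (1 : ℝ), ‖s4T ψ (x / q)‖ * x ^ (s.re / 2 - 1) := by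
      rw [← integral_Ioc_eq_integral_Ioo, ← setIntegral_union Set.Ioc_disjoint_Ioi_same measurableSet_Ioi
        ((hi _).mono_set Set.Ioc_subset_Ioi_self) ((hi _).mono_set hsub), Set.Ioc_union_Ioi_eq_Ioi zero_le_one]
    rw [s4_int_small ψ hψ hr he] at e2
    have e3 := hle (s.re / 2) (by linarith)
    have e4 := hle (1 / 2 - s.re / 2) (by linarith)
    linarith
  have hscale : J = (q : ℝ) ^ (σ' / 2) * ∫ y in Set.Ioi (1 / q : ℝ), ‖s4T ψ y‖ * y ^ (σ' / 2 - 1) := by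
    have := integral_comp_mul_left_Ioi (fun y : ℝ => ‖s4T ψ y‖ * y ^ (σ' / 2 - 1)) 1 (b := 1 / q) (by positivity)
    rw [mul_one, smul_eq_mul] at this
    have e : ∫ x in Set.Ioi (1:ℝ), ‖s4T ψ (1 / q * x)‖ * (1 / q * x) ^ (σ' / 2 - 1) = (q : ℝ) ^ (-(σ' / 2 - 1)) * J := by
      rw [hJ, ← integral_const_mul]
      refine setIntegral_congr_fun measurableSet_Ioi fun x hx => ?_
      have hx : (1:ℝ) < x := hx
      rw [Real.mul_rpow (by positivity) (by linarith), one_div_mul_eq_div, one_div, Real.inv_rpow hq.le, ← Real.rpow_neg hq.le]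
      ring
    rw [e] at this
    have h3 : (q : ℝ) ^ (σ' / 2) = (q : ℝ) ^ (σ' / 2 - 1) * q := by
      rw [← Real.rpow_add_one hq.ne']; congr 1; ring
    have h4 : (q : ℝ) ^ (σ' / 2 - 1) * (q : ℝ) ^ (-(σ' / 2 - 1)) = 1 := by
      rw [← Real.rpow_add hq]; simp
    calc J = (q : ℝ) ^ (σ' / 2 - 1) * ((q : ℝ) ^ (-(σ' / 2 - 1)) * J) := by rw [← mul_assoc, h4, one_mul]
      _ = _ := by rw [this, h3]; simp; ring
  refine ⟨?_, ?_⟩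
  · have := (integrableOn_Ioi_comp_mul_left_iff (fun y : ℝ => ‖s4T ψ y‖ * y ^ (σ' / 2 - 1)) 0 (a := 1 / q) (by positivity)).mp ?_
    · rwa [mul_zero] at this
    · refine IntegrableOn.congr_fun ((hi (σ' / 2)).const_mul ((1 / q : ℝ) ^ (σ' / 2 - 1))) (fun x hx => ?_) measurableSet_Ioi
      have hx : (0:ℝ) < x := hx
      rw [Real.mul_rpow (by positivity) hx.le, one_div_mul_eq_div]
      ring
  · rw [s4_L_eq ψ hq1 hψ hr he s, norm_mul, norm_div, norm_mul, norm_cpow_eq_rpow_re_of_pos (by positivity), mul_assoc]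
    gcongr
    have e5 : (1 / q : ℝ) ^ (s / 2).re = (q : ℝ) ^ (-(s.re / 2)) := by
      rw [one_div, Real.inv_rpow hq.le, ← Real.rpow_neg hq.le]; simp
    have e6 : (q : ℝ) ^ ((σ' - s.re) / 2) = (q : ℝ) ^ (-(s.re / 2)) * (q : ℝ) ^ (σ' / 2) := by
      rw [← Real.rpow_add hq]; congr 1; ring
    rw [e5, e6, mul_assoc, ← hscale, mul_div_assoc]
    gcongr
    simp only [Complex.norm_ofNat]
    linarith

end s4B2

section s4D
open MeasureTheory

lemma s4T_eq {d : ℕ} (hd : Odd d) (ψ : DirichletCharacter ℂ (8 * d))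
    (h1 : ∀ n : ℕ, Odd n → ψ (n : ZMod (8 * d)) = ((jacobiSym (8 * d) n : ℤ) : ℂ))
    (h2 : ∀ n : ℕ, Even n → ψ (n : ZMod (8 * d)) = 0) (y : ℝ) (hy : 0 < y) :
    s4T ψ y = 2 * (s4th d y : ℂ) := by
  have : NeZero (8 * d) := ⟨by have := hd.pos; omega⟩
  have he := s4_even hd ψ h1
  have h := (s4_summable_int ψ y hy).hasSum.nat_add_neg
  have h0 : ψ ((0 : ℕ) : ZMod (8 * d)) = 0 := h2 0 (by simp)
  rw [Nat.cast_zero] at h0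
  simp only [Int.cast_zero, h0, zero_mul, add_zero] at h
  have h3 := (hasSum_ofReal.mpr (s4th_summable d y hy).hasSum).mul_left 2
  refine h.unique (h3.congr_fun fun n => ?_)
  have e1 : ψ ((-(n : ℤ) : ℤ) : ZMod (8 * d)) = ψ n := by
    push_cast
    exact DirichletCharacter.Even.eval_neg ψ _ he
  have e2 : ψ n = (((ZMod.χ₈ n * jacobiSym d n : ℤ)) : ℂ) := by
    rcases Nat.even_or_odd n with hn | hn
    · rw [h2 n hn]
      have : ZMod.χ₈ n = 0 := by
        rw [ZMod.χ₈_nat_eq_if_mod_eight, if_pos (Nat.even_iff.mp hn)]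
      simp [this]
    · rw [h1 n hn, s4_jac_eight n hn]
  rw [e1]
  simp only [Int.cast_natCast, e2, s4c]
  push_cast
  simp only [neg_sq]
  ring

lemma s4_term {d : ℕ} [NeZero (8 * d)] (hd : Odd d) (hsq : Squarefree d) (ψ : DirichletCharacter ℂ (8 * d))
    (h1 : ∀ n : ℕ, Odd n → ψ (n : ZMod (8 * d)) = ((jacobiSym (8 * d) n : ℤ) : ℂ))
    (h2 : ∀ n : ℕ, Even n → ψ (n : ZMod (8 * d)) = 0) (s : ℂ) (σ' X : ℝ) (h3 : s.re ≤ σ') (h4 : 1 - s.re ≤ σ')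
    (hX : (d : ℝ) ≤ X) :
    IntegrableOn (fun y : ℝ => |s4th d y| * y ^ (σ' / 2 - 1)) (Set.Ioi 0) ∧
    ‖ψ.LFunction s‖ ≤ 2 * ‖(Gammaℝ s)⁻¹‖ * (8 * X) ^ ((σ' - s.re) / 2) *
      ∫ y in Set.Ioi (1 / (8 * X) : ℝ), |s4th d y| * y ^ (σ' / 2 - 1) := by
  have hd0 : 0 < d := hd.pos
  have hdR : (0:ℝ) < d := by exact_mod_cast hd0
  have hX0 : 0 < X := hdR.trans_le hX
  have hr : ψ⁻¹ = ψ := MulChar.IsQuadratic.inv (fun x => s4_real hd ψ h1 h2 x)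
  obtain ⟨hi, hb⟩ := s4_L_bound ψ (by omega) (s4_primitive hd hsq ψ h1) hr (s4_even hd ψ h1) s σ' h3 h4
  have hn : ∀ y : ℝ, 0 < y → ‖s4T ψ y‖ = 2 * |s4th d y| := by
    intro y hy
    rw [s4T_eq hd ψ h1 h2 y hy, norm_mul, norm_real, Real.norm_eq_abs]
    simp
  have hI : IntegrableOn (fun y : ℝ => |s4th d y| * y ^ (σ' / 2 - 1)) (Set.Ioi 0) := by
    refine IntegrableOn.congr_fun (hi.const_mul (1 / 2)) (fun y hy => ?_) measurableSet_Ioi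
    rw [hn y hy]; ring
  refine ⟨hI, hb.trans ?_⟩
  have hq : (0:ℝ) < ((8 * d : ℕ) : ℝ) := by push_cast; positivity
  have e1 : ∫ y in Set.Ioi (1 / ((8 * d : ℕ) : ℝ)), ‖s4T ψ y‖ * y ^ (σ' / 2 - 1) = 2 * ∫ y in Set.Ioi (1 / ((8 * d : ℕ) : ℝ)), |s4th d y| * y ^ (σ' / 2 - 1) := by
    rw [← integral_const_mul]
    refine setIntegral_congr_fun measurableSet_Ioi fun y hy => ?_
    have hy : 1 / ((8 * d : ℕ) : ℝ) < y := hy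
    have : 0 < y := lt_trans (by positivity) hy
    rw [hn y this]; ring
  have e2 : ∫ y in Set.Ioi (1 / ((8 * d : ℕ) : ℝ)), |s4th d y| * y ^ (σ' / 2 - 1) ≤ ∫ y in Set.Ioi (1 / (8 * X) : ℝ), |s4th d y| * y ^ (σ' / 2 - 1) := by
    refine setIntegral_mono_set (hI.mono_set (Set.Ioi_subset_Ioi (by positivity))) ?_ ?_
    · refine (ae_restrict_iff' measurableSet_Ioi).mpr (Filter.Eventually.of_forall fun y hy => ?_)
      have hy : 1 / (8 * X) < y := hy
      have : 0 < y := lt_trans (by positivity) hy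
      simp only [Pi.zero_apply]
      positivity
    · refine (Set.Ioi_subset_Ioi ?_).eventuallyLE
      push_cast
      gcongr
  have e0 : 0 ≤ ∫ y in Set.Ioi (1 / ((8 * d : ℕ) : ℝ)), |s4th d y| * y ^ (σ' / 2 - 1) := by
    refine setIntegral_nonneg measurableSet_Ioi fun y hy => ?_
    have hy : 1 / ((8 * d : ℕ) : ℝ) < y := hy
    have : 0 < y := lt_trans (by positivity) hy
    positivity
  have e3 : ((8 * d : ℕ) : ℝ) ^ ((σ' - s.re) / 2) ≤ (8 * X) ^ ((σ' - s.re) / 2) := by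
    refine Real.rpow_le_rpow hq.le ?_ (by linarith)
    push_cast
    linarith
  rw [e1]
  calc _ ≤ ‖(Gammaℝ s)⁻¹‖ * (8 * X) ^ ((σ' - s.re) / 2) * (2 * ∫ y in Set.Ioi (1 / (8 * X) : ℝ), |s4th d y| * y ^ (σ' / 2 - 1)) := by
        gcongr
    _ = _ := by ring

noncomputable def s4g (η y : ℝ) : ℝ := if y ≤ 1 then y ^ (η - 1) else y ^ (-2 : ℝ)

lemma s4g_int (η : ℝ) (hη : 0 < η) : IntegrableOn (s4g η) (Set.Ioi 0) := by
  rw [← Set.Ioc_union_Ioi_eq_Ioi zero_le_one, integrableOn_union]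
  constructor
  · have h := (intervalIntegral.intervalIntegrable_rpow' (a := 0) (b := 1) (r := η - 1) (by linarith))
    rw [intervalIntegrable_iff_integrableOn_Ioc_of_le zero_le_one] at h
    refine h.congr_fun (fun y hy => ?_) measurableSet_Ioc
    rw [s4g, if_pos hy.2]
  · have h := integrableOn_Ioi_rpow_of_lt (a := -2) (c := 1) (by norm_num) one_pos
    refine h.congr_fun (fun y hy => ?_) measurableSet_Ioi
    rw [s4g, if_neg (not_le.mpr hy)]

lemma s4g_nonneg (η y : ℝ) (hy : 0 < y) : 0 ≤ s4g η y := by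
  rw [s4g]; split_ifs <;> positivity

lemma s4_moment_all (η : ℝ) (hη : 0 < η) (σ' : ℝ) (hσ' : 1 / 2 ≤ σ') : ∃ C : ℝ, 0 < C ∧ ∀ X y : ℝ, 1 ≤ X → 1 / (8 * X) < y →
    (∑ d ∈ Finset.Icc 1 ⌊X⌋₊, |s4th d y|) * y ^ (σ' / 2 - 1) ≤ C * X ^ (1 + 3 * η) * s4g η y := by
  obtain ⟨C₁, hC₁, k1⟩ := s4_moment_small η hη
  obtain ⟨C₂, hC₂, k2⟩ := s4_moment_large η hη (σ' / 2 + 1)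
  refine ⟨C₁ * 8 ^ (2 * η) + C₂, by positivity, fun X y hX hy => ?_⟩
  have hX0 : 0 < X := by linarith
  have hy0 : 0 < y := lt_trans (by positivity) hy
  by_cases h1 : y ≤ 1
  · rw [s4g, if_pos h1]
    have a1 : y ^ (σ' / 2 - 1) ≤ y ^ (-(3 / 4) : ℝ) := Real.rpow_le_rpow_of_exponent_ge hy0 h1 (by linarith)
    have a2 : y ^ (-(2 * η)) ≤ (8 * X) ^ (2 * η) := by
      rw [Real.rpow_neg hy0.le, ← Real.inv_rpow hy0.le]
      apply Real.rpow_le_rpow (by positivity) _ (by positivity)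
      rw [inv_le_comm₀ hy0 (by positivity)]
      simpa using hy.le
    have a3 : y ^ (-(1 / 4) - η) * y ^ (-(3 / 4) : ℝ) = y ^ (-(2 * η)) * y ^ (η - 1) := by
      rw [← Real.rpow_add hy0, ← Real.rpow_add hy0]; congr 1; ring
    have a4 : X ^ (1 + 3 * η) = X ^ (1 + η) * X ^ (2 * η) := by
      rw [← Real.rpow_add hX0]; congr 1; ring
    calc _ ≤ (C₁ * X ^ (1 + η) * y ^ (-(1 / 4) - η)) * y ^ (-(3 / 4) : ℝ) := by
          gcongr
          exact k1 X y hX hy.le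
      _ = C₁ * X ^ (1 + η) * (y ^ (-(2 * η)) * y ^ (η - 1)) := by rw [mul_assoc, a3]
      _ ≤ C₁ * X ^ (1 + η) * ((8 * X) ^ (2 * η) * y ^ (η - 1)) := by gcongr
      _ = (C₁ * 8 ^ (2 * η)) * X ^ (1 + 3 * η) * y ^ (η - 1) := by
          rw [Real.mul_rpow (by norm_num) hX0.le, a4]; ring
      _ ≤ _ := by
          gcongr
          linarith
  · rw [s4g, if_neg h1]
    have h1 : 1 ≤ y := (not_le.mp h1).le
    have a3 : y ^ (-(σ' / 2 + 1)) * y ^ (σ' / 2 - 1) = y ^ (-2 : ℝ) := by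
      rw [← Real.rpow_add hy0]; congr 1; ring
    calc _ ≤ (C₂ * X ^ (1 + η) * y ^ (-(σ' / 2 + 1))) * y ^ (σ' / 2 - 1) := by
          gcongr
          exact k2 X y hX h1
      _ = C₂ * X ^ (1 + η) * y ^ (-2 : ℝ) := by rw [mul_assoc, a3]
      _ ≤ _ := by
          gcongr
          · exact le_add_of_nonneg_left (by positivity)
          · linarith

end s4D

/-- Heath-Brown-type average bound for the first moment of
`L(σ+it, χ_{8d})` over odd squarefree `d ≤ X`.
The family `χ d` is the Kronecker character `(8d/·)` modulo `8d`, characterized by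
`χ d n = jacobiSym (8d) n` for odd `n` and `χ d n = 0` for even `n`. -/
theorem statement4
    (χ : (d : ℕ) → DirichletCharacter ℂ (8 * d))
    (hχ : ∀ d : ℕ, Odd d → Squarefree d →
      (∀ n : ℕ, Odd n → χ d (n : ZMod (8 * d)) = ((jacobiSym (8 * d) n : ℤ) : ℂ)) ∧
      (∀ n : ℕ, Even n → χ d (n : ZMod (8 * d)) = 0))
    (σ t : ℝ) (ε : ℝ) (hε : 0 < ε) :
    ∃ C : ℝ, 0 < C ∧ ∀ X : ℝ, 2 ≤ X →
      (∑ d ∈ Finset.Icc 1 ⌊X⌋₊,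
        if h : Odd d ∧ Squarefree d then
          haveI : NeZero (8 * d) := ⟨by rcases h.1 with ⟨k, rfl⟩; omega⟩
          ‖(χ d).LFunction ((σ : ℂ) + (t : ℂ) * Complex.I)‖ else 0)
        ≤ C * X ^ (max 1 (3 / 2 - σ) + ε) := by
  classical
  set s : ℂ := (σ : ℂ) + (t : ℂ) * Complex.I with hs
  have hre : s.re = σ := by simp [hs]
  set σ' := max σ (1 - σ) with hσ'
  have l1 : σ ≤ σ' := le_max_left _ _
  have l2 : 1 - σ ≤ σ' := le_max_right _ _
  obtain ⟨C, hC, hM⟩ := s4_moment_all (ε / 3) (by positivity) σ' (by linarith)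
  set K := ‖(Gammaℝ s)⁻¹‖ with hK
  have hK0 : 0 ≤ K := norm_nonneg _
  set J := ∫ y in Set.Ioi (0:ℝ), s4g (ε / 3) y with hJ
  have hJ0 : 0 ≤ J := MeasureTheory.setIntegral_nonneg measurableSet_Ioi fun y hy => s4g_nonneg _ y hy
  set ρ := (σ' - σ) / 2 with hρ
  have hexp : max 1 (3 / 2 - σ) + ε = ρ + (1 + 3 * (ε / 3)) := by
    have : max 1 (3 / 2 - σ) = ρ + 1 := by
      rw [hρ, hσ']
      rcases le_total σ (1 - σ) with h | h
      · rw [max_eq_right h, max_eq_right (by linarith)]; ring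
      · rw [max_eq_left h, max_eq_left (by linarith)]; ring
    rw [this]; ring
  refine ⟨2 * K * 8 ^ ρ * C * J + 1, by positivity, fun X hX => ?_⟩
  have hX0 : 0 < X := by linarith
  set h : ℕ → ℝ → ℝ := fun d y => if Odd d ∧ Squarefree d then |s4th d y| * y ^ (σ' / 2 - 1) else 0 with hh
  set S := Set.Ioi (1 / (8 * X) : ℝ) with hS
  have hS0 : S ⊆ Set.Ioi 0 := Set.Ioi_subset_Ioi (by positivity)
  have hterm : ∀ d ∈ Finset.Icc 1 ⌊X⌋₊, MeasureTheory.IntegrableOn (h d) S ∧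
      (if h : Odd d ∧ Squarefree d then
          haveI : NeZero (8 * d) := ⟨by rcases h.1 with ⟨k, rfl⟩; omega⟩
          ‖(χ d).LFunction s‖ else 0) ≤ 2 * K * (8 * X) ^ ρ * ∫ y in S, h d y := by
    intro d hd
    have hdX : (d : ℝ) ≤ X := (Nat.le_floor_iff hX0.le).mp (Finset.mem_Icc.mp hd).2
    by_cases hg : Odd d ∧ Squarefree d
    · have : NeZero (8 * d) := ⟨by rcases hg.1 with ⟨k, rfl⟩; omega⟩
      obtain ⟨b1, b2⟩ := s4_term hg.1 hg.2 (χ d) (hχ d hg.1 hg.2).1 (hχ d hg.1 hg.2).2 s σ' X (by rw [hre]; exact l1) (by rw [hre]; exact l2) hdX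
      have e : h d = fun y => |s4th d y| * y ^ (σ' / 2 - 1) := by
        ext y; simp only [hh, if_pos hg]
      rw [e, dif_pos hg]
      rw [hre] at b2
      exact ⟨b1.mono_set hS0, b2⟩
    · have e : h d = fun y => 0 := by
        ext y; simp only [hh, if_neg hg]
      rw [e, dif_neg hg]
      simp
  have hsum : ∑ d ∈ Finset.Icc 1 ⌊X⌋₊, ∫ y in S, h d y ≤ C * X ^ (1 + 3 * (ε / 3)) * J := by
    rw [← MeasureTheory.integral_finsetSum _ fun d hd => (hterm d hd).1]
    calc _ ≤ ∫ y in S, C * X ^ (1 + 3 * (ε / 3)) * s4g (ε / 3) y := by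
          refine MeasureTheory.setIntegral_mono_on ?_ ?_ measurableSet_Ioi fun y hy => ?_
          · exact MeasureTheory.integrable_finsetSum _ fun d hd => (hterm d hd).1
          · exact ((s4g_int _ (by positivity)).mono_set hS0).const_mul _
          · refine le_trans ?_ (hM X y (by linarith) hy)
            rw [Finset.sum_mul]
            refine Finset.sum_le_sum fun d _ => ?_
            have hy0 : 0 < y := hS0 hy
            simp only [hh]
            split_ifs
            · exact le_rfl
            · positivity
      _ = C * X ^ (1 + 3 * (ε / 3)) * ∫ y in S, s4g (ε / 3) y := MeasureTheory.integral_const_mul _ _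
      _ ≤ _ := by
          gcongr
          refine MeasureTheory.setIntegral_mono_set (s4g_int _ (by positivity)) ?_ hS0.eventuallyLE
          exact (MeasureTheory.ae_restrict_iff' measurableSet_Ioi).mpr (Filter.Eventually.of_forall fun y hy => s4g_nonneg _ y hy)
  calc _ ≤ ∑ d ∈ Finset.Icc 1 ⌊X⌋₊, 2 * K * (8 * X) ^ ρ * ∫ y in S, h d y := Finset.sum_le_sum fun d hd => (hterm d hd).2
    _ = 2 * K * (8 * X) ^ ρ * ∑ d ∈ Finset.Icc 1 ⌊X⌋₊, ∫ y in S, h d y := by rw [Finset.mul_sum]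
    _ ≤ 2 * K * (8 * X) ^ ρ * (C * X ^ (1 + 3 * (ε / 3)) * J) := by gcongr
    _ = 2 * K * 8 ^ ρ * C * J * X ^ (max 1 (3 / 2 - σ) + ε) := by
        rw [hexp, Real.rpow_add hX0 ρ, Real.mul_rpow (by norm_num) hX0.le]; ring
    _ ≤ _ := by
        gcongr
        linarith
end

section
/- For all σ ≥ 0 and t ∈ ℝ with σ+it ≠ 1, and every ε > 0, there is a constant C > 0 such that for all X ≥ 2: Σ_{1 ≤ n ≤ X, n odd} |L(σ+it, (·/n))| ≤ C·X^{max(1, 3/2−σ)+ε}. -/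
open Complex

namespace QM

lemma regroup (N : ℕ) [NeZero N] (f : ℤ → ℂ) (hf : Summable f) :
    ∑' n : ℤ, f n = ∑ j : ZMod N, ∑' q : ℤ, f (N * q + j.val) := by
  have h1 : ∑' n : ℤ, f n = ∑' p : ℤ × Fin N, f ((Int.divModEquiv N).symm p) :=
    ((Int.divModEquiv N).symm.tsum_eq f).symm
  have hs : Summable (fun p : ℤ × Fin N => f ((Int.divModEquiv N).symm p)) :=
    (Int.divModEquiv N).symm.summable_iff.mpr hf
  have hs' : Summable (fun p : Fin N × ℤ => f ((Int.divModEquiv N).symm (p.2, p.1))) :=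
    (Equiv.prodComm (Fin N) ℤ).summable_iff.mpr hs
  rw [h1, ← (Equiv.prodComm (Fin N) ℤ).tsum_eq]
  simp only [Equiv.prodComm_apply, Prod.swap]
  rw [hs'.tsum_prod, tsum_fintype]
  obtain ⟨n, rfl⟩ := Nat.exists_eq_succ_of_ne_zero (NeZero.ne N)
  refine Finset.sum_congr rfl fun j _ => ?_
  refine tsum_congr fun q => ?_
  congr 1
  simp [Int.divModEquiv]
  have e : ((ZMod.val (n := n.succ) j : ℕ) : ℤ) = ((Fin.val j : ℕ) : ℤ) := rfl
  rw [e]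
  ring

lemma summable_gauss (a : ℕ) {y : ℝ} (hy : 0 < y) :
    Summable (fun n : ℤ => |(n:ℝ)| ^ a * Real.exp (-Real.pi * n ^ 2 * y)) := by
  have h := summable_pow_mul_jacobiTheta₂_term_bound 0 hy a
  refine h.congr fun n => ?_
  simp
  left; ring_nf

lemma summable_gauss_nat (a : ℕ) {y : ℝ} (hy : 0 < y) :
    Summable (fun n : ℕ => (n:ℝ) ^ a * Real.exp (-Real.pi * n ^ 2 * y)) := by
  have := (summable_gauss a hy).comp_injective Nat.cast_injective
  refine this.congr fun n => ?_
  simp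

lemma gauss_sum_char {N : ℕ} [NeZero N] {χ : DirichletCharacter ℂ N} (hχ : χ.IsPrimitive) (n : ℤ) :
    ∑ j : ZMod N, χ j * cexp (2 * Real.pi * I * ((j.val : ℝ) / N : ℝ) * n) =
      χ⁻¹ n * gaussSum χ ZMod.stdAddChar := by
  have h := hχ.fourierTransform_eq_inv_mul_gaussSum (-(n : ZMod N))
  rw [neg_neg] at h
  rw [← h, ZMod.dft_apply]
  refine Finset.sum_congr rfl fun j _ => ?_
  rw [smul_eq_mul, mul_comm]
  congr 1
  have : -(j * -(n : ZMod N)) = (((j.val : ℤ) * n : ℤ) : ZMod N) := by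
    simp
  rw [this, ZMod.stdAddChar_coe]
  congr 1
  push_cast
  ring

lemma norm_gaussSum {N : ℕ} [NeZero N] {χ : DirichletCharacter ℂ N} (hχ : χ.IsPrimitive) :
    ‖gaussSum χ ZMod.stdAddChar‖ = Real.sqrt N := by
  have h1 := congrFun (ZMod.dft_dft (χ : ZMod N → ℂ)) (-1)
  have h2 : ZMod.dft (χ : ZMod N → ℂ) = fun k => χ⁻¹ (-k) * gaussSum χ ZMod.stdAddChar :=
    funext fun k => hχ.fourierTransform_eq_inv_mul_gaussSum k
  rw [h2, ZMod.dft_mul_const] at h1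
  simp only [neg_neg, map_one, smul_eq_mul, mul_one] at h1
  have h3 : ZMod.dft (fun k => χ⁻¹ (-k)) (-1) = star (gaussSum χ ZMod.stdAddChar) := by
    rw [star_gaussSum_eq, ZMod.dft_comp_neg]
    simp only [neg_neg]
    rw [ZMod.dft_apply, gaussSum]
    refine Finset.sum_congr rfl fun j _ => ?_
    rw [mul_one, smul_eq_mul, mul_comm, AddChar.inv_apply]
  rw [h3] at h1
  have h4 : ‖gaussSum χ ZMod.stdAddChar‖ ^ 2 = N := by
    have := congrArg norm h1
    rw [norm_mul, norm_star] at this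
    simpa [sq] using this
  rw [← h4, Real.sqrt_sq (norm_nonneg _)]

/-- bilateral theta -/
noncomputable def bil (a : ℕ) (f : ℤ → ℂ) (y : ℝ) : ℂ :=
  ∑' n : ℤ, (n:ℂ) ^ a * f n * (Real.exp (-Real.pi * n ^ 2 * y) : ℝ)

lemma summable_bil (a : ℕ) (f : ℤ → ℂ) (hf : ∀ n, ‖f n‖ ≤ 1) {y : ℝ} (hy : 0 < y) :
    Summable (fun n : ℤ => (n:ℂ) ^ a * f n * (Real.exp (-Real.pi * n ^ 2 * y) : ℝ)) := by
  refine Summable.of_norm_bounded (summable_gauss a hy) fun n => ?_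
  rw [norm_mul, norm_mul, norm_pow, Complex.norm_real, Complex.norm_intCast,
    Real.norm_of_nonneg (Real.exp_pos _).le]
  gcongr
  exact mul_le_of_le_one_right (by positivity) (hf n)

lemma norm_char_le {N : ℕ} (χ : DirichletCharacter ℂ N) (n : ZMod N) : ‖χ n‖ ≤ 1 :=
  χ.norm_le_one n

lemma bil_fe0 {N : ℕ} [NeZero N] {χ : DirichletCharacter ℂ N} (hχ : χ.IsPrimitive)
    {x : ℝ} (hx : 0 < x) :
    bil 0 (fun n => χ n) (x / N ^ 2) =
      (1 / x ^ (1/2 : ℝ) : ℝ) * (gaussSum χ ZMod.stdAddChar * bil 0 (fun n => χ⁻¹ n) (1 / x)) := by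
  have hN : (N : ℝ) ≠ 0 := NeZero.ne _
  have hN0 : (0:ℝ) < N := Nat.cast_pos.mpr (NeZero.pos N)
  have hx' : 0 < x / (N:ℝ) ^ 2 := by positivity
  have hx1 : 0 < 1 / x := by positivity
  rw [bil, regroup N _ (summable_bil 0 _ (fun n => norm_char_le χ n) hx')]
  have e1 : ∀ j : ZMod N, ∑' q : ℤ, (((N * q + j.val : ℤ) : ℂ) ^ 0 * χ ((N * q + j.val : ℤ) : ZMod N) *
      (Real.exp (-Real.pi * ((N * q + j.val : ℤ) : ℝ) ^ 2 * (x / N ^ 2)) : ℝ)) =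
      (1 / x ^ (1/2 : ℝ) : ℝ) *
       (χ j * ∑' n : ℤ, cexp (2 * Real.pi * I * ((j.val : ℝ) / N : ℝ) * n) * (Real.exp (-Real.pi * n ^ 2 * (1 / x)) : ℝ)) := by
    intro j
    rw [(HurwitzZeta.hasSum_int_cosKernel _ hx1).tsum_eq, mul_left_comm, ← ofReal_mul,
      ← HurwitzZeta.evenKernel_functional_equation, ← (HurwitzZeta.hasSum_int_evenKernel _ hx).tsum_eq,
      ofReal_tsum, ← tsum_mul_left]
    refine tsum_congr fun q => ?_
    have e2 : -Real.pi * ((N * q + j.val : ℤ) : ℝ) ^ 2 * (x / N ^ 2) = -Real.pi * (q + (j.val : ℝ) / N) ^ 2 * x := by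
      push_cast
      field_simp
    rw [pow_zero, one_mul, e2]
    simp
  simp only [e1]
  rw [← Finset.mul_sum]
  congr 1
  have hsum : ∀ j : ZMod N, Summable (fun n : ℤ => χ j * (cexp (2 * Real.pi * I * ((j.val : ℝ) / N : ℝ) * n) * (Real.exp (-Real.pi * n ^ 2 * (1 / x)) : ℝ))) :=
    fun j => (HurwitzZeta.hasSum_int_cosKernel _ hx1).summable.mul_left _
  rw [Finset.sum_congr rfl (fun j _ => (tsum_mul_left (a := χ j)).symm)]
  rw [← Summable.tsum_finsetSum (fun j _ => hsum j), bil, ← tsum_mul_left]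
  refine tsum_congr fun n => ?_
  have e4 : ∀ j : ZMod N, χ j * (cexp (2 * Real.pi * I * ((j.val : ℝ) / N : ℝ) * n) * (Real.exp (-Real.pi * n ^ 2 * (1 / x)) : ℝ)) =
    (χ j * cexp (2 * Real.pi * I * ((j.val : ℝ) / N : ℝ) * n)) * ((Real.exp (-Real.pi * n ^ 2 * (1 / x)) : ℝ)) := fun j => by ring
  simp_rw [e4]
  rw [← Finset.sum_mul, gauss_sum_char hχ]
  ring

lemma bil_fe1 {N : ℕ} [NeZero N] {χ : DirichletCharacter ℂ N} (hχ : χ.IsPrimitive)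
    {x : ℝ} (hx : 0 < x) :
    bil 1 (fun n => χ n) (x / N ^ 2) =
      (N * (1 / x ^ (3/2 : ℝ)) : ℝ) * (-I * gaussSum χ ZMod.stdAddChar * bil 1 (fun n => χ⁻¹ n) (1 / x)) := by
  have hN : (N : ℝ) ≠ 0 := NeZero.ne _
  have hN0 : (0:ℝ) < N := Nat.cast_pos.mpr (NeZero.pos N)
  have hx' : 0 < x / (N:ℝ) ^ 2 := by positivity
  have hx1 : 0 < 1 / x := by positivity
  rw [bil, regroup N _ (summable_bil 1 _ (fun n => norm_char_le χ n) hx')]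
  have e1 : ∀ j : ZMod N, ∑' q : ℤ, (((N * q + j.val : ℤ) : ℂ) ^ 1 * χ ((N * q + j.val : ℤ) : ZMod N) *
      (Real.exp (-Real.pi * ((N * q + j.val : ℤ) : ℝ) ^ 2 * (x / N ^ 2)) : ℝ)) =
      (N * (1 / x ^ (3/2 : ℝ)) : ℝ) *
       (χ j * ∑' n : ℤ, -I * n * cexp (2 * Real.pi * I * ((j.val : ℝ) / N : ℝ) * n) * (Real.exp (-Real.pi * n ^ 2 * (1 / x)) : ℝ)) := by
    intro j
    rw [(HurwitzZeta.hasSum_int_sinKernel _ hx1).tsum_eq, mul_left_comm, ← ofReal_mul, mul_assoc,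
      ← HurwitzZeta.oddKernel_functional_equation, ← (HurwitzZeta.hasSum_int_oddKernel _ hx).tsum_eq,
      ofReal_mul, ofReal_tsum, ← tsum_mul_left, ← tsum_mul_left]
    refine tsum_congr fun q => ?_
    have e2 : -Real.pi * ((N * q + j.val : ℤ) : ℝ) ^ 2 * (x / N ^ 2) = -Real.pi * (q + (j.val : ℝ) / N) ^ 2 * x := by
      push_cast
      field_simp
    have e3 : (((N * q + j.val : ℤ) : ℂ)) = ((N * (q + (j.val : ℝ) / N) : ℝ) : ℂ) := by
      rw [← Complex.ofReal_intCast]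
      congr 1
      push_cast
      field_simp
    rw [e2, e3]
    simp
    ring
  simp only [e1]
  rw [← Finset.mul_sum]
  congr 1
  have hsum : ∀ j : ZMod N, Summable (fun n : ℤ => χ j * (-I * n * cexp (2 * Real.pi * I * ((j.val : ℝ) / N : ℝ) * n) * (Real.exp (-Real.pi * n ^ 2 * (1 / x)) : ℝ))) :=
    fun j => (HurwitzZeta.hasSum_int_sinKernel _ hx1).summable.mul_left _
  rw [Finset.sum_congr rfl (fun j _ => (tsum_mul_left (a := χ j)).symm)]
  rw [← Summable.tsum_finsetSum (fun j _ => hsum j), bil, ← tsum_mul_left]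
  refine tsum_congr fun n => ?_
  have e4 : ∀ j : ZMod N, χ j * (-I * n * cexp (2 * Real.pi * I * ((j.val : ℝ) / N : ℝ) * n) * (Real.exp (-Real.pi * n ^ 2 * (1 / x)) : ℝ)) =
    (χ j * cexp (2 * Real.pi * I * ((j.val : ℝ) / N : ℝ) * n)) * (-I * n * (Real.exp (-Real.pi * n ^ 2 * (1 / x)) : ℝ)) := fun j => by ring
  simp_rw [e4]
  rw [← Finset.sum_mul, gauss_sum_char hχ]
  ring

/-- unilateral theta -/
noncomputable def th (a : ℕ) (f : ℕ → ℂ) (y : ℝ) : ℂ :=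
  ∑' n : ℕ, (n:ℂ) ^ a * f n * (Real.exp (-Real.pi * n ^ 2 * y) : ℝ)

lemma summable_th (a : ℕ) (f : ℕ → ℂ) (hf : ∀ n, ‖f n‖ ≤ 1) {y : ℝ} (hy : 0 < y) :
    Summable (fun n : ℕ => (n:ℂ) ^ a * f n * (Real.exp (-Real.pi * n ^ 2 * y) : ℝ)) := by
  refine Summable.of_norm_bounded (summable_gauss_nat a hy) fun n => ?_
  rw [norm_mul, norm_mul, norm_pow, Complex.norm_real, Complex.norm_natCast,
    Real.norm_of_nonneg (Real.exp_pos _).le]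
  gcongr
  exact mul_le_of_le_one_right (by positivity) (hf n)

/-- parity condition -/
lemma bil_eq_th {N : ℕ} (hN : N ≠ 1) (a : ℕ) (χ : DirichletCharacter ℂ N) (hp : χ (-1) = (-1) ^ a)
    {y : ℝ} (hy : 0 < y) :
    bil a (fun n => χ n) y = 2 * th a (fun n => χ n) y := by
  have h := (summable_bil a _ (fun n => norm_char_le χ n) hy).hasSum.nat_add_neg.tsum_eq
  have h0 : χ 0 = 0 := χ.map_zero' hN
  rw [bil]
  simp only [Int.cast_zero, h0, mul_zero, zero_mul, add_zero] at h
  rw [← h, th, ← tsum_mul_left]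
  refine tsum_congr fun n => ?_
  have e : χ ((-(n:ℤ) : ℤ) : ZMod N) = (-1) ^ a * χ n := by
    rw [← hp, ← map_mul]; simp
  rw [e]
  have e2 : (((-(n:ℤ) : ℤ) : ℂ)) ^ a * ((-1) ^ a * χ n) = (n:ℂ) ^ a * χ n := by
    rw [← mul_assoc, ← mul_pow]; simp
  rw [e2]
  simp
  ring

lemma norm_th_fe {N : ℕ} [NeZero N] (hN : N ≠ 1) {a : ℕ} (ha : a = 0 ∨ a = 1)
    {χ : DirichletCharacter ℂ N} (hχ : χ.IsPrimitive) (hp : χ (-1) = (-1) ^ a)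
    {y : ℝ} (hy : 0 < y) :
    ‖th a (fun n => χ n) y‖ = (N * y) ^ (-(1/2 + a : ℝ)) * ‖th a (fun n => χ⁻¹ n) (1 / (N ^ 2 * y))‖ := by
  have hN0 : (0:ℝ) < N := Nat.cast_pos.mpr (NeZero.pos N)
  have hx : 0 < (N:ℝ) ^ 2 * y := by positivity
  have hx1 : 0 < 1 / ((N:ℝ) ^ 2 * y) := by positivity
  have hp' : χ⁻¹ (-1) = (-1) ^ a := by
    rw [MulChar.inv_apply_eq_inv', hp]
    rcases ha with rfl | rfl <;> norm_num
  have key : ‖bil a (fun n => χ n) y‖ = (N * y) ^ (-(1/2 + a : ℝ)) * ‖bil a (fun n => χ⁻¹ n) (1 / (N ^ 2 * y))‖ := by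
    have ey : y = (N:ℝ) ^ 2 * y / N ^ 2 := by field_simp
    rcases ha with rfl | rfl
    · conv_lhs => rw [ey]
      rw [bil_fe0 hχ hx, norm_mul, norm_mul, norm_gaussSum hχ, Complex.norm_real,
        Real.norm_of_nonneg (by positivity), ← mul_assoc]
      congr 1
      rw [Nat.cast_zero, add_zero, Real.rpow_neg (by positivity), Real.mul_rpow (by positivity) hy.le,
        Real.mul_rpow (by positivity) hy.le, ← Real.sqrt_eq_rpow, ← Real.sqrt_eq_rpow,
        Real.sqrt_sq hN0.le, ← Real.sqrt_eq_rpow]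
      have : Real.sqrt N ≠ 0 := by positivity
      have : Real.sqrt y ≠ 0 := by positivity
      field_simp
      rw [Real.sq_sqrt hN0.le]
    · conv_lhs => rw [ey]
      rw [bil_fe1 hχ hx, norm_mul, norm_mul, norm_mul, norm_gaussSum hχ, Complex.norm_real,
        Real.norm_of_nonneg (by positivity), ← mul_assoc]
      congr 1
      rw [Nat.cast_one, Real.rpow_neg (by positivity), Real.mul_rpow (by positivity) hy.le,
        Real.mul_rpow (by positivity) hy.le, ← Real.rpow_natCast, ← Real.rpow_mul hN0.le, Real.sqrt_eq_rpow,
        norm_neg, norm_I, one_mul]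
      have e1 : (1/2 + 1 : ℝ) = 3/2 := by norm_num
      have e2 : (((2:ℕ):ℝ) * (3/2) : ℝ) = 3/2 + 3/2 := by norm_num
      rw [e1, e2, Real.rpow_add hN0]
      have h5 : (N:ℝ) ^ (3/2 : ℝ) = N * N ^ (1/2 : ℝ) := by
        rw [← e1, Real.rpow_add hN0, Real.rpow_one, mul_comm]
      have : (N:ℝ) ^ (1/2 : ℝ) ≠ 0 := by positivity
      have : y ^ (3/2 : ℝ) ≠ 0 := by positivity
      rw [h5]
      field_simp
  rw [bil_eq_th hN a χ hp hy, bil_eq_th hN a χ⁻¹ hp' hx1, norm_mul, norm_mul] at key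
  have : ‖(2:ℂ)‖ = 2 := by simp
  rw [this] at key
  linarith

end QM
open Complex

namespace QM
open MeasureTheory Set Filter Topology Asymptotics

lemma exp_neg_le {A : ℝ} (hA : 0 < A) {u : ℝ} (hu : 0 < u) :
    Real.exp (-u) ≤ A ^ A * u ^ (-A) := by
  have h1 : u / A ≤ Real.exp (u / A) := by
    have := Real.add_one_le_exp (u / A); linarith
  have h2 : (u / A) ^ A ≤ Real.exp u := by
    calc (u / A) ^ A ≤ (Real.exp (u / A)) ^ A := Real.rpow_le_rpow (by positivity) h1 hA.le
      _ = Real.exp u := by rw [← Real.exp_mul]; congr 1; field_simp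
  rw [Real.div_rpow hu.le hA.le, div_le_iff₀ (by positivity)] at h2
  rw [Real.exp_neg, Real.rpow_neg hu.le, ← div_eq_mul_inv, inv_le_comm₀ (Real.exp_pos _) (by positivity), inv_div,
    div_le_iff₀ (by positivity)]
  exact h2

/-- pointwise bound for gaussian weights -/
lemma gauss_le {A : ℝ} (hA : 0 < A) : ∃ C : ℝ, 0 < C ∧ ∀ (a n : ℕ) (y : ℝ), 0 < y → n ≠ 0 →
    (n:ℝ) ^ a * Real.exp (-Real.pi * n ^ 2 * y) ≤ C * y ^ (-A) * (n:ℝ) ^ ((a:ℝ) - 2 * A) := by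
  refine ⟨A ^ A * Real.pi ^ (-A), by positivity, fun a n y hy hn => ?_⟩
  have hn0 : (0:ℝ) < n := by positivity
  have h := exp_neg_le hA (u := Real.pi * n ^ 2 * y) (by positivity)
  have e : -(Real.pi * n ^ 2 * y) = -Real.pi * n ^ 2 * y := by ring
  rw [e] at h
  calc (n:ℝ) ^ a * Real.exp (-Real.pi * n ^ 2 * y) ≤ (n:ℝ) ^ a * (A ^ A * (Real.pi * n ^ 2 * y) ^ (-A)) := by gcongr
    _ = _ := by
      rw [Real.mul_rpow (by positivity) hy.le, Real.mul_rpow (by positivity) (by positivity),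
        ← Real.rpow_natCast (n:ℝ) 2, ← Real.rpow_mul hn0.le, Real.rpow_sub hn0, Real.rpow_natCast]
      have : (n:ℝ) ^ (((2:ℕ):ℝ) * -A) = ((n:ℝ) ^ (2 * A))⁻¹ := by
        rw [← Real.rpow_neg hn0.le]; congr 1; push_cast; ring
      rw [this]
      field_simp

lemma norm_th_le (a : ℕ) {A : ℝ} (hA : (a + 1 : ℝ) / 2 < A) : ∃ C : ℝ, 0 < C ∧ ∀ (f : ℕ → ℂ),
    (∀ n, ‖f n‖ ≤ 1) → f 0 = 0 → ∀ y : ℝ, 0 < y → ‖th a f y‖ ≤ C * y ^ (-A) := by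
  have hA0 : 0 < A := lt_trans (by positivity) hA
  obtain ⟨C, hC, h⟩ := gauss_le hA0
  have hs : Summable (fun n : ℕ => (n:ℝ) ^ ((a:ℝ) - 2 * A)) := Real.summable_nat_rpow.mpr (by linarith)
  have hs0 : 0 ≤ ∑' n : ℕ, (n:ℝ) ^ ((a:ℝ) - 2 * A) := tsum_nonneg fun n => by positivity
  refine ⟨C * (∑' n : ℕ, (n:ℝ) ^ ((a:ℝ) - 2 * A) + 1), by positivity, fun f hf h0 y hy => ?_⟩
  have hb : ∀ n : ℕ, ‖(n:ℂ) ^ a * f n * (Real.exp (-Real.pi * n ^ 2 * y) : ℝ)‖ ≤ C * y ^ (-A) * (n:ℝ) ^ ((a:ℝ) - 2 * A) := by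
    intro n
    rcases eq_or_ne n 0 with rfl | hn
    · rw [h0]; simp; positivity
    · refine le_trans ?_ (h a n y hy hn)
      rw [norm_mul, norm_mul, norm_pow, Complex.norm_real, Complex.norm_natCast,
        Real.norm_of_nonneg (Real.exp_pos _).le]
      gcongr
      exact mul_le_of_le_one_right (by positivity) (hf n)
  have := tsum_of_norm_bounded (hs.mul_left (C * y ^ (-A))).hasSum hb
  rw [tsum_mul_left] at this
  refine this.trans ?_
  have : 0 < C * y ^ (-A) := by positivity
  nlinarith

lemma continuousOn_th (a : ℕ) (f : ℕ → ℂ) (hf : ∀ n, ‖f n‖ ≤ 1) : ContinuousOn (th a f) (Ioi 0) := by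
  intro y hy
  have hy : 0 < y := hy
  have hy2 : 0 < y / 2 := by positivity
  have : ContinuousOn (th a f) (Ioi (y / 2)) := by
    refine continuousOn_tsum (fun i => by fun_prop) (summable_gauss_nat a hy2) fun n x hx => ?_
    have hx : y / 2 < x := hx
    rw [norm_mul, norm_mul, norm_pow, Complex.norm_real, Complex.norm_natCast,
      Real.norm_of_nonneg (Real.exp_pos _).le]
    refine mul_le_mul (mul_le_of_le_one_right (by positivity) (hf n)) ?_ (by positivity) (by positivity)
    apply Real.exp_le_exp.mpr
    have : 0 ≤ Real.pi * (n:ℝ) ^ 2 := by positivity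
    nlinarith
  exact (this.continuousAt (Ioi_mem_nhds (by linarith))).continuousWithinAt

section prim
variable {N : ℕ} [NeZero N] (hN : N ≠ 1) {a : ℕ} (ha : a = 0 ∨ a = 1)
    {χ : DirichletCharacter ℂ N} (hχ : χ.IsPrimitive) (hp : χ (-1) = (-1) ^ a)

include hN in
lemma th_bound_top (A : ℝ) : th a (fun n => χ n) =O[atTop] (fun y : ℝ => y ^ (-A)) := by
  obtain ⟨C, hC, h⟩ := norm_th_le a (A := max A ((a+1)/2 + 1)) (by
    have := le_max_right A ((a+1)/2 + 1 : ℝ); linarith)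
  refine IsBigO.of_bound C ?_
  filter_upwards [eventually_ge_atTop 1] with y hy
  have hy0 : 0 < y := by linarith
  refine (h _ (fun n => norm_char_le χ n) (by simpa using χ.map_zero' hN) y hy0).trans ?_
  rw [Real.norm_of_nonneg (by positivity)]
  gcongr
  exact le_max_left _ _

include hN ha hχ hp in
lemma th_bound_zero (b : ℝ) : th a (fun n => χ n) =O[𝓝[>] 0] (fun y : ℝ => y ^ (-b)) := by
  set A := max (1/2 + a - b) ((a+1)/2 + 1 : ℝ) with hA
  obtain ⟨C, hC, h⟩ := norm_th_le a (A := A) (by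
    have := le_max_right (1/2 + a - b) ((a+1)/2 + 1 : ℝ); linarith)
  have hN0 : (0:ℝ) < N := Nat.cast_pos.mpr (NeZero.pos N)
  refine IsBigO.of_bound ((N:ℝ) ^ (-(1/2 + a : ℝ)) * (C * ((N:ℝ) ^ 2) ^ A)) ?_
  have : Ioo (0:ℝ) 1 ∈ 𝓝[>] (0:ℝ) := Ioo_mem_nhdsGT (by norm_num)
  filter_upwards [this] with y hy
  have hy0 : 0 < y := hy.1
  rw [norm_th_fe hN ha hχ hp hy0]
  have h1 := h (fun n => χ⁻¹ n) (fun n => norm_char_le χ⁻¹ n) (by simpa using χ⁻¹.map_zero' hN) (1 / (N ^ 2 * y)) (by positivity)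
  rw [Real.norm_of_nonneg (by positivity : 0 ≤ y ^ (-b))]
  have h2 : (1 / ((N:ℝ) ^ 2 * y)) ^ (-A) = ((N:ℝ)^2) ^ A * y ^ A := by
    rw [one_div, Real.inv_rpow (by positivity), ← Real.rpow_neg (by positivity), neg_neg,
      Real.mul_rpow (by positivity) hy0.le]
  rw [h2] at h1
  have h3 : y ^ (-(1/2 + a : ℝ)) * y ^ A ≤ y ^ (-b) := by
    rw [← Real.rpow_add hy0]
    apply Real.rpow_le_rpow_of_exponent_ge hy0 hy.2.le
    have := le_max_left (1/2 + a - b) ((a+1)/2 + 1 : ℝ)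
    linarith
  calc (N * y) ^ (-(1/2 + a : ℝ)) * ‖th a (fun n => χ⁻¹ n) (1 / (N ^ 2 * y))‖
      ≤ (N * y) ^ (-(1/2 + a : ℝ)) * (C * (((N:ℝ)^2) ^ A * y ^ A)) := by gcongr
    _ = ((N:ℝ) ^ (-(1/2 + a : ℝ)) * (C * ((N:ℝ) ^ 2) ^ A)) * (y ^ (-(1/2 + a : ℝ)) * y ^ A) := by
        rw [Real.mul_rpow hN0.le hy0.le]; ring
    _ ≤ _ := by gcongr

lemma locInt_th : LocallyIntegrableOn (th a (fun n => χ n)) (Ioi 0) :=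
  (continuousOn_th a _ (fun n => norm_char_le χ n)).locallyIntegrableOn measurableSet_Ioi

include hN ha hχ hp in
lemma mellin_conv (w : ℂ) : MellinConvergent (th a (fun n => χ n)) w :=
  mellinConvergent_of_isBigO_rpow locInt_th (th_bound_top hN (w.re + 1)) (by linarith)
    (th_bound_zero hN ha hχ hp (w.re - 1)) (by linarith)

include hN ha hχ hp in
lemma mellin_diff (w : ℂ) : DifferentiableAt ℂ (mellin (th a (fun n => χ n))) w :=
  mellin_differentiableAt_of_isBigO_rpow locInt_th (th_bound_top hN (w.re + 1)) (by linarith)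
    (th_bound_zero hN ha hχ hp (w.re - 1)) (by linarith)

include ha hp in
lemma gammaFactor_eq (s : ℂ) : χ.gammaFactor s = Gammaℝ (s + a) := by
  rcases ha with rfl | rfl
  · have : χ.Even := by simpa [DirichletCharacter.Even] using hp
    rw [this.gammaFactor_def]; simp
  · have : χ.Odd := by simpa [DirichletCharacter.Odd] using hp
    rw [this.gammaFactor_def]; simp

include hN in
lemma mellin_LSeries {s : ℂ} (hs : 1 < s.re) :
    mellin (th a (fun n => χ n)) ((s + a) / 2) = Gammaℝ (s + a) * LSeries (fun n => χ n) s := by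
  have h0 : χ 0 = 0 := χ.map_zero' hN
  have hre : ((s + a) / 2).re = (s.re + a) / 2 := by simp
  have hpos : ∀ n : ℕ, n ≠ 0 → (((n:ℝ) ^ 2 : ℝ) : ℂ) ^ ((s + a) / 2) = (n:ℂ) ^ s * (n:ℂ) ^ a := by
    intro n hn
    have hn' : (n:ℂ) ≠ 0 := by exact_mod_cast hn
    rw [← cpow_natCast, ← cpow_add _ _ hn']
    have : (((n:ℝ) ^ 2 : ℝ) : ℂ) = ((n:ℝ):ℂ) * ((n:ℝ):ℂ) := by push_cast; ring
    rw [this, mul_cpow_ofReal_nonneg (by positivity) (by positivity), ofReal_natCast, ← cpow_add _ _ hn']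
    congr 1; ring
  have h := hasSum_mellin_pi_mul (a := fun n : ℕ => (n:ℂ) ^ a * χ n) (q := fun n : ℕ => (n:ℝ) ^ 2)
    (F := th a (fun n => χ n)) (s := (s + a) / 2) (fun n => by
      rcases eq_or_ne n 0 with rfl | hn
      · left; simp [h0]
      · right; positivity) (by rw [hre]; have : (0:ℝ) ≤ a := by positivity
                               linarith)
    (fun t ht => (summable_th a _ (fun n => norm_char_le χ n) ht).hasSum)
    (by
      refine Summable.of_nonneg_of_le (fun n => by positivity) (fun n => ?_) (Real.summable_one_div_nat_rpow.mpr hs)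
      rcases eq_or_ne n 0 with rfl | hn
      · simp [h0]; positivity
      · have hn0 : (0:ℝ) < n := by positivity
        rw [hre, norm_mul, norm_pow, Complex.norm_natCast, ← Real.rpow_natCast (n:ℝ) 2, ← Real.rpow_mul hn0.le]
        have : ((2:ℕ):ℝ) * ((s.re + a) / 2) = s.re + a := by push_cast; ring
        rw [this, Real.rpow_add hn0, Real.rpow_natCast]
        have := norm_char_le χ (n : ZMod N)
        rw [div_le_div_iff₀ (by positivity) (by positivity)]
        have : 0 ≤ (n:ℝ) ^ a * n ^ s.re := by positivity
        nlinarith)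
  rw [← h.tsum_eq, LSeries, ← tsum_mul_left]
  refine tsum_congr fun n => ?_
  rcases eq_or_ne n 0 with rfl | hn
  · simp [h0]
  · have hn' : (n:ℂ) ≠ 0 := by exact_mod_cast hn
    rw [LSeries.term_of_ne_zero hn, hpos n hn, Gammaℝ_def, neg_div]
    have : (n:ℂ) ^ a ≠ 0 := pow_ne_zero _ hn'
    field_simp

include hN ha hχ hp in
lemma LFunction_eq_mellin (s : ℂ) :
    χ.LFunction s = mellin (th a (fun n => χ n)) ((s + a) / 2) / Gammaℝ (s + a) := by
  have hχ1 : χ ≠ 1 := by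
    rintro rfl
    apply hN
    have := hχ
    rw [DirichletCharacter.isPrimitive_def, DirichletCharacter.conductor_one] at this
    exact this.symm
  rw [χ.LFunction_eq_completed_div_gammaFactor s (Or.inr hN), gammaFactor_eq ha hp]
  congr 1
  have hd1 : Differentiable ℂ χ.completedLFunction := DirichletCharacter.differentiable_completedLFunction hχ1
  have hd2 : Differentiable ℂ (fun s : ℂ => mellin (th a (fun n => χ n)) ((s + a) / 2)) := by
    intro s
    exact DifferentiableAt.comp (g := mellin (th a (fun n => χ n))) (f := fun s : ℂ => (s + a) / 2) s (mellin_diff hN ha hχ hp ((s + a) / 2)) (by fun_prop)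
  have hev : χ.completedLFunction =ᶠ[𝓝 (2:ℂ)] (fun s : ℂ => mellin (th a (fun n => χ n)) ((s + a) / 2)) := by
    have : {z : ℂ | 1 < z.re} ∈ 𝓝 (2:ℂ) :=
      (isOpen_lt continuous_const continuous_re).mem_nhds (by simp)
    filter_upwards [this] with z hz
    have hz : 1 < z.re := hz
    have hG : Gammaℝ (z + a) ≠ 0 := Gammaℝ_ne_zero_of_re_pos (by simp; positivity)
    rw [mellin_LSeries hN hz, ← χ.LFunction_eq_LSeries hz, χ.LFunction_eq_completed_div_gammaFactor z (Or.inr hN), gammaFactor_eq ha hp]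
    field_simp
  have := AnalyticOnNhd.eq_of_eventuallyEq (hd1.differentiableOn.analyticOnNhd isOpen_univ) (hd2.differentiableOn.analyticOnNhd isOpen_univ) hev
  exact congrFun this s

end prim
end QM
open Complex

namespace QM
open MeasureTheory Set Filter Topology Asymptotics

section prim2
variable {N : ℕ} [NeZero N] (hN : N ≠ 1) {a : ℕ} (ha : a = 0 ∨ a = 1)
    {χ : DirichletCharacter ℂ N} (hχ : χ.IsPrimitive) (hp : χ (-1) = (-1) ^ a)

include hN ha hχ hp in
lemma th_int (k : ℝ) : IntegrableOn (fun y : ℝ => y ^ k * ‖th a (fun n => χ n) y‖) (Ioi 0) := by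
  have h := (mellin_conv hN ha hχ hp ((k:ℂ) + 1)).norm
  refine IntegrableOn.congr_fun h (fun y hy => ?_) measurableSet_Ioi
  have hy : 0 < y := hy
  simp only [norm_smul]
  rw [norm_cpow_eq_rpow_re_of_pos hy]
  simp

include hN ha hχ hp in
lemma ptw (hinv : χ⁻¹ = χ) (σ X : ℝ) (hX : (N:ℝ) ≤ X) {u : ℝ} (hu : 0 < u) (hu2 : ((N:ℝ) ^ 2 * u)⁻¹ ≤ X⁻¹) :
    (N:ℝ) ^ 2 * (((N:ℝ) ^ 2 * u) ^ (-2 : ℝ) * ((((N:ℝ) ^ 2 * u)⁻¹) ^ ((σ + a) / 2 - 1) * ‖th a (fun n => χ n) (((N:ℝ) ^ 2 * u)⁻¹)‖))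
     ≤ X ^ (max 0 (1/2 - σ)) * (u ^ ((max σ (1 - σ) + a) / 2 - 1) * ‖th a (fun n => χ n) u‖) := by
  have hN0 : (0:ℝ) < N := Nat.cast_pos.mpr (NeZero.pos N)
  have hX0 : 0 < X := by linarith
  have h1 : ‖th a (fun n => χ n) (((N:ℝ) ^ 2 * u)⁻¹)‖ = (N * u) ^ (1/2 + a : ℝ) * ‖th a (fun n => χ n) u‖ := by
    have := norm_th_fe hN ha hχ hp hu
    rw [hinv, one_div ((N:ℝ) ^ 2 * u)] at this
    rw [this, ← mul_assoc, ← Real.rpow_add (by positivity)]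
    simp
  rw [h1]
  have e2 : (N:ℝ) ^ 2 = (N:ℝ) ^ (2:ℝ) := by norm_cast
  have h2 : (N:ℝ) ^ 2 * (((N:ℝ) ^ 2 * u) ^ (-2 : ℝ) * ((((N:ℝ) ^ 2 * u)⁻¹) ^ ((σ + a) / 2 - 1) * ((N * u) ^ (1/2 + a : ℝ) * ‖th a (fun n => χ n) u‖)))
     = (N:ℝ) ^ (1/2 - σ) * u ^ ((1 - σ + a) / 2 - 1) * ‖th a (fun n => χ n) u‖ := by
    rw [Real.inv_rpow (by positivity), ← Real.rpow_neg (by positivity), e2,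
      Real.mul_rpow (by positivity) hu.le, Real.mul_rpow (by positivity) hu.le, Real.mul_rpow (by positivity) hu.le,
      ← Real.rpow_mul hN0.le, ← Real.rpow_mul hN0.le]
    have e3 : (N:ℝ) ^ (1/2 - σ) = (N:ℝ) ^ (2:ℝ) * (N:ℝ) ^ (2 * (-2) : ℝ) * (N:ℝ) ^ (2 * (-((σ + a) / 2 - 1))) * (N:ℝ) ^ (1/2 + a : ℝ) := by
      rw [← Real.rpow_add hN0, ← Real.rpow_add hN0, ← Real.rpow_add hN0]
      congr 1; ring
    have e4 : u ^ ((1 - σ + a) / 2 - 1) = u ^ (-2:ℝ) * u ^ (-((σ + a) / 2 - 1)) * u ^ (1/2 + a : ℝ) := by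
      rw [← Real.rpow_add hu, ← Real.rpow_add hu]
      congr 1; ring
    rw [e3, e4]; ring
  rw [h2, ← mul_assoc]
  gcongr ?_ * _
  rcases le_total σ (1/2) with h | h
  · rw [max_eq_right (by linarith : σ ≤ 1 - σ), max_eq_right (by linarith)]
    gcongr
  · rw [max_eq_left (by linarith : 1 - σ ≤ σ), max_eq_left (by linarith), Real.rpow_zero, one_mul]
    have hNu : 1 ≤ N * u := by
      rw [inv_le_inv₀ (by positivity) hX0] at hu2
      have : (N:ℝ) * 1 ≤ N * (N * u) := by nlinarith
      exact le_of_mul_le_mul_left this hN0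
    have e5 : u ^ ((1 - σ + a) / 2 - 1) = u ^ (1/2 - σ) * u ^ ((σ + a) / 2 - 1) := by
      rw [← Real.rpow_add hu]; congr 1; ring
    rw [e5, ← mul_assoc, ← Real.mul_rpow hN0.le hu.le]
    have : ((N:ℝ) * u) ^ (1/2 - σ) ≤ 1 := Real.rpow_le_one_of_one_le_of_nonpos hNu (by linarith)
    exact mul_le_of_le_one_left (by positivity) this

include hN ha hχ hp in
lemma norm_LFunction_le (hinv : χ⁻¹ = χ) (s : ℂ) (X : ℝ) (hX : (N:ℝ) ≤ X) :
    ‖χ.LFunction s‖ ≤ ‖Gammaℝ (s + a)‖⁻¹ * (2 * X ^ (max 0 (1/2 - s.re))) *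
      ∫ y in Ioi X⁻¹, y ^ ((max s.re (1 - s.re) + a) / 2 - 1) * ‖th a (fun n => χ n) y‖ := by
  have hN0 : (0:ℝ) < N := Nat.cast_pos.mpr (NeZero.pos N)
  have hX0 : 0 < X := by linarith
  have hN1 : (1:ℝ) ≤ N := by exact_mod_cast NeZero.pos N
  set σ := s.re with hσ
  set T : ℝ → ℝ := fun y => ‖th a (fun n => χ n) y‖ with hT
  set G : ℝ → ℝ := (Iic X⁻¹).indicator (fun y => y ^ ((σ + a) / 2 - 1) * T y) with hG
  set R := ∫ y in Ioi X⁻¹, y ^ ((max σ (1 - σ) + a) / 2 - 1) * T y with hR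
  have hXi : 0 < X⁻¹ := by positivity
  have hint : ∀ k : ℝ, IntegrableOn (fun y : ℝ => y ^ k * T y) (Ioi X⁻¹) := fun k =>
    (th_int hN ha hχ hp k).mono_set (Ioi_subset_Ioi hXi.le)
  rw [LFunction_eq_mellin hN ha hχ hp, norm_div, div_eq_inv_mul, mul_assoc]
  refine mul_le_mul_of_nonneg_left ?_ (by positivity)
  have h1 : ‖mellin (th a (fun n => χ n)) ((s + a) / 2)‖ ≤ ∫ y in Ioi 0, y ^ ((σ + a) / 2 - 1) * T y := by
    rw [mellin]
    refine (norm_integral_le_integral_norm _).trans (le_of_eq ?_)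
    refine setIntegral_congr_fun measurableSet_Ioi fun y hy => ?_
    have hy : 0 < y := hy
    simp only [norm_smul]
    rw [norm_cpow_eq_rpow_re_of_pos hy]
    simp [hσ, hT]
  have h2 : ∫ y in Ioi 0, y ^ ((σ + a) / 2 - 1) * T y =
      (∫ y in Ioi 0, G y) + ∫ y in Ioi X⁻¹, y ^ ((σ + a) / 2 - 1) * T y := by
    rw [hG, setIntegral_indicator measurableSet_Iic, Ioi_inter_Iic, ← setIntegral_union (Ioc_disjoint_Ioi le_rfl) measurableSet_Ioi,
      Ioc_union_Ioi_eq_Ioi hXi.le]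
    · exact (th_int hN ha hχ hp _).mono_set Ioc_subset_Ioi_self
    · exact hint _
  have h3 : ∫ y in Ioi X⁻¹, y ^ ((σ + a) / 2 - 1) * T y ≤ X ^ (max 0 (1/2 - σ)) * R := by
    rw [hR, ← integral_const_mul]
    refine setIntegral_mono_on (hint _) ((hint _).const_mul _) measurableSet_Ioi fun y hy => ?_
    have hy1 : X⁻¹ < y := hy
    have hy0 : 0 < y := hXi.trans hy1
    rw [← mul_assoc]
    gcongr ?_ * _
    rcases le_total σ (1/2) with h | h
    · rw [max_eq_right (by linarith : σ ≤ 1 - σ), max_eq_right (by linarith)]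
      have e5 : y ^ ((σ + a) / 2 - 1) = y⁻¹ ^ (1/2 - σ) * y ^ ((1 - σ + a) / 2 - 1) := by
        rw [Real.inv_rpow hy0.le, ← Real.rpow_neg hy0.le, ← Real.rpow_add hy0]; congr 1; ring
      rw [e5]
      gcongr
      exact (inv_lt_of_inv_lt₀ hX0 hy1).le
    · rw [max_eq_left (by linarith : 1 - σ ≤ σ), max_eq_left (by linarith), Real.rpow_zero, one_mul]
  have h4 : ∫ y in Ioi 0, G y ≤ X ^ (max 0 (1/2 - σ)) * R := by
    rw [← integral_comp_rpow_Ioi G (by norm_num : (-1:ℝ) ≠ 0)]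
    have hN2 : (0:ℝ) < (N:ℝ) ^ 2 := by positivity
    have e := integral_comp_mul_left_Ioi' (fun x : ℝ => (|(-1:ℝ)| * x ^ ((-1:ℝ) - 1)) • G (x ^ (-1:ℝ))) 0 hN2
    rw [mul_zero] at e
    rw [← e, smul_eq_mul, ← integral_const_mul, hR, ← integral_const_mul]
    have hsub : Ici X⁻¹ ⊆ Ioi (0:ℝ) := fun y hy => lt_of_lt_of_le hXi hy
    rw [← integral_Ici_eq_integral_Ioi (x := X⁻¹)]
    have e6 : ∫ y in Ici X⁻¹, X ^ (max 0 (1/2 - σ)) * (y ^ ((max σ (1 - σ) + a) / 2 - 1) * T y) =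
       ∫ y in Ioi 0, (Ici X⁻¹).indicator (fun y => X ^ (max 0 (1/2 - σ)) * (y ^ ((max σ (1 - σ) + a) / 2 - 1) * T y)) y := by
      rw [setIntegral_indicator measurableSet_Ici, inter_eq_self_of_subset_right hsub]
    rw [e6]
    refine integral_mono_of_nonneg ?_ ?_ ?_
    · refine (ae_restrict_mem measurableSet_Ioi).mono fun u hu => ?_
      have hu : 0 < u := hu
      have : 0 ≤ G (((N:ℝ) ^ 2 * u) ^ (-1:ℝ)) := by
        rw [hG, indicator_apply]; simp only [hT]
        split_ifs <;> positivity
      simp only [smul_eq_mul, Pi.zero_apply]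
      positivity
    · exact Integrable.indicator ((th_int hN ha hχ hp _).const_mul _) measurableSet_Ici
    · refine (ae_restrict_mem measurableSet_Ioi).mono fun u hu => ?_
      have hu : 0 < u := hu
      simp only [smul_eq_mul, abs_neg, abs_one, one_mul]
      rw [Real.rpow_neg_one]
      have e7 : (-1 - 1 : ℝ) = -2 := by norm_num
      rw [e7]
      by_cases hc : ((N:ℝ) ^ 2 * u)⁻¹ ≤ X⁻¹
      · have hc' : u ∈ Ici X⁻¹ := by
          rw [mem_Ici]
          rw [inv_le_inv₀ (by positivity) hX0] at hc
          rw [inv_le_iff_one_le_mul₀ hX0]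
          nlinarith
        rw [hG, indicator_of_mem (mem_Iic.mpr hc), indicator_of_mem hc']
        exact ptw hN ha hχ hp hinv σ X hX hu hc
      · rw [hG, indicator_of_notMem (by simpa using hc), mul_zero, mul_zero]
        apply indicator_nonneg
        intro y hy
        have : 0 < y := hsub hy
        simp only [hT]
        positivity
  rw [h2] at h1
  linarith

end prim2
end QM
open Complex

namespace QM
open MeasureTheory Set Filter Topology Asymptotics

lemma gauss_sum_le {u : ℝ} (hu : 0 < u) (f : ℕ → ℂ) (hf : ∀ n, ‖f n‖ ≤ 1) (h0 : f 0 = 0) :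
    ‖th 0 f u‖ ≤ 1 / 2 * u ^ (-(1/2) : ℝ) := by
  have hs := summable_th 0 f hf hu
  have hb : ∀ M : ℕ, ∑ n ∈ Finset.range M, ‖((n:ℂ)^0 * f n * (Real.exp (-Real.pi*n^2*u):ℝ))‖ ≤ 1 / 2 * u ^ (-(1/2) : ℝ) := by
    intro M
    have hanti : AntitoneOn (fun x : ℝ => Real.exp (-(Real.pi * u) * x ^ 2)) (Icc 0 (0 + (M:ℝ))) := by
      intro x hx y hy hxy
      apply Real.exp_le_exp.mpr
      have h1 : x ^ 2 ≤ y ^ 2 := pow_le_pow_left₀ hx.1 hxy 2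
      have : 0 < Real.pi * u := mul_pos Real.pi_pos hu
      nlinarith
    have h1 := hanti.sum_le_integral
    have h2 : ∫ x in (0:ℝ)..(0 + M), Real.exp (-(Real.pi * u) * x ^ 2) ≤ 1 / 2 * u ^ (-(1/2) : ℝ) := by
      rw [intervalIntegral.integral_of_le (by positivity)]
      calc _ ≤ ∫ x in Ioi (0:ℝ), Real.exp (-(Real.pi * u) * x ^ 2) := by
            refine setIntegral_mono_set (integrable_exp_neg_mul_sq (mul_pos Real.pi_pos hu)).integrableOn ?_ ?_
            · exact Eventually.of_forall fun x => (Real.exp_pos _).le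
            · exact LE.le.eventuallyLE Ioc_subset_Ioi_self
        _ = _ := by
            rw [integral_gaussian_Ioi, Real.sqrt_eq_rpow, show Real.pi / (Real.pi * u) = u⁻¹ by field_simp,
              Real.inv_rpow hu.le, Real.rpow_neg hu.le]
            ring
    refine le_trans ?_ (h1.trans h2)
    rcases M with _ | M
    · simp
    rw [Finset.sum_range_succ', Finset.sum_range_succ]
    simp only [h0, mul_zero, zero_mul, norm_zero, add_zero]
    refine le_trans (Finset.sum_le_sum (fun i _ => ?_)) (le_add_of_nonneg_right (Real.exp_pos _).le)
    rw [norm_mul, norm_mul, pow_zero, norm_one, one_mul, Complex.norm_real, Real.norm_of_nonneg (Real.exp_pos _).le]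
    refine (mul_le_of_le_one_left (Real.exp_pos _).le (hf _)).trans (le_of_eq ?_)
    congr 1; push_cast; ring
  rw [th]
  refine (norm_tsum_le_tsum_norm hs.norm).trans ?_
  exact Real.tsum_le_of_sum_range_le (fun n => norm_nonneg _) hb

lemma th_prim_le {N : ℕ} [NeZero N] (hN : N ≠ 1) {χ : DirichletCharacter ℂ N} (hχ : χ.IsPrimitive)
    (hp : χ (-1) = 1) {y : ℝ} (hy : 0 < y) : ‖th 0 (fun n => χ n) y‖ ≤ 1 / 2 * (N:ℝ) ^ (1/2:ℝ) := by
  have hN0 : (0:ℝ) < N := Nat.cast_pos.mpr (NeZero.pos N)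
  rw [norm_th_fe hN (Or.inl rfl) hχ (by simpa using hp) hy]
  have h := gauss_sum_le (u := 1 / (N^2*y)) (by positivity) (fun n => χ⁻¹ n) (fun n => norm_char_le _ _)
    (by simpa using DirichletCharacter.map_zero' χ⁻¹ hN)
  refine (mul_le_mul_of_nonneg_left h (by positivity)).trans (le_of_eq ?_)
  rw [one_div ((N:ℝ)^2*y), Real.inv_rpow (by positivity), ← Real.rpow_neg (by positivity), neg_neg,
    show (N:ℝ)^2 * y = N * (N * y) by ring, Real.mul_rpow (x := (N:ℝ)) (by positivity) (by positivity) (z := 1/2)]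
  have : (N * y : ℝ) ^ (-(1/2 + ((0:ℕ):ℝ)) : ℝ) * (N * y) ^ (1/2:ℝ) = 1 := by
    rw [← Real.rpow_add (by positivity)]; simp
  linear_combination (1/2 * (N:ℝ)^(1/2:ℝ)) * this

lemma sum_moebius_gcd (m N : ℕ) (hN : N ≠ 0) :
    ∑ d ∈ N.divisors, (if d ∣ m then ((ArithmeticFunction.moebius d : ℤ) : ℂ) else 0) =
      if Nat.Coprime m N then 1 else 0 := by
  rw [← Finset.sum_filter]
  have : N.divisors.filter (fun d => d ∣ m) = (m.gcd N).divisors := by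
    ext d; simp [Nat.dvd_gcd_iff, hN]; tauto
  rw [this]
  have h := congrArg (fun f : ArithmeticFunction ℤ => f (m.gcd N)) ArithmeticFunction.moebius_mul_coe_zeta
  simp only [ArithmeticFunction.mul_zeta_apply, ArithmeticFunction.one_apply] at h
  rw [← Int.cast_sum, ArithmeticFunction.coe_mul_zeta_apply] at *
  rw [h]
  simp [Nat.Coprime]

lemma tsum_dvd (d : ℕ) (hd : d ≠ 0) (g : ℕ → ℂ) :
    ∑' m : ℕ, (if d ∣ m then g m else 0) = ∑' l : ℕ, g (d * l) := by
  have hinj : Function.Injective (fun l : ℕ => d * l) := fun a b h => Nat.eq_of_mul_eq_mul_left (Nat.pos_of_ne_zero hd) h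
  rw [← hinj.tsum_eq]
  · simp
  · intro m hm
    simp only [Function.mem_support, ne_eq, ite_eq_right_iff, Classical.not_imp] at hm
    obtain ⟨⟨l, rfl⟩, _⟩ := hm
    exact ⟨l, rfl⟩

lemma th_char_le {N : ℕ} [NeZero N] {ψ : DirichletCharacter ℂ N} (h1 : ψ ≠ 1) (hp : ψ (-1) = 1) {y : ℝ} (hy : 0 < y) :
    ‖th 0 (fun n => ψ n) y‖ ≤ N.divisors.card * (1 / 2 * (N:ℝ) ^ (1/2:ℝ)) := by
  have hN : N ≠ 0 := NeZero.ne N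
  set F := ψ.conductor with hF
  haveI : NeZero F := ⟨DirichletCharacter.conductor_ne_zero ψ⟩
  have hF1 : F ≠ 1 := fun h => h1 (DirichletCharacter.eq_one_iff_conductor_eq_one.mpr h)
  set φ := ψ.primitiveCharacter with hφ
  have hprim : φ.IsPrimitive := ψ.primitiveCharacter_isPrimitive
  have hφv : ∀ m : ℤ, IsCoprime m N → φ m = ψ m := fun m hm => DirichletCharacter.primitiveCharacter_apply_of_isCoprime ψ hm
  have hφ1 : φ (-1) = 1 := by
    have := hφv (-1) isCoprime_one_left.neg_left
    simpa [hp] using this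
  have key : th 0 (fun n => ψ n) y = ∑ d ∈ N.divisors, ((ArithmeticFunction.moebius d : ℤ) : ℂ) * φ d * th 0 (fun n => φ n) (d^2*y) := by
    have e1 : ∀ m : ℕ, (m:ℂ)^0 * ψ m * (Real.exp (-Real.pi*m^2*y):ℝ) =
        ∑ d ∈ N.divisors, ((ArithmeticFunction.moebius d : ℤ) : ℂ) * (if d ∣ m then φ m * (Real.exp (-Real.pi*m^2*y):ℝ) else 0) := by
      intro m
      have : ψ m = (if Nat.Coprime m N then 1 else 0) * φ m := by
        split_ifs with h
        · rw [one_mul]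
          have := hφv m (by exact_mod_cast Nat.isCoprime_iff_coprime.mpr h)
          simpa using this.symm
        · rw [zero_mul]
          exact MulChar.map_nonunit _ (by rwa [ZMod.isUnit_iff_coprime])
      rw [this, ← sum_moebius_gcd m N hN, pow_zero, one_mul, Finset.sum_mul, Finset.sum_mul]
      refine Finset.sum_congr rfl fun d _ => ?_
      split_ifs <;> ring
    have hsm : Summable fun m : ℕ => φ m * ((Real.exp (-Real.pi*m^2*y):ℝ):ℂ) := by
      simpa using summable_th 0 (fun n => φ n) (fun n => norm_char_le _ _) hy
    rw [th, tsum_congr e1, Summable.tsum_finsetSum]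
    · refine Finset.sum_congr rfl fun d hd => ?_
      have hd0 : d ≠ 0 := (Nat.pos_of_mem_divisors hd).ne'
      rw [tsum_mul_left, tsum_dvd d hd0, mul_assoc, th]
      congr 1
      rw [← tsum_mul_left]
      refine tsum_congr fun l => ?_
      push_cast
      rw [map_mul, pow_zero]
      ring_nf
    · intro d hd
      refine Summable.mul_left _ ?_
      refine Summable.of_norm_bounded hsm.norm fun m => ?_
      split_ifs
      · rfl
      · simp
  rw [key]
  refine (norm_sum_le_of_le _ (fun d hd => ?_)).trans (by rw [Finset.sum_const, nsmul_eq_mul])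
  have hd0 : (0:ℝ) < d := Nat.cast_pos.mpr (Nat.pos_of_mem_divisors hd)
  rw [norm_mul, norm_mul]
  have b1 : ‖((ArithmeticFunction.moebius d : ℤ) : ℂ)‖ ≤ 1 := by
    rw [Complex.norm_intCast]
    exact_mod_cast ArithmeticFunction.abs_moebius_le_one
  have b2 := norm_char_le φ d
  have b3 := th_prim_le hF1 hprim hφ1 (y := d^2*y) (by positivity)
  have b4 : (F:ℝ) ≤ N := by exact_mod_cast Nat.le_of_dvd (Nat.pos_of_ne_zero hN) ψ.conductor_dvd_level
  have b5 : (F:ℝ)^(1/2:ℝ) ≤ (N:ℝ)^(1/2:ℝ) := by gcongr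
  have b6 : ‖((ArithmeticFunction.moebius d : ℤ) : ℂ)‖ * ‖φ d‖ ≤ 1 := mul_le_one₀ b1 (norm_nonneg _) b2
  refine (mul_le_of_le_one_left (norm_nonneg _) b6).trans (b3.trans (by linarith))

end QM
open Complex

namespace QM
open MeasureTheory Set Filter Topology Asymptotics
open scoped NumberTheorySymbols

/-- `m ↦ (k/m)` on odd `m`. -/
noncomputable def jd (k m : ℕ) : ℤ := if Odd m then jacobiSym (k:ℤ) m else 0

lemma jd_mod (k m : ℕ) : jd k (m % (4 * k)) = jd k m := by
  have : Odd (m % (4*k)) ↔ Odd m := by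
    rw [Nat.odd_iff, Nat.odd_iff, Nat.mod_mod_of_dvd m ⟨2*k, by ring⟩]
  unfold jd
  by_cases h : Odd m
  · rw [if_pos h, if_pos (this.mpr h), ← jacobiSym.mod_right' k h]
  · rw [if_neg h, if_neg (by rwa [this])]

lemma jd_mul (k m n : ℕ) : jd k (m * n) = jd k m * jd k n := by
  unfold jd
  by_cases h : Odd (m * n)
  · have h' := Nat.odd_mul.mp h
    rw [if_pos h, if_pos h'.1, if_pos h'.2, jacobiSym.mul_right' _ h'.1.pos.ne' h'.2.pos.ne']
  · rw [if_neg h]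
    rw [Nat.odd_mul] at h
    by_cases h1 : Odd m
    · rw [if_neg (fun h2 => h ⟨h1, h2⟩)]; simp
    · rw [if_neg h1]; simp

lemma jd_eq_zero {k m : ℕ} (h : ¬ Nat.Coprime m (4 * k)) : jd k m = 0 := by
  unfold jd
  split_ifs with ho
  · have : NeZero m := ⟨ho.pos.ne'⟩
    rw [jacobiSym.eq_zero_iff_not_coprime]
    intro h2
    apply h
    have h4 : Nat.Coprime m 4 := by
      have : Nat.Coprime m 2 := ho.coprime_two_right
      exact Nat.Coprime.pow_right 2 this
    refine Nat.Coprime.mul_right h4 ?_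
    rw [Int.gcd_natCast_natCast] at h2
    exact Nat.Coprime.symm h2
  · rfl

/-- the character `m ↦ (k/m)` modulo `4k`. -/
noncomputable def psi (k : ℕ) [NeZero (4 * k)] : DirichletCharacter ℂ (4 * k) where
  toFun x := (jd k x.val : ℂ)
  map_one' := by
    rw [ZMod.val_one_eq_one_mod, jd_mod]
    simp [jd]
  map_mul' x y := by
    rw [ZMod.val_mul, jd_mod, jd_mul]; push_cast; rfl
  map_nonunit' x hx := by
    rw [jd_eq_zero]; · simp
    intro h
    apply hx
    have := (ZMod.isUnit_iff_coprime x.val (4*k)).mpr h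
    simpa using this

lemma psi_apply (k : ℕ) [NeZero (4 * k)] (m : ℕ) : psi k m = (jd k m : ℂ) := by
  change (jd k ((m : ZMod (4*k)).val) : ℂ) = _
  rw [ZMod.val_natCast, jd_mod]

lemma psi_even (k : ℕ) [NeZero (4 * k)] : psi k (-1) = 1 := by
  have hk : k ≠ 0 := by
    rintro rfl; exact NeZero.ne (4*0) rfl
  have h1 : ((4 * k - 1 : ℕ) : ZMod (4*k)) = -1 := by
    rw [Nat.cast_sub (by omega)]; simp
  rw [← h1, psi_apply]
  have ho : Odd (4*k-1) := by rw [Nat.odd_iff]; omega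
  have h2 : jacobiSym (4 * k : ℤ) (4*k-1) = jacobiSym (1:ℤ) (4*k-1) := by
    apply jacobiSym.mod_left'
    have : ((4 * k - 1 : ℕ) : ℤ) = 4 * k - 1 := by omega
    rw [this]
    rw [Int.emod_eq_emod_iff_emod_sub_eq_zero]
    simp
  rw [jacobiSym.mul_left, jacobiSym.at_four ho, jacobiSym.one_left, one_mul] at h2
  simp [jd, ho, h2]

lemma exists_odd_exp {k : ℕ} (hk : k ≠ 0) (hsq : ¬ IsSquare k) : ∃ p e q : ℕ, p.Prime ∧ Odd e ∧ ¬ p ∣ q ∧ q ≠ 0 ∧ k = p ^ e * q := by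
  obtain ⟨a, b, hab, ha⟩ := Nat.sq_mul_squarefree k
  have ha1 : a ≠ 1 := by
    rintro rfl; exact hsq ⟨b, by rw [← hab]; ring⟩
  obtain ⟨p, hp, hpa⟩ := Nat.exists_prime_and_dvd ha1
  obtain ⟨a', rfl⟩ := hpa
  have hb : b ≠ 0 := by rintro rfl; simp at hab; exact hk hab.symm
  have ha0 : a' ≠ 0 := by rintro rfl; simp at hab; exact hk hab.symm
  have hpa' : ¬ p ∣ a' := fun ⟨c, hc⟩ => by
    have := ha p ⟨c, by rw [hc]; ring⟩
    exact hp.one_lt.ne' (Nat.isUnit_iff.mp this)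
  obtain ⟨e, b', hb', rfl⟩ := Nat.exists_eq_pow_mul_and_not_dvd hb p hp.ne_one
  refine ⟨p, 2 * e + 1, b' ^ 2 * a', hp, ⟨e, rfl⟩, ?_, ?_, ?_⟩
  · rw [hp.dvd_mul]
    rintro (h | h)
    · exact hb' (hp.dvd_of_dvd_pow h)
    · exact hpa' h
  · have : b' ≠ 0 := by rintro rfl; simp at hb
    positivity
  · rw [← hab]; ring

lemma exists_nonres (p : ℕ) (hp : p.Prime) (h2 : p ≠ 2) : ∃ u : ℕ, jacobiSym u p = -1 := by
  haveI : Fact p.Prime := ⟨hp⟩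
  obtain ⟨a, ha⟩ := FiniteField.exists_nonsquare (F := ZMod p) (by rwa [ZMod.ringChar_zmod_n])
  refine ⟨a.val, ?_⟩
  rw [← jacobiSym.legendreSym.to_jacobiSym, legendreSym.eq_neg_one_iff]
  simpa using ha

lemma psi_ne_one (k : ℕ) [NeZero (4 * k)] (hsq : ¬ IsSquare k) : psi k ≠ 1 := by
  have hk : k ≠ 0 := by
    rintro rfl; exact NeZero.ne (4*0) rfl
  obtain ⟨p, e, q, hp, he, hpq, hq, hkk⟩ := exists_odd_exp hk hsq
  suffices h : ∃ m : ℕ, Odd m ∧ jacobiSym p m = -1 ∧ jacobiSym q m = 1 by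
    obtain ⟨m, hm, h1, h2⟩ := h
    intro h
    have h3 : jd k m = -1 := by
      rw [jd, if_pos hm, hkk]; push_cast
      rw [jacobiSym.mul_left, jacobiSym.pow_left, h1, h2, he.neg_one_pow, mul_one]
    have h4 := psi_apply k m
    rw [h, h3] at h4
    by_cases hu : IsUnit (m : ZMod (4*k))
    · rw [MulChar.one_apply hu] at h4; norm_num at h4
    · rw [MulChar.map_nonunit _ hu] at h4; norm_num at h4
  by_cases h2 : p = 2
  · subst h2
    have hqo : Odd q := by rwa [← Nat.not_even_iff_odd, even_iff_two_dvd]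
    have hco : Nat.Coprime 8 q := Nat.Coprime.pow_left 3 (hqo.coprime_two_left)
    obtain ⟨m, hm8, hmq⟩ := Nat.chineseRemainder hco 5 1
    have hm8' : m % 8 = 5 := hm8
    have hmo : Odd m := by rw [Nat.odd_iff]; omega
    refine ⟨m, hmo, ?_, ?_⟩
    · rw [show ((2:ℕ):ℤ) = 2 by rfl, jacobiSym.at_two hmo, ZMod.χ₈_nat_eq_if_mod_eight]
      simp [hm8']; omega
    · rw [jacobiSym.quadratic_reciprocity_one_mod_four' hqo (by omega),
        jacobiSym.mod_left' (a₂ := 1), jacobiSym.one_left]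
      exact_mod_cast hmq
  · obtain ⟨u, hu⟩ := exists_nonres p hp h2
    have hco : Nat.Coprime p (4 * q) := by
      rw [Nat.Prime.coprime_iff_not_dvd hp, hp.dvd_mul]
      rintro (h | h)
      · exact h2 ((Nat.prime_dvd_prime_iff_eq hp Nat.prime_two).mp (hp.dvd_of_dvd_pow (show p ∣ 2 ^ 2 from h)))
      · exact hpq h
    obtain ⟨m, hmp, hmq⟩ := Nat.chineseRemainder hco u 1
    have hm4 : m % 4 = 1 := hmq.of_dvd ⟨q, rfl⟩
    have hmo : Odd m := by rw [Nat.odd_iff]; omega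
    refine ⟨m, hmo, ?_, ?_⟩
    · rw [jacobiSym.quadratic_reciprocity_one_mod_four' (hp.odd_of_ne_two h2) hm4, ← hu]
      apply jacobiSym.mod_left'
      exact_mod_cast hmp
    · rw [jacobiSym.mod_right' q hmo, hmq, ← jacobiSym.mod_right' q odd_one, jacobiSym.one_right]

lemma dual_le (k : ℕ) (hk : k ≠ 0) (hsq : ¬ IsSquare k) {y : ℝ} (hy : 0 < y) :
    ‖th 0 (fun m => (jd k m : ℂ)) y‖ ≤ (4 * k).divisors.card * (k:ℝ) ^ (1/2:ℝ) := by
  haveI : NeZero (4 * k) := ⟨by omega⟩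
  have h := th_char_le (psi_ne_one k hsq) (psi_even k) hy
  simp only [psi_apply] at h
  refine h.trans (le_of_eq ?_)
  push_cast
  rw [Real.mul_rpow (by norm_num) (by positivity), show (4:ℝ)^(1/2:ℝ) = 2 by
    rw [show (4:ℝ) = 2^(2:ℝ) by norm_num, ← Real.rpow_mul (by norm_num)]; norm_num]
  ring

end QM
open Complex

namespace QM
open MeasureTheory Set Filter Topology Asymptotics

lemma sum_le_of_surj {ι κ : Type*} [DecidableEq ι] (S : Finset ι) (B : Finset κ) (j : κ → ι) (F : ι → ℝ)
    (hF : ∀ x, 0 ≤ F x) (h : ∀ x ∈ S, ∃ b ∈ B, j b = x) : ∑ x ∈ S, F x ≤ ∑ b ∈ B, F (j b) := by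
  have h1 : S ⊆ B.image j := fun x hx => by
    obtain ⟨b, hb, rfl⟩ := h x hx
    exact Finset.mem_image_of_mem _ hb
  refine (Finset.sum_le_sum_of_subset_of_nonneg h1 (fun x _ _ => hF x)).trans ?_
  rw [← Finset.sum_fiberwise_of_maps_to (s := B) (t := B.image j) (g := j) (fun b hb => Finset.mem_image_of_mem _ hb)]
  refine Finset.sum_le_sum fun x hx => ?_
  obtain ⟨b, hb, rfl⟩ := Finset.mem_image.mp hx
  exact Finset.single_le_sum (f := fun i => F (j i)) (fun i _ => hF _) (Finset.mem_filter.mpr ⟨hb, rfl⟩)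

lemma zsum_le {s : ℝ} (hs : 1 < s) : ∃ K : ℝ, 0 < K ∧ ∀ S : Finset ℕ, ∑ n ∈ S, (n:ℝ) ^ (-s) ≤ K := by
  have h := Real.summable_nat_rpow.mpr (show -s < -1 by linarith)
  refine ⟨∑' n : ℕ, (n:ℝ) ^ (-s) + 1, ?_, fun S => ?_⟩
  · have : 0 ≤ ∑' n : ℕ, (n:ℝ) ^ (-s) := tsum_nonneg fun n => by positivity
    linarith
  · have := h.sum_le_tsum S (fun n _ => by positivity)
    linarith

lemma tau_sum_le {s : ℝ} (hs : 1 < s) : ∃ K : ℝ, 0 < K ∧ ∀ M : ℕ,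
    ∑ n ∈ Finset.Icc 1 M, (n.divisors.card : ℝ) * (n:ℝ) ^ (-s) ≤ K := by
  obtain ⟨K, hK, h⟩ := zsum_le hs
  refine ⟨K * K, by positivity, fun M => ?_⟩
  have e1 : ∑ n ∈ Finset.Icc 1 M, (n.divisors.card : ℝ) * (n:ℝ) ^ (-s) =
      ∑ x ∈ (Finset.Icc 1 M).sigma (fun n => n.divisors), (x.1 : ℝ) ^ (-s) := by
    rw [Finset.sum_sigma]
    simp
  rw [e1]
  refine (sum_le_of_surj _ (Finset.Icc 1 M ×ˢ Finset.Icc 1 M) (fun b => (⟨b.1 * b.2, b.1⟩ : Σ _ : ℕ, ℕ))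
    (fun x => (x.1 : ℝ) ^ (-s)) (fun x => by positivity) ?_).trans ?_
  · rintro ⟨n, d⟩ hx
    simp only [Finset.mem_sigma, Finset.mem_Icc, Nat.mem_divisors] at hx
    obtain ⟨⟨h1, h2⟩, ⟨e, rfl⟩, _⟩ := hx
    have hd : 0 < d := Nat.pos_of_mul_pos_left (by omega : 0 < d * e) |> fun _ => Nat.pos_of_ne_zero (by rintro rfl; simp at h1)
    have he : 0 < e := Nat.pos_of_ne_zero (by rintro rfl; simp at h1)
    refine ⟨(d, e), ?_, rfl⟩
    simp only [Finset.mem_product, Finset.mem_Icc]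
    refine ⟨⟨hd, ?_⟩, he, ?_⟩ <;> nlinarith
  · simp only [Nat.cast_mul]
    rw [Finset.sum_product]
    simp_rw [Real.mul_rpow (Nat.cast_nonneg _) (Nat.cast_nonneg _)]
    rw [← Finset.sum_mul_sum]
    exact mul_le_mul (h _) (h _) (Finset.sum_nonneg fun _ _ => by positivity) hK.le

lemma sq_decomp {m n : ℕ} (hm : 0 < m) (hn : 0 < n) (h : IsSquare (m * n)) : ∃ g u v : ℕ, m = g * u ^ 2 ∧ n = g * v ^ 2 := by
  obtain ⟨g, m', n', hg, hco, rfl, rfl⟩ := Nat.exists_coprime' (m := m) (n := n) (Nat.gcd_pos_of_pos_left _ hm)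
  have hmn : IsSquare (m' * n') := by
    obtain ⟨r, hr⟩ := h
    have : g ^ 2 ∣ r ^ 2 := ⟨m' * n', by rw [pow_two r, ← hr]; ring⟩
    rw [Nat.pow_dvd_pow_iff two_ne_zero] at this
    obtain ⟨t, rfl⟩ := this
    refine ⟨t, ?_⟩
    have : g ^ 2 * (m' * n') = g ^ 2 * (t * t) := by linarith
    exact Nat.eq_of_mul_eq_mul_left (by positivity) this
  obtain ⟨t, ht⟩ := hmn
  obtain ⟨u, rfl⟩ := exists_eq_pow_of_mul_eq_pow (k := 2) (c := t) (a := m') (b := n')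
    (Nat.isUnit_iff.mpr hco) (by rw [ht]; ring)
  obtain ⟨v, rfl⟩ := exists_eq_pow_of_mul_eq_pow (k := 2) (c := t) (a := n') (b := u ^ 2)
    (Nat.isUnit_iff.mpr hco.symm) (by rw [mul_comm, ht]; ring)
  exact ⟨g, u, v, by ring, by ring⟩

lemma sq_sum_le {s : ℝ} (hs : 1/2 < s) : ∃ K : ℝ, 0 < K ∧ ∀ M : ℕ,
    ∑ p ∈ (Finset.Icc 1 M ×ˢ Finset.Icc 1 M).filter (fun p => IsSquare (p.1 * p.2)), ((p.1:ℝ) ^ (-s) * (p.2:ℝ) ^ (-s)) ≤ K := by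
  obtain ⟨K, hK, h⟩ := zsum_le (show 1 < 2 * s by linarith)
  refine ⟨K * (K * K), by positivity, fun M => ?_⟩
  refine (sum_le_of_surj _ (Finset.Icc 1 M ×ˢ (Finset.Icc 1 M ×ˢ Finset.Icc 1 M)) (fun b => (b.1 * b.2.1 ^ 2, b.1 * b.2.2 ^ 2))
    (fun p => ((p.1:ℝ) ^ (-s) * (p.2:ℝ) ^ (-s))) (fun x => by positivity) ?_).trans ?_
  · rintro ⟨m, n⟩ hx
    simp only [Finset.mem_filter, Finset.mem_product, Finset.mem_Icc] at hx
    obtain ⟨⟨⟨h1, h2⟩, h3, h4⟩, h5⟩ := hx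
    obtain ⟨g, u, v, rfl, rfl⟩ := sq_decomp h1 h3 h5
    have hg : 0 < g := Nat.pos_of_ne_zero (by rintro rfl; simp at h1)
    have hu : 0 < u := Nat.pos_of_ne_zero (by rintro rfl; simp at h1)
    have hv : 0 < v := Nat.pos_of_ne_zero (by rintro rfl; simp at h3)
    refine ⟨(g, u, v), ?_, rfl⟩
    simp only [Finset.mem_product, Finset.mem_Icc]
    have : u ≤ u ^ 2 := Nat.le_self_pow two_ne_zero u
    have : v ≤ v ^ 2 := Nat.le_self_pow two_ne_zero v
    have : 1 ≤ u ^ 2 := by omega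
    refine ⟨⟨hg, by nlinarith⟩, ⟨hu, by nlinarith⟩, ⟨hv, by nlinarith⟩⟩
  · have e : ∀ b : ℕ × ℕ × ℕ, ((b.1 * b.2.1 ^ 2 : ℕ):ℝ) ^ (-s) * ((b.1 * b.2.2 ^ 2 : ℕ) : ℝ) ^ (-s) =
        (b.1:ℝ) ^ (-(2*s)) * ((b.2.1:ℝ) ^ (-(2*s)) * (b.2.2:ℝ) ^ (-(2*s))) := by
      intro b
      have e0 : ∀ x : ℝ, 0 ≤ x → x ^ (-(2*s)) = (x ^ 2) ^ (-s) := fun x hx => by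
        rw [← Real.rpow_natCast, ← Real.rpow_mul hx]; congr 1; push_cast; ring
      push_cast
      rw [e0 _ (Nat.cast_nonneg _), e0 _ (Nat.cast_nonneg _), e0 _ (Nat.cast_nonneg _),
        ← Real.mul_rpow (by positivity) (by positivity), ← Real.mul_rpow (by positivity) (by positivity),
        ← Real.mul_rpow (by positivity) (by positivity)]
      congr 1; ring
    simp only [e]
    rw [Finset.sum_product]
    simp only [Finset.sum_product]
    simp_rw [← Finset.mul_sum]
    rw [← Finset.sum_mul, ← Finset.sum_mul]
    have h0 : ∀ S : Finset ℕ, 0 ≤ ∑ n ∈ S, (n:ℝ) ^ (-(2*s)) := fun S => Finset.sum_nonneg fun _ _ => by positivity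
    exact mul_le_mul (h _) (mul_le_mul (h _) (h _) (h0 _) hK.le) (mul_nonneg (h0 _) (h0 _)) hK.le

lemma tau_mul_le (m n : ℕ) : (m * n).divisors.card ≤ m.divisors.card * n.divisors.card := by
  rw [Nat.divisors_mul]; exact Finset.card_mul_le

lemma norm_jd_le (k m : ℕ) : ‖(jd k m : ℂ)‖ ≤ 1 := by
  unfold jd
  split_ifs
  · rcases jacobiSym.trichotomy k m with h | h | h <;> simp [h]
  · simp

lemma jd_mul_left (k l m : ℕ) : jd (k * l) m = jd k m * jd l m := by
  unfold jd
  split_ifs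
  · push_cast; rw [jacobiSym.mul_left]
  · simp

end QM
open Complex

namespace QM
open MeasureTheory Set Filter Topology Asymptotics

lemma sq_expand (M : ℕ) (c : ℕ → ℝ) (hc : ∀ n, 0 ≤ c n) (T : Finset ℕ) {v : ℝ} (hv : 0 < v) :
    ∑ m ∈ T, (∑ n ∈ Finset.Icc 1 M, c n * (jd n m : ℝ)) ^ 2 * Real.exp (-Real.pi * m ^ 2 * v) ≤
      ∑ p ∈ Finset.Icc 1 M ×ˢ Finset.Icc 1 M, c p.1 * c p.2 * ‖th 0 (fun m => (jd (p.1 * p.2) m : ℂ)) v‖ := by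
  set E : ℕ → ℝ := fun m => Real.exp (-Real.pi * m ^ 2 * v) with hE
  have hs : ∀ p : ℕ × ℕ, Summable (fun m : ℕ => ((c p.1 * c p.2 : ℝ) : ℂ) * ((jd (p.1 * p.2) m : ℂ) * (E m : ℂ))) := fun p => by
    have := summable_th 0 (fun m => (jd (p.1 * p.2) m : ℂ)) (norm_jd_le _) hv
    simp only [pow_zero, one_mul] at this
    exact this.mul_left _
  have e1 : ∀ m, (((∑ n ∈ Finset.Icc 1 M, c n * (jd n m : ℝ)) ^ 2 * E m : ℝ) : ℂ) =
      ∑ p ∈ Finset.Icc 1 M ×ˢ Finset.Icc 1 M, ((c p.1 * c p.2 : ℝ) : ℂ) * ((jd (p.1 * p.2) m : ℂ) * (E m : ℂ)) := by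
    intro m
    rw [pow_two, Finset.sum_mul_sum, ← Finset.sum_product', Finset.sum_mul]
    push_cast
    refine Finset.sum_congr rfl fun p _ => ?_
    rw [jd_mul_left]; push_cast; ring
  have hsC : Summable (fun m => (((∑ n ∈ Finset.Icc 1 M, c n * (jd n m : ℝ)) ^ 2 * E m : ℝ) : ℂ)) := by
    simp_rw [e1]
    exact summable_sum fun p _ => hs p
  have hsR : Summable (fun m => (∑ n ∈ Finset.Icc 1 M, c n * (jd n m : ℝ)) ^ 2 * E m) := Complex.summable_ofReal.mp hsC
  have hnn : ∀ m, 0 ≤ (∑ n ∈ Finset.Icc 1 M, c n * (jd n m : ℝ)) ^ 2 * E m := fun m => by simp only [hE]; positivity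
  refine (hsR.sum_le_tsum T (fun m _ => hnn m)).trans ?_
  rw [← Real.norm_of_nonneg (tsum_nonneg hnn), ← Complex.norm_real, Complex.ofReal_tsum, tsum_congr e1,
    Summable.tsum_finsetSum (fun p _ => hs p)]
  refine norm_sum_le_of_le _ fun p _ => ?_
  rw [tsum_mul_left, norm_mul, Complex.norm_real, Real.norm_of_nonneg (mul_nonneg (hc _) (hc _))]
  simp only [th, pow_zero, one_mul]
  rfl

lemma second_moment (a : ℕ) {α : ℝ} (hα : 1/4 < α) : ∃ C : ℝ, 0 < C ∧ ∀ X : ℝ, 1 ≤ X → ∀ y : ℝ, X⁻¹ ≤ y → ∀ M : ℕ,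
    ∑ m ∈ Finset.Icc 1 ⌊X⌋₊, (∑ n ∈ Finset.Icc 1 M, (n:ℝ)^a * Real.exp (-Real.pi * n^2 * y) * (jd n m : ℝ)) ^ 2
      ≤ C * (X * y ^ (-(2 * ((a:ℝ)/2 + α)))) := by
  set κ : ℝ := (a:ℝ)/2 + α with hκ
  have hκ0 : 0 < κ := by positivity
  obtain ⟨C1, hC1, h1⟩ := gauss_le hκ0
  obtain ⟨C2, hC2, h2⟩ := gauss_le (show 0 < κ + 1/2 by positivity)
  obtain ⟨K1, hK1, k1⟩ := sq_sum_le (show 1/2 < 2 * α by linarith)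
  obtain ⟨K2, hK2, k2⟩ := tau_sum_le (show 1 < 2 * α + 1/2 by linarith)
  refine ⟨Real.exp Real.pi * (C1^2 * K1 + C2^2 * (3 * K2^2)), by positivity, fun X hX y hy M => ?_⟩
  have hX0 : 0 < X := by linarith
  have hy0 : 0 < y := lt_of_lt_of_le (by positivity) hy
  set c : ℕ → ℝ := fun n => (n:ℝ)^a * Real.exp (-Real.pi * n^2 * y) with hcdef
  have hc : ∀ n, 0 ≤ c n := fun n => by simp only [hcdef]; positivity
  have hv : (0:ℝ) < (X^2)⁻¹ := by positivity
  have hexp := sq_expand M c hc (Finset.Icc 1 ⌊X⌋₊) hv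
  have hlow : ∑ m ∈ Finset.Icc 1 ⌊X⌋₊, (∑ n ∈ Finset.Icc 1 M, c n * (jd n m : ℝ)) ^ 2 ≤
      Real.exp Real.pi * ∑ m ∈ Finset.Icc 1 ⌊X⌋₊, (∑ n ∈ Finset.Icc 1 M, c n * (jd n m : ℝ)) ^ 2 * Real.exp (-Real.pi * m ^ 2 * (X^2)⁻¹) := by
    rw [Finset.mul_sum]
    refine Finset.sum_le_sum fun m hm => ?_
    have hm' : (m:ℝ) ≤ X := (Nat.le_floor_iff hX0.le).mp (Finset.mem_Icc.mp hm).2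
    have : 1 ≤ Real.exp Real.pi * Real.exp (-Real.pi * m ^ 2 * (X^2)⁻¹) := by
      rw [← Real.exp_add]
      apply Real.one_le_exp
      have : (m:ℝ)^2 * (X^2)⁻¹ ≤ 1 := by
        rw [← div_eq_mul_inv, div_le_one (by positivity)]
        gcongr
      nlinarith [Real.pi_pos]
    have h0 := sq_nonneg (∑ n ∈ Finset.Icc 1 M, c n * (jd n m : ℝ))
    nlinarith
  refine hlow.trans ?_
  rw [mul_assoc]
  refine mul_le_mul_of_nonneg_left (hexp.trans ?_) (Real.exp_pos _).le
  rw [← Finset.sum_filter_add_sum_filter_not _ (fun p : ℕ × ℕ => IsSquare (p.1 * p.2)), add_mul]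
  refine add_le_add ?_ ?_
  · calc _ ≤ ∑ p ∈ (Finset.Icc 1 M ×ˢ Finset.Icc 1 M).filter (fun p => IsSquare (p.1 * p.2)),
        (C1^2 * (X * y ^ (-(2*κ)))) * ((p.1:ℝ) ^ (-(2*α)) * (p.2:ℝ) ^ (-(2*α))) := by
          refine Finset.sum_le_sum fun p hp => ?_
          simp only [Finset.mem_filter, Finset.mem_product, Finset.mem_Icc] at hp
          have b1 := h1 a p.1 y hy0 (by omega)
          have b2 := h1 a p.2 y hy0 (by omega)
          have b3 := gauss_sum_le hv (fun m => (jd (p.1 * p.2) m : ℂ)) (norm_jd_le _) (by simp [jd])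
          have b4 : 1 / 2 * ((X^2)⁻¹) ^ (-(1/2):ℝ) ≤ X := by
            rw [Real.inv_rpow (by positivity), ← Real.rpow_neg (by positivity), neg_neg, ← Real.sqrt_eq_rpow, Real.sqrt_sq hX0.le]
            linarith
          have e1 : (a:ℝ) - 2 * κ = -(2*α) := by rw [hκ]; ring
          rw [e1] at b1 b2
          calc _ ≤ (C1 * y ^ (-κ) * (p.1:ℝ)^(-(2*α))) * (C1 * y ^ (-κ) * (p.2:ℝ)^(-(2*α))) * X :=
                mul_le_mul (mul_le_mul b1 b2 (hc _) (by positivity)) (b3.trans b4) (norm_nonneg _) (by positivity)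
            _ = _ := by
                rw [show y ^ (-(2*κ)) = y^(-κ) * y^(-κ) by rw [← Real.rpow_add hy0]; congr 1; ring]
                ring
      _ ≤ _ := by
          rw [← Finset.mul_sum, show C1^2 * K1 * (X * y ^ (-(2*κ))) = (C1^2 * (X * y ^ (-(2*κ)))) * K1 by ring]
          exact mul_le_mul_of_nonneg_left (k1 M) (by positivity)
  · calc _ ≤ ∑ p ∈ (Finset.Icc 1 M ×ˢ Finset.Icc 1 M).filter (fun p => ¬ IsSquare (p.1 * p.2)),
        (C2^2 * 3 * (X * y ^ (-(2*κ)))) * (((p.1.divisors.card:ℝ) * (p.1:ℝ) ^ (-(2*α+1/2))) * ((p.2.divisors.card:ℝ) * (p.2:ℝ) ^ (-(2*α+1/2)))) := by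
          refine Finset.sum_le_sum fun p hp => ?_
          simp only [Finset.mem_filter, Finset.mem_product, Finset.mem_Icc] at hp
          have b1 := h2 a p.1 y hy0 (by omega)
          have b2 := h2 a p.2 y hy0 (by omega)
          have hp1 : (0:ℝ) < p.1 := by exact_mod_cast (show 0 < p.1 by omega)
          have hp2 : (0:ℝ) < p.2 := by exact_mod_cast (show 0 < p.2 by omega)
          have b3 := dual_le (p.1 * p.2) (Nat.mul_ne_zero (by omega) (by omega)) hp.2 hv
          have b4 : (((4 * (p.1 * p.2)).divisors.card : ℕ) : ℝ) ≤ 3 * (p.1.divisors.card * p.2.divisors.card) := by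
            have t1 := tau_mul_le 4 (p.1 * p.2)
            have t2 := tau_mul_le p.1 p.2
            have t3 : (4:ℕ).divisors.card = 3 := by decide
            rw [t3] at t1
            exact_mod_cast t1.trans (Nat.mul_le_mul_left 3 t2)
          have e1 : (a:ℝ) - 2 * (κ+1/2) = -(2*α+1/2) - 1/2 := by rw [hκ]; ring
          rw [e1, Real.rpow_sub hp1] at b1
          rw [e1, Real.rpow_sub hp2] at b2
          have b5 : y ^ (-(κ+1/2)) * y ^ (-(κ+1/2)) ≤ X * y ^ (-(2*κ)) := by
            rw [show y ^ (-(κ+1/2)) * y ^ (-(κ+1/2)) = y⁻¹ * y ^ (-(2*κ)) by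
              rw [← Real.rpow_neg_one, ← Real.rpow_add hy0, ← Real.rpow_add hy0]; congr 1; ring]
            gcongr
            exact inv_le_of_inv_le₀ hX0 hy
          push_cast at b3
          rw [Real.mul_rpow hp1.le hp2.le] at b3
          have q1 : 0 < (p.1:ℝ)^(1/2:ℝ) := by positivity
          have q2 : 0 < (p.2:ℝ)^(1/2:ℝ) := by positivity
          calc _ ≤ (C2 * y ^ (-(κ+1/2)) * ((p.1:ℝ)^(-(2*α+1/2)) / (p.1:ℝ)^(1/2:ℝ))) * (C2 * y ^ (-(κ+1/2)) * ((p.2:ℝ)^(-(2*α+1/2)) / (p.2:ℝ)^(1/2:ℝ))) *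
                ((3 * (p.1.divisors.card * p.2.divisors.card)) * ((p.1:ℝ)^(1/2:ℝ) * (p.2:ℝ)^(1/2:ℝ))) :=
                mul_le_mul (mul_le_mul b1 b2 (hc _) (by positivity)) (b3.trans (mul_le_mul_of_nonneg_right b4 (by positivity))) (norm_nonneg _) (by positivity)
            _ = (C2^2 * 3 * (y ^ (-(κ+1/2)) * y ^ (-(κ+1/2)))) * (((p.1.divisors.card:ℝ) * (p.1:ℝ) ^ (-(2*α+1/2))) * ((p.2.divisors.card:ℝ) * (p.2:ℝ) ^ (-(2*α+1/2)))) := by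
                field_simp
            _ ≤ _ := by gcongr
      _ ≤ ∑ p ∈ (Finset.Icc 1 M ×ˢ Finset.Icc 1 M), (C2^2 * 3 * (X * y ^ (-(2*κ)))) * (((p.1.divisors.card:ℝ) * (p.1:ℝ) ^ (-(2*α+1/2))) * ((p.2.divisors.card:ℝ) * (p.2:ℝ) ^ (-(2*α+1/2)))) :=
          Finset.sum_le_sum_of_subset_of_nonneg (Finset.filter_subset _ _) fun _ _ _ => by positivity
      _ ≤ _ := by
          rw [← Finset.mul_sum, Finset.sum_product]
          dsimp only
          rw [← Finset.sum_mul_sum,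
            show C2^2 * (3 * K2^2) * (X * y ^ (-(2*κ))) = (C2^2 * 3 * (X * y ^ (-(2*κ)))) * (K2 * K2) by ring]
          refine mul_le_mul_of_nonneg_left ?_ (by positivity)
          exact mul_le_mul (k2 M) (k2 M) (Finset.sum_nonneg fun _ _ => by positivity) hK2.le

lemma sum_Icc_range (g : ℕ → ℝ) (M : ℕ) : ∑ n ∈ Finset.Icc 1 M, g n = ∑ i ∈ Finset.range M, g (i + 1) := by
  induction M with
  | zero => simp
  | succ M ih => rw [Finset.sum_Icc_succ_top (by omega), Finset.sum_range_succ, ih]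

lemma first_moment (a : ℕ) {α : ℝ} (hα : 1/4 < α) : ∃ C : ℝ, 0 < C ∧ ∀ X : ℝ, 1 ≤ X → ∀ y : ℝ, X⁻¹ ≤ y →
    ∑ m ∈ Finset.Icc 2 ⌊X⌋₊, ‖th a (fun n => (jd n m : ℂ)) y‖ ≤ C * (X * y ^ (-((a:ℝ)/2 + α))) := by
  obtain ⟨C, hC, h⟩ := second_moment a hα
  refine ⟨√C, by positivity, fun X hX y hy => ?_⟩
  have hX0 : 0 < X := by linarith
  have hy0 : 0 < y := lt_of_lt_of_le (by positivity) hy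
  set κ : ℝ := (a:ℝ)/2 + α with hκ
  set S : ℕ → ℕ → ℝ := fun M m => ∑ n ∈ Finset.Icc 1 M, (n:ℝ)^a * Real.exp (-Real.pi * n^2 * y) * (jd n m : ℝ) with hS
  have hfin : ∀ M, ∑ m ∈ Finset.Icc 2 ⌊X⌋₊, |S M m| ≤ √C * (X * y ^ (-κ)) := by
    intro M
    have h1 := h X hX y hy M
    have h2 : (∑ m ∈ Finset.Icc 1 ⌊X⌋₊, |S M m|) ^ 2 ≤ (√C * (X * y ^ (-κ))) ^ 2 := by
      refine (sq_sum_le_card_mul_sum_sq).trans ?_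
      simp only [sq_abs, Nat.card_Icc, Nat.add_sub_cancel]
      have h3 : (⌊X⌋₊:ℝ) ≤ X := Nat.floor_le hX0.le
      refine (mul_le_mul h3 h1 (Finset.sum_nonneg fun _ _ => sq_nonneg _) hX0.le).trans (le_of_eq ?_)
      rw [mul_pow, Real.sq_sqrt hC.le, show y ^ (-(2*κ)) = y^(-κ) * y^(-κ) by rw [← Real.rpow_add hy0]; congr 1; ring]
      ring
    refine le_trans ?_ (abs_le_of_sq_le_sq' h2 (by positivity)).2
    exact Finset.sum_le_sum_of_subset_of_nonneg (Finset.Icc_subset_Icc_left (by norm_num)) fun _ _ _ => abs_nonneg _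
  have hlim : ∀ m ∈ Finset.Icc 2 ⌊X⌋₊, Tendsto (fun M => |S M m|) atTop (𝓝 ‖th a (fun n => (jd n m : ℂ)) y‖) := by
    intro m hm
    have hm2 : 1 < m := by have := (Finset.mem_Icc.mp hm).1; omega
    have h0 : jd 0 m = 0 := by
      unfold jd; split_ifs
      · simpa using jacobiSym.zero_left hm2
      · rfl
    have hs := (summable_th a (fun n => (jd n m : ℂ)) (fun n => norm_jd_le n m) hy0).hasSum.tendsto_sum_nat
    have hs2 := (hs.comp (tendsto_add_atTop_nat 1)).norm
    refine hs2.congr fun M => ?_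
    simp only [Function.comp]
    rw [← Real.norm_eq_abs, ← Complex.norm_real]
    congr 1
    rw [Finset.sum_range_succ', h0]
    simp only [hS, Int.cast_zero, mul_zero, zero_mul, add_zero]
    rw [sum_Icc_range]
    push_cast
    refine Finset.sum_congr rfl fun i _ => ?_
    ring
  exact le_of_tendsto' (tendsto_finsetSum _ hlim) hfin

end QM
open Complex

namespace QM
open MeasureTheory Set Filter Topology Asymptotics

section fin
variable {χ : (n : ℕ) → DirichletCharacter ℂ n}
    (hχ : ∀ n : ℕ, Odd n → ∀ m : ℕ, χ n (m : ZMod n) = ((jacobiSym (m : ℤ) n : ℤ) : ℂ))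

include hχ in
lemma chi_prim {r : ℕ} (ho : Odd r) (hsf : Squarefree r) : (χ r).IsPrimitive := by
  have hr0 : r ≠ 0 := ho.pos.ne'
  have : NeZero r := ⟨hr0⟩
  rw [DirichletCharacter.isPrimitive_def]
  by_contra hne
  obtain ⟨e, he⟩ := (χ r).conductor_dvd_level
  set d := (χ r).conductor with hd
  have he1 : e ≠ 1 := by rintro rfl; rw [mul_one] at he; exact hne he.symm
  obtain ⟨p, hp, f, hf⟩ := Nat.exists_prime_and_dvd he1
  have hr : r = p * (d * f) := by rw [he, hf]; ring
  have hco : Nat.Coprime p (d * f) := by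
    rw [hp.coprime_iff_not_dvd]
    rintro ⟨c, hc⟩
    have := hsf p ⟨c, by rw [hr, hc]; ring⟩
    exact hp.one_lt.ne' (Nat.isUnit_iff.mp this)
  have hp2 : p ≠ 2 := by
    rintro rfl
    rw [hr] at ho
    exact absurd (Nat.odd_mul.mp ho).1 (by decide)
  have hdf : d * f ≠ 0 := by intro h; rw [h] at hr; simp at hr; exact hr0 hr
  obtain ⟨u, hu⟩ := exists_nonres p hp hp2
  obtain ⟨m, hm1, hm2⟩ := Nat.chineseRemainder hco u 1
  have hJ : χ r (m : ZMod r) = -1 := by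
    rw [hχ r ho m]
    have : jacobiSym (m:ℤ) r = -1 := by
      rw [hr, jacobiSym.mul_right' _ hp.ne_zero hdf, jacobiSym.mod_left' (a₁ := m) (a₂ := u) (b := p) (by exact_mod_cast hm1), hu,
        jacobiSym.mod_left' (a₁ := m) (a₂ := 1) (b := d * f) (by exact_mod_cast hm2), jacobiSym.one_left]
      norm_num
    rw [this]; norm_num
  have hcop : Nat.Coprime m r := by
    by_contra h
    rw [← ZMod.isUnit_iff_coprime] at h
    rw [MulChar.map_nonunit _ h] at hJ
    norm_num at hJ
  have h1 := DirichletCharacter.primitiveCharacter_apply_of_isCoprime (χ r) (a := m) (Nat.isCoprime_iff_coprime.mpr hcop)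
  have h2 : ((m:ℕ) : ZMod d) = 1 := by
    have := (ZMod.natCast_eq_natCast_iff m 1 d).mpr (hm2.of_dvd ⟨f, rfl⟩)
    simpa using this
  rw [Int.cast_natCast, Int.cast_natCast, h2, map_one, hJ] at h1
  norm_num at h1

include hχ in
lemma chi_inv {r : ℕ} (ho : Odd r) : (χ r)⁻¹ = χ r := by
  have : NeZero r := ⟨ho.pos.ne'⟩
  ext u
  rw [MulChar.inv_apply_eq_inv']
  have h := hχ r ho (u : ZMod r).val
  rw [ZMod.natCast_zmod_val] at h
  rw [h]
  rcases jacobiSym.trichotomy ((u : ZMod r).val : ℤ) r with h | h | h <;> rw [h] <;> norm_num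

lemma nz {n : ℕ} (h : Odd n) : NeZero n := ⟨h.pos.ne'⟩

/-- norm of the `L`-value -/
noncomputable def Ln (χ : (n : ℕ) → DirichletCharacter ℂ n) (s : ℂ) (n : ℕ) : ℝ :=
  if h : Odd n then
    haveI : NeZero n := nz h
    ‖(χ n).LFunction s‖ else 0

lemma Ln_nonneg (s : ℂ) (n : ℕ) : 0 ≤ Ln χ s n := by
  unfold Ln; split_ifs <;> positivity

lemma Ln_eq (s : ℂ) (n : ℕ) [NeZero n] (h : Odd n) : Ln χ s n = ‖(χ n).LFunction s‖ := by
  unfold Ln; rw [dif_pos h]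

include hχ in
lemma th_chi {r : ℕ} (ho : Odd r) (a : ℕ) : th a (fun n => χ r n) = th a (fun n => (jd n r : ℂ)) := by
  congr 1
  ext n
  rw [hχ r ho n, jd, if_pos ho]

include hχ in
lemma parity_sum (s : ℂ) (a : ℕ) (ha : a = 0 ∨ a = 1) {η : ℝ} (hη : 0 < η) : ∃ C : ℝ, 0 < C ∧ ∀ X : ℝ, 1 ≤ X →
    ∀ R : Finset ℕ, R ⊆ Finset.Icc 2 ⌊X⌋₊ → (∀ r ∈ R, Odd r ∧ Squarefree r ∧ χ r (-1) = (-1)^a) →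
    ∑ r ∈ R, Ln χ s r ≤ C * X ^ (max 0 (1/2 - s.re) + 1 + η) := by
  set σ' := max s.re (1 - s.re) with hσ'
  have hσ2 : 1/2 ≤ σ' := by
    rcases le_total s.re (1/2) with h | h
    · exact le_max_of_le_right (by linarith)
    · exact le_max_of_le_left h
  obtain ⟨C, hC, hfm⟩ := first_moment a (show 1/4 < σ'/2 + η by linarith)
  set G : ℝ := ‖Gammaℝ (s + a)‖⁻¹ with hG
  have hG0 : 0 ≤ G := by positivity
  refine ⟨(G + 1) * 2 * C / η, by positivity, fun X hX R hR hR2 => ?_⟩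
  have hX0 : 0 < X := by linarith
  have hXi : 0 < X⁻¹ := by positivity
  set g : ℕ → ℝ → ℝ := fun r y => y ^ ((σ' + a)/2 - 1) * ‖th a (fun n => (jd n r : ℂ)) y‖ with hg
  have hint : ∀ r ∈ R, IntegrableOn (g r) (Ioi X⁻¹) := by
    intro r hr
    obtain ⟨ho, hsf, hpar⟩ := hR2 r hr
    have hr2 := (Finset.mem_Icc.mp (hR hr)).1
    have : NeZero r := ⟨by omega⟩
    have := th_int (by omega) ha (chi_prim hχ ho hsf) hpar ((σ' + a)/2 - 1)
    rw [th_chi hχ ho] at this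
    exact this.mono_set (Ioi_subset_Ioi hXi.le)
  have hone : ∀ r ∈ R, Ln χ s r ≤ G * (2 * X ^ (max 0 (1/2 - s.re))) * ∫ y in Ioi X⁻¹, g r y := by
    intro r hr
    obtain ⟨ho, hsf, hpar⟩ := hR2 r hr
    obtain ⟨hr2, hrX⟩ := Finset.mem_Icc.mp (hR hr)
    have : NeZero r := ⟨by omega⟩
    rw [Ln_eq s r ho]
    have := norm_LFunction_le (by omega) ha (chi_prim hχ ho hsf) hpar (chi_inv hχ ho) s X ((Nat.le_floor_iff hX0.le).mp hrX)
    rwa [th_chi hχ ho] at this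
  have hI : ∑ r ∈ R, ∫ y in Ioi X⁻¹, g r y ≤ C * X * (X ^ η / η) := by
    rw [← integral_finsetSum R hint]
    have e1 : ∫ y in Ioi X⁻¹, C * X * y ^ (-1 - η) = C * X * (X ^ η / η) := by
      rw [integral_const_mul, integral_Ioi_rpow_of_lt (by linarith) hXi]
      rw [show -1 - η + 1 = -η by ring, Real.inv_rpow hX0.le, ← Real.rpow_neg hX0.le, neg_neg]
      field_simp
    rw [← e1]
    refine setIntegral_mono_on (integrable_finsetSum _ hint) ((integrableOn_Ioi_rpow_of_lt (by linarith) hXi).const_mul _)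
      measurableSet_Ioi fun y hy => ?_
    have hy1 : X⁻¹ < y := hy
    have hy0 : 0 < y := hXi.trans hy1
    simp only [hg]
    rw [← Finset.mul_sum]
    have h1 : ∑ r ∈ R, ‖th a (fun n => (jd n r : ℂ)) y‖ ≤ C * (X * y ^ (-((a:ℝ)/2 + (σ'/2 + η)))) :=
      (Finset.sum_le_sum_of_subset_of_nonneg hR fun _ _ _ => norm_nonneg _).trans (hfm X hX y hy1.le)
    refine (mul_le_mul_of_nonneg_left h1 (by positivity)).trans (le_of_eq ?_)
    rw [show y ^ (-1 - η) = y ^ ((σ' + a)/2 - 1) * y ^ (-((a:ℝ)/2 + (σ'/2 + η))) by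
      rw [← Real.rpow_add hy0]; congr 1; ring]
    ring
  refine (Finset.sum_le_sum hone).trans ?_
  rw [← Finset.mul_sum]
  refine (mul_le_mul_of_nonneg_left hI (by positivity)).trans ?_
  rw [Real.rpow_add hX0, Real.rpow_add hX0, Real.rpow_one]
  have : G * (2 * X ^ max 0 (1 / 2 - s.re)) * (C * X * (X ^ η / η)) = G * (2 * C / η * (X ^ max 0 (1 / 2 - s.re) * X * X ^ η)) := by ring
  rw [this, show (G + 1) * 2 * C / η * (X ^ max 0 (1 / 2 - s.re) * X * X ^ η) = (G+1) * (2 * C / η * (X ^ max 0 (1 / 2 - s.re) * X * X ^ η)) by ring]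
  refine mul_le_mul_of_nonneg_right (by linarith) (by positivity)

include hχ in
lemma sf_sum (s : ℂ) {η : ℝ} (hη : 0 < η) : ∃ C : ℝ, 0 < C ∧ ∀ X : ℝ, 1 ≤ X →
    ∑ r ∈ (Finset.Icc 1 ⌊X⌋₊).filter Squarefree, Ln χ s r ≤ C * X ^ (max 0 (1/2 - s.re) + 1 + η) := by
  classical
  obtain ⟨C0, hC0, h0⟩ := parity_sum hχ s 0 (Or.inl rfl) hη
  obtain ⟨C1, hC1, h1⟩ := parity_sum hχ s 1 (Or.inr rfl) hη
  refine ⟨C0 + C1 + (Ln χ s 1 + 1), by have := Ln_nonneg (χ := χ) s 1; positivity, fun X hX => ?_⟩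
  set E := max 0 (1/2 - s.re) + 1 + η with hE
  have hE0 : 0 ≤ E := by positivity
  set R : ℕ → Finset ℕ := fun a => (Finset.Icc 2 ⌊X⌋₊).filter (fun r => Odd r ∧ Squarefree r ∧ χ r (-1) = (-1)^a) with hRdef
  have b0 := h0 X hX (R 0) (Finset.filter_subset _ _) (fun r hr => (Finset.mem_filter.mp hr).2)
  have b1 := h1 X hX (R 1) (Finset.filter_subset _ _) (fun r hr => (Finset.mem_filter.mp hr).2)
  have b2 : Ln χ s 1 ≤ (Ln χ s 1 + 1) * X ^ E := by
    have := Real.one_le_rpow hX hE0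
    have := Ln_nonneg (χ := χ) s 1
    nlinarith
  have hle : ∑ r ∈ (Finset.Icc 1 ⌊X⌋₊).filter Squarefree, Ln χ s r ≤ ∑ r ∈ R 0, Ln χ s r + ∑ r ∈ R 1, Ln χ s r + Ln χ s 1 := by
    have hz : ∑ r ∈ (Finset.Icc 1 ⌊X⌋₊).filter Squarefree, Ln χ s r = ∑ r ∈ ((Finset.Icc 1 ⌊X⌋₊).filter Squarefree).filter Odd, Ln χ s r := by
      symm
      refine Finset.sum_filter_of_ne ?_
      intro r _ hne
      by_contra h
      exact hne (by rw [Ln, dif_neg h])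
    have hsub : ((Finset.Icc 1 ⌊X⌋₊).filter Squarefree).filter Odd ⊆ (R 0 ∪ R 1) ∪ {1} := by
      intro r hr
      simp only [Finset.mem_filter, Finset.mem_Icc] at hr
      simp only [hRdef, Finset.mem_union, Finset.mem_filter, Finset.mem_Icc, Finset.mem_singleton]
      by_cases hr1 : r = 1
      · exact Or.inr hr1
      · left
        rcases (χ r).even_or_odd with h | h
        · left; exact ⟨⟨by omega, hr.1.1.2⟩, hr.2, hr.1.2, by simpa using (show _ = _ from h)⟩
        · right; exact ⟨⟨by omega, hr.1.1.2⟩, hr.2, hr.1.2, by simpa using (show _ = _ from h)⟩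
    rw [hz]
    refine (Finset.sum_le_sum_of_subset_of_nonneg hsub fun _ _ _ => Ln_nonneg _ _).trans ?_
    have hU : ∀ A B : Finset ℕ, ∑ r ∈ A ∪ B, Ln χ s r ≤ ∑ r ∈ A, Ln χ s r + ∑ r ∈ B, Ln χ s r := fun A B => by
      rw [← Finset.sum_union_inter]
      exact le_add_of_nonneg_right (Finset.sum_nonneg fun _ _ => Ln_nonneg _ _)
    refine (hU _ _).trans ?_
    rw [Finset.sum_singleton]
    gcongr
    exact hU _ _
  rw [add_mul, add_mul]
  linarith

end fin
end QM
open Complex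

namespace QM
open MeasureTheory Set Filter Topology Asymptotics

section fin2
variable {χ : (n : ℕ) → DirichletCharacter ℂ n}
    (hχ : ∀ n : ℕ, Odd n → ∀ m : ℕ, χ n (m : ZMod n) = ((jacobiSym (m : ℤ) n : ℤ) : ℂ))

include hχ in
lemma chi_level {a b n : ℕ} (hn : Odd n) (ha : Odd a) (hab : b ^ 2 * a = n) :
    χ n = DirichletCharacter.changeLevel (Dvd.intro_left _ hab) (χ a) := by
  have : NeZero n := ⟨hn.pos.ne'⟩
  have hb : b ≠ 0 := by rintro rfl; simp at hab; exact hn.pos.ne hab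
  ext u
  have hm : ((u : ZMod n).val : ZMod n) = u := ZMod.natCast_zmod_val _
  set m := (u : ZMod n).val with hmdef
  have hco : Nat.Coprime m n := by
    rw [← ZMod.isUnit_iff_coprime, hm]; exact u.isUnit
  have h2 := DirichletCharacter.changeLevel_eq_cast_of_dvd' (χ a) (Dvd.intro_left _ hab) (a := m) (Nat.isCoprime_iff_coprime.mpr hco)
  rw [Int.cast_natCast, Int.cast_natCast] at h2
  rw [← hm, h2, hχ n hn, hχ a ha, ← hab, jacobiSym.mul_right' _ (pow_ne_zero 2 hb) ha.pos.ne', jacobiSym.pow_right,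
    jacobiSym.sq_one, one_mul]
  rw [Int.gcd_natCast_natCast]
  exact hco.coprime_dvd_right (by rw [← hab]; exact Dvd.intro _ (by ring : b * (b * a) = _))

include hχ in
lemma Ln_le (s : ℂ) (hs : 0 ≤ s.re) (hs1 : s ≠ 1) {a b n : ℕ} (hn : Odd n) (hab : b ^ 2 * a = n) :
    Ln χ s n ≤ b * Ln χ s a := by
  have hn0 : NeZero n := ⟨hn.pos.ne'⟩
  have ha : Odd a := by rw [← hab] at hn; exact (Nat.odd_mul.mp hn).2
  have ha0 : NeZero a := ⟨ha.pos.ne'⟩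
  have hb : b ≠ 0 := by rintro rfl; simp at hab; exact hn.pos.ne hab
  rw [Ln_eq s n hn, Ln_eq s a ha, chi_level hχ hn ha hab,
    DirichletCharacter.LFunction_changeLevel _ _ (Or.inr hs1), norm_mul, mul_comm, norm_prod]
  refine mul_le_mul_of_nonneg_right ?_ (norm_nonneg _)
  have hsub : b.primeFactors ⊆ n.primeFactors :=
    Nat.primeFactors_mono (by rw [← hab]; exact Dvd.intro _ (by ring : b * (b * a) = _)) hn.pos.ne'
  rw [← Finset.prod_subset hsub]
  · calc _ ≤ ∏ p ∈ b.primeFactors, (p:ℝ) := by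
          refine Finset.prod_le_prod (fun _ _ => norm_nonneg _) fun p hp => ?_
          have hpp := Nat.prime_of_mem_primeFactors hp
          have hp2 : (2:ℝ) ≤ p := by exact_mod_cast hpp.two_le
          refine (norm_sub_le _ _).trans ?_
          rw [norm_one, norm_mul, Complex.norm_natCast_cpow_of_pos hpp.pos]
          have h1 : ‖χ a (p : ZMod a)‖ ≤ 1 := norm_char_le _ _
          have h2 : (p:ℝ) ^ (-s).re ≤ 1 := Real.rpow_le_one_of_one_le_of_nonpos (by linarith) (by simpa using hs)
          have := mul_le_one₀ h1 (by positivity) h2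
          linarith
      _ ≤ b := by
          rw [← Nat.cast_prod]
          exact_mod_cast Nat.le_of_dvd (Nat.pos_of_ne_zero hb) (Nat.prod_primeFactors_dvd b)
  · intro p hp hpb
    have hpp := Nat.prime_of_mem_primeFactors hp
    have hpa : p ∣ a := by
      have := Nat.dvd_of_mem_primeFactors hp
      rw [← hab, hpp.dvd_mul] at this
      rcases this with h | h
      · exact absurd (Nat.mem_primeFactors.mpr ⟨hpp, hpp.dvd_of_dvd_pow h, hb⟩) hpb
      · exact h
    have : χ a (p : ZMod a) = 0 := by
      apply MulChar.map_nonunit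
      rw [ZMod.isUnit_iff_coprime, hpp.coprime_iff_not_dvd]
      exact fun h => h hpa
    simp [this]

include hχ in
lemma total (s : ℂ) (hs : 0 ≤ s.re) (hs1 : s ≠ 1) {η : ℝ} (hη : 0 < η) : ∃ C : ℝ, 0 < C ∧ ∀ X : ℝ, 1 ≤ X →
    ∑ n ∈ Finset.Icc 1 ⌊X⌋₊, Ln χ s n ≤ C * X ^ (max 0 (1/2 - s.re) + 1 + η) := by
  classical
  obtain ⟨C, hC, hsf⟩ := sf_sum hχ s hη
  set E := max 0 (1/2 - s.re) + 1 + η with hE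
  have hE1 : 1 < E := by
    have : 0 ≤ max 0 (1/2 - s.re) := le_max_left _ _
    linarith
  obtain ⟨K, hK, hz⟩ := zsum_le (show 1 < 2 * E - 1 by linarith)
  refine ⟨C * K, by positivity, fun X hX => ?_⟩
  have hX0 : 0 < X := by linarith
  choose A B hAB hA using Nat.sq_mul_squarefree
  set T : Finset (Σ _ : ℕ, ℕ) := (Finset.Icc 1 ⌊X⌋₊).sigma (fun b => (Finset.Icc 1 ⌊X / (b:ℝ)^2⌋₊).filter Squarefree) with hT
  have step1 : ∑ n ∈ Finset.Icc 1 ⌊X⌋₊, Ln χ s n ≤ ∑ p ∈ T, (p.1:ℝ) * Ln χ s p.2 := by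
    set i : ℕ → (Σ _ : ℕ, ℕ) := fun n => ⟨B n, A n⟩ with hi
    have h1 : ∑ n ∈ Finset.Icc 1 ⌊X⌋₊, Ln χ s n ≤ ∑ n ∈ Finset.Icc 1 ⌊X⌋₊, ((i n).1:ℝ) * Ln χ s (i n).2 := by
      refine Finset.sum_le_sum fun n _ => ?_
      by_cases ho : Odd n
      · exact Ln_le hχ s hs hs1 ho (hAB n)
      · rw [Ln, dif_neg ho]
        exact mul_nonneg (Nat.cast_nonneg _) (Ln_nonneg _ _)
    refine h1.trans ?_
    rw [← Finset.sum_image (f := fun p : (Σ _ : ℕ, ℕ) => (p.1:ℝ) * Ln χ s p.2) (g := i)]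
    · refine Finset.sum_le_sum_of_subset_of_nonneg ?_ fun _ _ _ => mul_nonneg (Nat.cast_nonneg _) (Ln_nonneg _ _)
      intro p hp
      obtain ⟨n, hn, rfl⟩ := Finset.mem_image.mp hp
      obtain ⟨hn1, hn2⟩ := Finset.mem_Icc.mp hn
      have hb0 : 0 < B n := Nat.pos_of_ne_zero fun h => by have := hAB n; rw [h] at this; simp at this; omega
      have ha0 : 0 < A n := Nat.pos_of_ne_zero fun h => by have := hAB n; rw [h] at this; simp at this; omega
      simp only [hT, hi, Finset.mem_sigma, Finset.mem_filter, Finset.mem_Icc]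
      refine ⟨⟨hb0, ?_⟩, ⟨ha0, ?_⟩, hA n⟩
      · have := hAB n; nlinarith
      · apply Nat.le_floor
        have hbR : (0:ℝ) < B n := Nat.cast_pos.mpr hb0
        rw [le_div_iff₀ (by positivity)]
        have h3 : (n:ℝ) ≤ X := (Nat.le_floor_iff hX0.le).mp hn2
        have h4 : ((B n:ℝ)^2 * A n) = n := by exact_mod_cast hAB n
        linarith
    · intro m _ n _ hmn
      simp only [hi, Sigma.mk.injEq, heq_eq_eq] at hmn
      rw [← hAB m, ← hAB n, hmn.1, hmn.2]
  refine step1.trans ?_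
  rw [hT, Finset.sum_sigma]
  calc _ ≤ ∑ b ∈ Finset.Icc 1 ⌊X⌋₊, C * X ^ E * (b:ℝ) ^ (-(2*E - 1)) := by
        refine Finset.sum_le_sum fun b hb => ?_
        have hb0 : (0:ℝ) < b := Nat.cast_pos.mpr (Finset.mem_Icc.mp hb).1
        dsimp only
        rw [← Finset.mul_sum]
        have h1 : ∑ r ∈ (Finset.Icc 1 ⌊X / (b:ℝ)^2⌋₊).filter Squarefree, Ln χ s r ≤ C * (X / (b:ℝ)^2) ^ E := by
          by_cases h : 1 ≤ X / (b:ℝ)^2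
          · exact hsf _ h
          · rw [Nat.floor_eq_zero.mpr (not_le.mp h)]
            simp only [Finset.Icc_eq_empty_of_lt Nat.zero_lt_one, Finset.filter_empty, Finset.sum_empty]
            positivity
        refine (mul_le_mul_of_nonneg_left h1 hb0.le).trans (le_of_eq ?_)
        rw [Real.div_rpow hX0.le (by positivity), show -(2*E-1) = 1 - 2 * E by ring, Real.rpow_sub hb0, Real.rpow_one,
          Real.rpow_mul hb0.le, Real.rpow_two]
        ring
    _ ≤ C * K * X ^ E := by
        rw [← Finset.mul_sum, show C * K * X ^ E = C * X ^ E * K by ring]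
        exact mul_le_mul_of_nonneg_left (hz _) (by positivity)

end fin2
end QM

open Complex

/-- average bound for `L(σ+it, (·/n))` over odd `n ≤ X`, where `(·/n)` is the
Jacobi-symbol character modulo `n`. -/
theorem statement5
    (χ : (n : ℕ) → DirichletCharacter ℂ n)
    (hχ : ∀ n : ℕ, Odd n → ∀ m : ℕ, χ n (m : ZMod n) = ((jacobiSym (m : ℤ) n : ℤ) : ℂ))
    (σ t : ℝ) (hσ : 0 ≤ σ) (hst : (σ : ℂ) + (t : ℂ) * Complex.I ≠ 1)
    (ε : ℝ) (hε : 0 < ε) :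
    ∃ C : ℝ, 0 < C ∧ ∀ X : ℝ, 2 ≤ X →
      (∑ n ∈ Finset.Icc 1 ⌊X⌋₊,
        if h : Odd n then
          haveI : NeZero n := ⟨by rcases h with ⟨k, rfl⟩; omega⟩
          ‖(χ n).LFunction ((σ : ℂ) + (t : ℂ) * Complex.I)‖ else 0)
        ≤ C * X ^ (max 1 (3 / 2 - σ) + ε) := by
  have hre : ((σ : ℂ) + (t : ℂ) * Complex.I).re = σ := by simp
  obtain ⟨C, hC, h⟩ := QM.total hχ ((σ : ℂ) + (t : ℂ) * Complex.I) (by rw [hre]; exact hσ) hst hε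
  refine ⟨C, hC, fun X hX => ?_⟩
  have h1 := h X (by linarith)
  rw [hre, ← max_add_add_right, zero_add, show (1/2 - σ + 1 : ℝ) = 3/2 - σ by ring] at h1
  exact h1
end
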